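/- Let F be a field of characteristic 0, let n be a positive integer, and let Γ be a finitely generated infinite subgroup of GL_n(F) which is not virtually solvable. Then there exist a real constant c > 0 and a sequence (Γ_i) of finite-index subgroups of Γ whose indices n_i = [Γ : Γ_i] tend to infinity, such that d(Γ_i) ≥ c · log(n_i) / log(log(n_i)) for every i. -/

import Mathlib

/-!
The group `Γ` acts linearly over an algebraic closure of `F`. Taking minimal stable subspaces for
finite-index subgroups, either some finite-index subgroup has a strongly irreducible representation of
dimension at least `2`, or `Γ` is virtually solvable (`irr_or_solvable`).

In the first case the theorem of Burnside and Schur gives an element with two eigenvalues whose quotient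
is not a root of unity (`burnside_schur`). A semisimple operator read off from these eigenvalues (a
replica) generates, under the adjoint action, a Lie algebra in which a minimal stable subspace `W` carries
a nondegenerate trace form. So `W` is a self-dual, strongly irreducible representation of a finite-index
subgroup (`exists_selfdual_sub`), and it specializes to one over a number field, with irreducibility and
an eigenvalue quotient of infinite order preserved (`exists_datum`).

At a place where two eigenvalues have different absolute values, ping-pong produces a free semigroup on
two generators (`Datum.exists_free`). Comparing heights, the intersection of the kernels of the reductions
modulo a set `S` of primes therefore has index exponential in `|S|` (`Datum.exists_reductions`).

In each reduction the nontrivial image of a normal subgroup contains an involution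
(`Red.exists_involution`). Indeed a normal subgroup of odd order acts, by primitivity, through a single
irreducible modular character (`trivial_of_odd`), which is self-dual; and a group of odd order has no
self-dual irreducible modular character other than the trivial one (`selfdual_unique`). Therefore, after
discarding redundant primes from `S`, each of the `m` remaining factors contains an involution in the
image of the common kernel of the others. The elements whose image in every factor lies in the group of
order two generated by that involution form a subgroup which surjects onto `(ℤ/2) ^ m` and so needs `m`
generators (`exists_box`). For the primes up to `2 ^ r` its index is at most `2 ^ O(r m)`, while the growth
of the index of the common kernel and Chebyshev's lower bound for the number of primes show that `m` is at
least `2 ^ r / O(r ^ 2)` (`Datum.good`). This is the required inequality (`Good.conclusion`).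
-/

/-! ### Strongly irreducible representations and the solvable alternative -/

namespace LinRank

open scoped commutatorElement

universe u v w

/-- `U` is stable under the operators `ρ h`, `h ∈ H`. -/
def Stable {F G V : Type*} [Field F] [Group G] [AddCommGroup V] [Module F V]
    (ρ : Representation F G V) (H : Subgroup G) (U : Submodule F V) : Prop :=
  ∀ h ∈ H, ∀ u ∈ U, ρ h u ∈ U

/-- A representation all of whose restrictions to finite-index subgroups are irreducible
(the zero space is not excluded). -/
def StronglyIrr {F G V : Type*} [Field F] [Group G] [AddCommGroup V] [Module F V]
    (ρ : Representation F G V) : Prop :=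
  ∀ H : Subgroup G, H.FiniteIndex → ∀ U : Submodule F V, Stable ρ H U → U = ⊥ ∨ U = ⊤

section basics

variable {F : Type*} {G : Type*} {V : Type*} [Field F] [Group G] [AddCommGroup V] [Module F V]

/-- Restriction of a representation to a subgroup and a stable subspace. -/
def subRep (ρ : Representation F G V) (H : Subgroup G) (U : Submodule F V)
    (hU : Stable ρ H U) : Representation F H U :=
  Representation.subrepresentation (ρ.comp H.subtype) U (fun g u hu => hU g g.2 u hu)

@[simp] lemma subRep_apply (ρ : Representation F G V) (H : Subgroup G) (U : Submodule F V)
    (hU : Stable ρ H U) (h : H) (u : U) : ((subRep ρ H U hU h u : U) : V) = ρ h u := rfl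

/-- Quotient representation of a subgroup by a stable subspace. -/
def quotRep (ρ : Representation F G V) (H : Subgroup G) (U : Submodule F V)
    (hU : Stable ρ H U) : Representation F H (V ⧸ U) :=
  Representation.quotient (ρ.comp H.subtype) U (fun g u hu => hU g g.2 u hu)

@[simp] lemma quotRep_apply (ρ : Representation F G V) (H : Subgroup G) (U : Submodule F V)
    (hU : Stable ρ H U) (h : H) (v : V) :
    quotRep ρ H U hU h (Submodule.Quotient.mk v) = Submodule.Quotient.mk (ρ h v) := rfl

/-- A pair (finite-index subgroup, nonzero stable subspace) with the subspace of least dimension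
is strongly irreducible. -/
lemma exists_minimal_pair (ρ : Representation F G V) (X : Submodule F V) (hX : X ≠ ⊥)
    [FiniteDimensional F V] (hs : Stable ρ ⊤ X) :
    ∃ H : Subgroup G, H.FiniteIndex ∧ ∃ U : Submodule F V, U ≤ X ∧ U ≠ ⊥ ∧ Stable ρ H U ∧
      ∀ H' : Subgroup G, H'.FiniteIndex → ∀ U' ≤ U, Stable ρ H' U' → U' = ⊥ ∨ U' = U := by
  classical
  let P : ℕ → Prop := fun k => ∃ H : Subgroup G, H.FiniteIndex ∧ ∃ U : Submodule F V,
    U ≤ X ∧ U ≠ ⊥ ∧ Stable ρ H U ∧ Module.finrank F U = k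
  have hP : ∃ k, P k := ⟨_, ⊤, inferInstance, X, le_rfl, hX, hs, rfl⟩
  obtain ⟨H, hH, U, hUX, hU0, hHU, hk⟩ := Nat.find_spec hP
  refine ⟨H, hH, U, hUX, hU0, hHU, fun H' hH' U' hU' hs' => ?_⟩
  by_cases h0 : U' = ⊥
  · exact Or.inl h0
  · right
    apply Submodule.eq_of_le_of_finrank_le hU'
    rw [hk]
    exact Nat.find_min' hP ⟨H', hH', U', hU'.trans hUX, h0, hs', rfl⟩

lemma finiteIndex_map_subtype {H : Subgroup G} (hH : H.FiniteIndex) {K : Subgroup H}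
    (hK : K.FiniteIndex) : (K.map H.subtype).FiniteIndex := by
  refine ⟨?_⟩
  have : (K.map H.subtype).index = K.index * H.index := by
    simp [Subgroup.index_map, Subgroup.ker_subtype]
  rw [this]
  exact mul_ne_zero hK.index_ne_zero hH.index_ne_zero

/-- The subrepresentation carried by a minimal pair (finite-index subgroup, stable subspace) is
strongly irreducible. -/
lemma stronglyIrr_subRep (ρ : Representation F G V) (H : Subgroup G) (hH : H.FiniteIndex)
    (U : Submodule F V) (hU : Stable ρ H U)
    (hmin : ∀ H' : Subgroup G, H'.FiniteIndex → ∀ U' ≤ U, Stable ρ H' U' → U' = ⊥ ∨ U' = U) :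
    StronglyIrr (subRep ρ H U hU) := by
  intro K hK U' hs
  have key : Stable ρ (K.map H.subtype) (U'.map U.subtype) := by
    rintro _ ⟨k, hk, rfl⟩ _ ⟨u, hu, rfl⟩
    exact ⟨_, hs k hk u hu, rfl⟩
  rcases hmin (K.map H.subtype) (finiteIndex_map_subtype hH hK) (U'.map U.subtype)
    (Submodule.map_subtype_le _ _) key with h | h
  · left
    apply Submodule.map_injective_of_injective U.subtype_injective
    rw [h, Submodule.map_bot]
  · right
    apply Submodule.map_injective_of_injective U.subtype_injective
    rw [h, Submodule.map_top, Submodule.range_subtype]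

lemma StronglyIrr.restrict {ρ : Representation F G V} (h : StronglyIrr ρ) {H : Subgroup G}
    (hH : H.FiniteIndex) : StronglyIrr (V := V) (ρ.comp H.subtype) := by
  intro K hK U hs
  refine h (K.map H.subtype) (finiteIndex_map_subtype hH hK) U ?_
  rintro _ ⟨k, hk, rfl⟩ u hu
  exact hs k hk u hu

lemma StronglyIrr.comp_equiv {G' : Type*} [Group G'] {ρ : Representation F G V}
    (h : StronglyIrr ρ) (e : G' ≃* G) : StronglyIrr (V := V) (ρ.comp e.toMonoidHom) := by
  intro K hK U hs
  refine h (K.map e.toMonoidHom) ?_ U ?_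
  · refine ⟨?_⟩
    have := Subgroup.index_map_equiv K e
    change (K.map (e : G' →* G)).index ≠ 0
    rw [this]
    exact hK.index_ne_zero
  · rintro _ ⟨k, hk, rfl⟩ u hu
    exact hs k hk u hu

/-- Transport of a representation along a linear equivalence. -/
def conjRep {V' : Type*} [AddCommGroup V'] [Module F V'] (ρ : Representation F G V)
    (e : V ≃ₗ[F] V') : Representation F G V' :=
  (LinearEquiv.conjRingEquiv e : Module.End F V →* Module.End F V').comp ρ

lemma conjRep_apply {V' : Type*} [AddCommGroup V'] [Module F V'] (ρ : Representation F G V)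
    (e : V ≃ₗ[F] V') (g : G) (v : V') : conjRep ρ e g v = e (ρ g (e.symm v)) := rfl

lemma StronglyIrr.conjRep {V' : Type*} [AddCommGroup V'] [Module F V']
    {ρ : Representation F G V} (h : StronglyIrr ρ) (e : V ≃ₗ[F] V') :
    StronglyIrr (conjRep ρ e) := by
  intro H hH U hs
  have key : Stable ρ H (U.comap (e : V →ₗ[F] V')) := by
    intro g hg u hu
    have := hs g hg (e u) hu
    rw [conjRep_apply] at this
    simpa using this
  rcases h H hH (U.comap (e : V →ₗ[F] V')) key with h1 | h1
  · left
    rw [← Submodule.map_comap_eq_of_surjective e.surjective U]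
    erw [h1]; simp
  · right
    rw [← Submodule.map_comap_eq_of_surjective e.surjective U]
    erw [h1]; simp

end basics

/-- Some finite-index subgroup of `G` has a strongly irreducible representation of dimension at
least two over `F`. -/
def HasIrr (F : Type v) (G : Type u) [Field F] [Group G] : Prop :=
  ∃ H : Subgroup G, H.FiniteIndex ∧ ∃ d : ℕ, 2 ≤ d ∧ ∃ σ : Representation F H (Fin d → F),
    StronglyIrr σ

lemma HasIrr.of_rep {F : Type v} {G : Type u} {V : Type w} [Field F] [Group G] [AddCommGroup V]
    [Module F V] [FiniteDimensional F V] (H : Subgroup G) (hH : H.FiniteIndex)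
    (σ : Representation F H V) (hσ : StronglyIrr σ) (h2 : 2 ≤ Module.finrank F V) : HasIrr F G :=
  ⟨H, hH, Module.finrank F V, h2, conjRep σ (Module.finBasis F V).equivFun, hσ.conjRep _⟩

lemma HasIrr.of_sub {F : Type v} {G : Type u} [Field F] [Group G] {H : Subgroup G}
    (hH : H.FiniteIndex) (h : HasIrr F H) : HasIrr F G := by
  obtain ⟨K, hK, d, hd, σ, hσ⟩ := h
  exact ⟨K.map H.subtype, finiteIndex_map_subtype hH hK, d, hd, _,
    hσ.comp_equiv (K.equivMapOfInjective H.subtype H.subtype_injective).symm⟩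

lemma derivedSeries_map_mem {G G' : Type*} [Group G] [Group G'] (f : G →* G') (k : ℕ) {x : G}
    (hx : x ∈ derivedSeries G k) : f x ∈ derivedSeries G' k :=
  map_derivedSeries_le_derivedSeries f k ⟨x, hx, rfl⟩

/-- Either a finite-index subgroup has a strongly irreducible representation of dimension at
least two, or a finite-index subgroup acts on `V` through a solvable group. -/
theorem irr_or_solvable (F : Type v) [Field F] : ∀ (m : ℕ) (G : Type u) [Group G] (V : Type w)
    [AddCommGroup V] [Module F V] [FiniteDimensional F V] (ρ : Representation F G V),
    Module.finrank F V = m → HasIrr F G ∨ ∃ H : Subgroup G, H.FiniteIndex ∧ ∃ k : ℕ,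
      ∀ x ∈ derivedSeries H k, ρ x = 1 := by
  intro m
  induction m with
  | zero =>
    intro G _ V _ _ _ ρ hm
    right
    have := Module.finrank_zero_iff.1 hm
    exact ⟨⊤, inferInstance, 0, fun x _ => Subsingleton.elim _ _⟩
  | succ m ih =>
    intro G _ V _ _ _ ρ hm
    have hnt : (⊤ : Submodule F V) ≠ ⊥ := by
      intro h
      have := finrank_top F V
      rw [h, finrank_bot] at this
      omega
    obtain ⟨H, hH, U, -, hU0, hHU, hmin⟩ := exists_minimal_pair ρ ⊤ hnt (fun _ _ _ _ => trivial)
    by_cases h2 : 2 ≤ Module.finrank F U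
    · exact Or.inl (HasIrr.of_rep H hH _ (stronglyIrr_subRep ρ H hH U hHU hmin) h2)
    have h1 : Module.finrank F U = 1 := by
      have : Module.finrank F U ≠ 0 := by
        rw [Ne, Submodule.finrank_eq_zero]; exact hU0
      omega
    have hq : Module.finrank F (V ⧸ U) = m := by
      have := U.finrank_quotient_add_finrank
      omega
    rcases ih H (V ⧸ U) (quotRep ρ H U hHU) hq with h | ⟨K, hK, k, hk⟩
    · exact Or.inl (h.of_sub hH)
    right
    refine ⟨K.map H.subtype, finiteIndex_map_subtype hH hK, k + 1 + 1, ?_⟩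
    let e := (K.equivMapOfInjective H.subtype H.subtype_injective)
    have he : ∀ x : K.map H.subtype, ((e.symm x : H) : G) = x := by
      intro x
      have := Subgroup.coe_equivMapOfInjective_apply K H.subtype H.subtype_injective (e.symm x)
      exact this.symm.trans (congrArg Subtype.val (e.apply_symm_apply x))
    suffices hmain : ∀ y ∈ derivedSeries K (k + 1 + 1), ρ (y : H) = 1 by
      intro x hx
      have := hmain (e.symm x) (derivedSeries_map_mem e.symm.toMonoidHom _ hx)
      rwa [he] at this
    have hUline : ∀ y : K, ∃ c : F, ∀ u ∈ U, ρ (y : H) u = c • u := by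
      intro y
      obtain ⟨u0, hu0, hspan⟩ := finrank_eq_one_iff'.1 h1
      obtain ⟨c, hc⟩ := hspan (subRep ρ H U hHU y u0)
      refine ⟨c, fun u hu => ?_⟩
      obtain ⟨d, hd⟩ := hspan ⟨u, hu⟩
      have hd' : u = d • (u0 : V) := by rw [← Submodule.coe_smul, hd]
      have hc' : ρ (y : H) u0 = c • (u0 : V) := by
        rw [← Submodule.coe_smul, hc]; rfl
      rw [hd', map_smul, hc', smul_comm]
    have htriv : ∀ y ∈ derivedSeries K (k + 1), ∀ u ∈ U, ρ (y : H) u = u := by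
      intro y hy
      have : derivedSeries K (k + 1) ≤
          { carrier := {y : K | ∀ u ∈ U, ρ (y : H) u = u}
            mul_mem' := by
              intro a b ha hb u hu
              simp only [Subgroup.coe_mul, map_mul, Module.End.mul_apply]
              rw [hb u hu, ha u hu]
            one_mem' := by intro u _; simp
            inv_mem' := by
              intro a ha u hu
              have h := ha u hu
              conv_lhs => rw [← h]
              simp [← Module.End.mul_apply, ← map_mul] } := by
        rw [derivedSeries_succ, Subgroup.commutator_le]
        intro a _ b _ u hu
        obtain ⟨c, hc⟩ := hUline a
        obtain ⟨d, hd⟩ := hUline b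
        have hab : ρ ((a * b : K) : H) u = ρ ((b * a : K) : H) u := by
          simp only [Subgroup.coe_mul, map_mul, Module.End.mul_apply]
          rw [hc u hu, hd u hu, map_smul, map_smul, hc u hu, hd u hu, smul_comm]
        obtain ⟨r, hr⟩ := hUline (a⁻¹ * b⁻¹)
        have : ⁅a, b⁆ = (a * b) * (a⁻¹ * b⁻¹) := by rw [commutatorElement_def]; group
        rw [this]
        have h3 : ρ (((a * b) * (a⁻¹ * b⁻¹) : K) : H) u
            = ρ (((b * a) * (a⁻¹ * b⁻¹) : K) : H) u := by
          rw [Subgroup.coe_mul, Subgroup.coe_mul (H := K) (b * a)]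
          rw [Subgroup.coe_mul, Subgroup.coe_mul (H := H) ((b * a : K) : H)]
          rw [map_mul, map_mul, Module.End.mul_apply, Module.End.mul_apply, hr u hu, map_smul,
            map_smul, hab]
        rw [h3]
        have : (b * a) * (a⁻¹ * b⁻¹) = 1 := by group
        rw [this]; simp
      exact this hy
    have hdiff : ∀ y ∈ derivedSeries K (k + 1), ∀ v, ρ (y : H) v - v ∈ U := by
      intro y hy v
      have hy' : y ∈ derivedSeries K k := derivedSeries_antitone _ (k.le_succ) hy
      have := congrArg (fun f => f (Submodule.Quotient.mk v)) (hk y hy')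
      simp only [quotRep_apply, Module.End.one_apply] at this
      exact (Submodule.Quotient.eq U).1 this
    intro y hy
    have : derivedSeries K (k + 1 + 1) ≤ (ρ.comp (H.subtype.comp K.subtype)).ker := by
      rw [derivedSeries_succ, Subgroup.commutator_le]
      intro a ha b hb
      have hab : (ρ.comp (H.subtype.comp K.subtype)) (a * b)
          = (ρ.comp (H.subtype.comp K.subtype)) (b * a) := by
        simp only [map_mul]
        refine LinearMap.ext fun v => ?_
        simp only [Module.End.mul_apply, MonoidHom.comp_apply, Subgroup.coe_subtype]
        have h1 := hdiff a ha v
        have h2 := hdiff b hb v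
        have h3 := htriv a ha _ h2
        have h4 := htriv b hb _ h1
        rw [map_sub] at h3 h4
        have h5 : ρ (a : H) (ρ (b : H) v) = ρ (b : H) v - v + ρ (a : H) v := by
          rw [← h3]; abel
        have h6 : ρ (b : H) (ρ (a : H) v) = ρ (a : H) v - v + ρ (b : H) v := by
          rw [← h4]; abel
        rw [h5, h6]; abel
      rw [MonoidHom.mem_ker]
      have : ⁅a, b⁆ = (a * b) * (a⁻¹ * b⁻¹) := by rw [commutatorElement_def]; group
      rw [this, map_mul, hab, ← map_mul]
      have : (b * a) * (a⁻¹ * b⁻¹) = 1 := by group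
      rw [this, map_one]
    exact this hy

end LinRank

/-! ### Burnside's theorem on matrix algebras -/

namespace LinRank
open Module
open scoped TensorProduct

section burnside
variable {F : Type*} {V : Type*} [Field F] [AddCommGroup V] [Module F V]

/-- Burnside's theorem on matrix algebras. -/
theorem burnside_algebra [IsAlgClosed F] [FiniteDimensional F V] [Nontrivial V]
    (A : Subalgebra F (End F V))
    (hA : ∀ U : Submodule F V, (∀ a ∈ A, ∀ u ∈ U, a u ∈ U) → U = ⊥ ∨ U = ⊤) : A = ⊤ := by
  classical
  have hsimple : IsSimpleModule A V := by
    refine { eq_bot_or_eq_top := fun U => ?_ }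
    rcases hA (U.restrictScalars F) (fun a ha u hu => U.smul_mem ⟨a, ha⟩ hu) with h | h
    · left
      exact (Submodule.restrictScalars_eq_bot_iff _ _ _).1 h
    · right
      exact (Submodule.restrictScalars_eq_top_iff _ _ _).1 h
  have hb := IsSimpleModule.algebraMap_end_bijective_of_isAlgClosed (A := A) (V := V) F
  rw [eq_top_iff]
  intro f _
  let f' : End (End A V) V :=
    { toFun := f
      map_add' := f.map_add
      map_smul' := by
        intro e v
        obtain ⟨c, rfl⟩ := hb.2 e
        simp }
  obtain ⟨a, ha⟩ := jacobson_density f' (Finset.univ.image (finBasis F V))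
  have : f = (a : End F V) := by
    refine (finBasis F V).ext fun i => ?_
    exact ha _ (Finset.mem_image_of_mem _ (Finset.mem_univ i))
  rw [this]
  exact a.2

variable {G : Type*} [Group G]

lemma span_subgroup_image_mul (ρ : Representation F G V) (H : Subgroup G) {a b : End F V}
    (ha : a ∈ Submodule.span F (ρ '' (H : Set G))) (hb : b ∈ Submodule.span F (ρ '' (H : Set G))) :
    a * b ∈ Submodule.span F (ρ '' (H : Set G)) := by
  have h := Submodule.mul_mem_mul ha hb
  rw [Submodule.span_mul_span] at h
  refine Submodule.span_mono ?_ h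
  rintro _ ⟨_, ⟨x, hx, rfl⟩, _, ⟨y, hy, rfl⟩, rfl⟩
  exact ⟨x * y, H.mul_mem hx hy, map_mul _ _ _⟩

/-- The operators of a group acting irreducibly over an algebraically closed field span all
endomorphisms. -/
theorem burnside_rep [IsAlgClosed F] [FiniteDimensional F V] [Nontrivial V]
    (ρ : Representation F G V) (H : Subgroup G)
    (hρ : ∀ U : Submodule F V, Stable ρ H U → U = ⊥ ∨ U = ⊤) :
    Submodule.span F (ρ '' (H : Set G)) = ⊤ := by
  let A : Subalgebra F (End F V) :=
    (Submodule.span F (ρ '' (H : Set G))).toSubalgebra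
      (Submodule.subset_span ⟨1, H.one_mem, map_one _⟩)
      (fun a b ha hb => span_subgroup_image_mul ρ H ha hb)
  have hA : A = ⊤ := by
    apply burnside_algebra
    intro U hU
    exact hρ U fun h hh u hu => hU (ρ h) (Submodule.subset_span ⟨h, hh, rfl⟩) u hu
  rw [eq_top_iff]
  intro x _
  have : x ∈ A := hA ▸ Algebra.mem_top
  exact this

/-- The trace form on `End V` is nondegenerate; testing against a spanning set suffices. -/
lemma eq_zero_of_trace_mul [FiniteDimensional F V] (s : Set (End F V))
    (hs : Submodule.span F s = ⊤) (X : End F V)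
    (hX : ∀ y ∈ s, LinearMap.trace F V (X * y) = 0) : X = 0 := by
  have hall : ∀ y : End F V, LinearMap.trace F V (X * y) = 0 := by
    intro y
    have hy : y ∈ Submodule.span F s := hs ▸ Submodule.mem_top
    have hle : Submodule.span F s ≤
        LinearMap.ker ((LinearMap.trace F V).comp (LinearMap.mulLeft F X)) :=
      Submodule.span_le.2 fun z hz => hX z hz
    exact hle hy
  by_contra hne
  obtain ⟨v, hv⟩ : ∃ v, X v ≠ 0 := by
    by_contra h
    push Not at h
    exact hne (LinearMap.ext h)
  have hφ : ∃ φ : Dual F V, φ (X v) ≠ 0 := by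
    by_contra h
    push Not at h
    exact hv ((forall_dual_apply_eq_zero_iff F _).1 h)
  obtain ⟨φ, hφ⟩ := hφ
  apply hφ
  have h1 := hall (φ.smulRight v)
  have h2 : X * φ.smulRight v = dualTensorHom F V V (φ ⊗ₜ X v) := by
    ext w; simp
  rwa [h2, LinearMap.trace_eq_contract_apply, contractLeft_apply] at h1
end burnside
end LinRank

/-! ### Primitive representations -/

namespace LinRank
open Module

section prim
variable {F : Type*} {V : Type*} [Field F] [AddCommGroup V] [Module F V]
  {G : Type*} [Group G]

/-- A representation irreducible on all subgroups of index at most its dimension. -/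
def Prim (ρ : Representation F G V) : Prop :=
  ∀ T : Subgroup G, T.index ≠ 0 → T.index ≤ finrank F V → ∀ U : Submodule F V,
    Stable ρ T U → U = ⊥ ∨ U = ⊤

lemma StronglyIrr.prim {ρ : Representation F G V} (h : StronglyIrr ρ) : Prim ρ :=
  fun T hT _ U hU => h T ⟨hT⟩ U hU

/-- The action of `G` on subspaces. -/
@[reducible] def mapAction (ρ : Representation F G V) : MulAction G (Submodule F V) where
  smul g U := U.map (ρ g)
  one_smul U := by
    change U.map (ρ 1) = U
    rw [map_one]; exact Submodule.map_id U
  mul_smul g h U := by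
    change U.map (ρ (g * h)) = (U.map (ρ h)).map (ρ g)
    rw [map_mul]; exact Submodule.map_comp (ρ h) (ρ g) U

/-- A primitive representation has no nontrivial system of imprimitivity: an independent family
permuted by the group has the whole space as its only nonzero member. -/
lemma Prim.eq_top_of_permuted [FiniteDimensional F V] {ρ : Representation F G V} (hρ : Prim ρ)
    {ι : Type*} (p : ι → Submodule F V) (hp : iSupIndep p)
    (hperm : ∀ g i, ∃ j, (p i).map (ρ g) = p j) (i : ι) (hi : p i ≠ ⊥) : p i = ⊤ := by
  classical
  let _ := mapAction ρ
  have : Fintype {j // p j ≠ ⊥} := hp.fintypeNeBotOfFiniteDimensional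
  have hsub : MulAction.orbit G (p i) ⊆ Set.range (fun j : {j // p j ≠ ⊥} => p j) := by
    rintro _ ⟨g, rfl⟩
    obtain ⟨j, hj⟩ := hperm g i
    have hj' : g • p i = p j := hj
    refine ⟨⟨j, fun h0 => hi ?_⟩, hj'.symm⟩
    rw [h0] at hj'
    have : g⁻¹ • (g • p i) = g⁻¹ • (⊥ : Submodule F V) := by rw [hj']
    rw [inv_smul_smul] at this
    rw [this]
    exact Submodule.map_bot _
  have hfin : (Set.range (fun j : {j // p j ≠ ⊥} => p j)).Finite := Set.finite_range _
  have hcard : (MulAction.orbit G (p i)).ncard ≤ finrank F V := by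
    refine (Set.ncard_le_ncard hsub hfin).trans ?_
    refine le_trans ?_ hp.subtype_ne_bot_le_finrank
    rw [← Set.image_univ, ← Nat.card_eq_fintype_card, ← Set.ncard_univ]
    exact Set.ncard_image_le
  have hne : (MulAction.orbit G (p i)).ncard ≠ 0 :=
    (Set.ncard_pos (hfin.subset hsub)).2 (MulAction.nonempty_orbit _) |>.ne'
  rw [← MulAction.index_stabilizer] at hcard hne
  refine (hρ _ hne hcard (p i) ?_).resolve_left hi
  intro g hg u hu
  have : g • p i = p i := hg
  rw [← this]
  exact ⟨u, hu, rfl⟩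

lemma map_maxGenEigenspace_conj (ρ : Representation F G V) (g : G) (c : End F V) (μ : F) :
    (c.maxGenEigenspace μ).map (ρ g) = End.maxGenEigenspace (ρ g * c * ρ g⁻¹) μ := by
  have h1 : ρ g * ρ g⁻¹ = 1 := by rw [← map_mul]; simp
  have h2 : ρ g⁻¹ * ρ g = 1 := by rw [← map_mul]; simp
  have key : ∀ k : ℕ, (ρ g * c * ρ g⁻¹ - μ • 1) ^ k = ρ g * (c - μ • 1) ^ k * ρ g⁻¹ := by
    intro k
    have hb : ρ g * c * ρ g⁻¹ - μ • 1 = ρ g * (c - μ • 1) * ρ g⁻¹ := by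
      rw [mul_sub, sub_mul, mul_smul_comm, smul_mul_assoc, mul_one, h1]
    induction k with
    | zero => simp [h1]
    | succ k ih =>
      rw [pow_succ, ih, hb, pow_succ]
      calc ρ g * (c - μ • 1) ^ k * ρ g⁻¹ * (ρ g * (c - μ • 1) * ρ g⁻¹)
          = ρ g * (c - μ • 1) ^ k * (ρ g⁻¹ * ρ g) * (c - μ • 1) * ρ g⁻¹ := by noncomm_ring
        _ = _ := by rw [h2]; noncomm_ring
  have e1 : ∀ x, ρ g⁻¹ (ρ g x) = x := fun x => by
    rw [← End.mul_apply, h2]; rfl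
  have e2 : ∀ x, ρ g (ρ g⁻¹ x) = x := fun x => by
    rw [← End.mul_apply, h1]; rfl
  ext v
  simp only [Submodule.mem_map, Module.End.mem_maxGenEigenspace]
  constructor
  · rintro ⟨w, ⟨k, hk⟩, rfl⟩
    refine ⟨k, ?_⟩
    rw [key, End.mul_apply, End.mul_apply, e1, hk, map_zero]
  · rintro ⟨k, hk⟩
    refine ⟨ρ g⁻¹ v, ⟨k, ?_⟩, e2 v⟩
    rw [key, End.mul_apply, End.mul_apply] at hk
    have := congrArg (ρ g⁻¹) hk
    rwa [e1, map_zero] at this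

/-- In a primitive representation, the members of a commuting family of operators normalized by
the group have a single eigenvalue each. -/
lemma Prim.single_eigenvalue [IsAlgClosed F] [FiniteDimensional F V] [Nontrivial V]
    {ρ : Representation F G V} (hρ : Prim ρ) (C : Set (End F V))
    (hC : ∀ a ∈ C, ∀ b ∈ C, Commute a b) (hn : ∀ g, ∀ a ∈ C, ρ g * a * ρ g⁻¹ ∈ C)
    (a : End F V) (ha : a ∈ C) : ∃ μ, a.maxGenEigenspace μ = ⊤ := by
  let f : C → End F V := fun c => c
  let p : (C → F) → Submodule F V := fun χ => ⨅ c, (f c).maxGenEigenspace (χ c)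
  have hind : iSupIndep p := by
    apply End.independent_iInf_maxGenEigenspace_of_forall_mapsTo
    intro i j
    exact End.mapsTo_maxGenEigenspace_of_comm (hC _ j.2 _ i.2)
  have htop : ⨆ χ, p χ = ⊤ :=
    End.iSup_iInf_maxGenEigenspace_eq_top_of_iSup_maxGenEigenspace_eq_top_of_commute f
      (fun i j _ => hC _ i.2 _ j.2) (fun i => End.iSup_maxGenEigenspace_eq_top (f i))
  have : ∃ χ, p χ ≠ ⊥ := by
    by_contra h
    push Not at h
    rw [iSup_congr h, iSup_bot] at htop
    exact bot_ne_top htop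
  obtain ⟨χ, hχ⟩ := this
  have hgg : ∀ g : G, ∀ c : End F V, ρ g⁻¹ * (ρ g * c * ρ g⁻¹) * ρ g = c := by
    intro g c
    have h2 : ρ g⁻¹ * ρ g = 1 := by rw [← map_mul]; simp
    calc ρ g⁻¹ * (ρ g * c * ρ g⁻¹) * ρ g = (ρ g⁻¹ * ρ g) * c * (ρ g⁻¹ * ρ g) := by noncomm_ring
      _ = c := by rw [h2]; simp
  have hT := hρ.eq_top_of_permuted p hind ?_ χ hχ
  · refine ⟨χ ⟨a, ha⟩, top_le_iff.1 ?_⟩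
    rw [← hT]
    exact iInf_le (fun c : C => (f c).maxGenEigenspace (χ c)) ⟨a, ha⟩
  · intro g χ
    have hinv : ∀ c : C, ρ g⁻¹ * c * ρ g ∈ C := by
      intro c; simpa using hn g⁻¹ c c.2
    refine ⟨fun c => χ ⟨_, hinv c⟩, ?_⟩
    have hinj : Function.Injective (ρ g) := by
      intro x y hxy
      have := congrArg (ρ g⁻¹) hxy
      rwa [← End.mul_apply, ← End.mul_apply, ← map_mul, inv_mul_cancel, map_one] at this
    have : Nonempty C := ⟨⟨a, ha⟩⟩
    change Submodule.map (ρ g) (⨅ c, (f c).maxGenEigenspace (χ c)) =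
      ⨅ c : C, (f c).maxGenEigenspace (χ ⟨_, hinv c⟩)
    rw [Submodule.map_iInf _ hinj]
    simp_rw [map_maxGenEigenspace_conj]
    let e : C ≃ C :=
      { toFun := fun c => ⟨_, hn g c c.2⟩
        invFun := fun c => ⟨_, hinv c⟩
        left_inv := fun c => Subtype.ext (hgg g c)
        right_inv := fun c => Subtype.ext (by simpa using hgg g⁻¹ c) }
    rw [← e.iInf_comp (g := fun c : C => (f c).maxGenEigenspace (χ ⟨_, hinv c⟩))]
    refine iInf_congr fun c => ?_
    have : (⟨_, hinv (e c)⟩ : C) = c := e.left_inv c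
    rw [this]
    rfl

end prim
end LinRank

/-! ### Subgroups of small index, rings of matrix entries, residue fields -/

namespace LinRank
open Module

section small

variable {G : Type*} [Group G]

lemma finite_hom_of_fg [Group.FG G] (P : Type*) [Group P] [Finite P] : Finite (G →* P) := by
  obtain ⟨S, hS⟩ := Group.FG.out (G := G)
  refine Finite.of_injective (fun (f : G →* P) (s : S) => f s) ?_
  intro f g h
  refine MonoidHom.eq_of_eqOn_dense hS ?_
  intro s hs
  exact congrFun h ⟨s, hs⟩

/-- In a finitely generated group the subgroups of bounded index have a finite-index
intersection. -/
lemma exists_small (G : Type*) [Group G] [Group.FG G] (n : ℕ) : ∃ G₁ : Subgroup G,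
    G₁.FiniteIndex ∧ ∀ T : Subgroup G, T.index ≠ 0 → T.index ≤ n → G₁ ≤ T := by
  have hfin : ∀ k : ℕ, Finite (G →* Equiv.Perm (Fin k)) := fun k => finite_hom_of_fg _
  let K : (Σ k : Fin (n + 1), (G →* Equiv.Perm (Fin k))) → Subgroup G := fun x => x.2.ker
  refine ⟨⨅ x, K x, Subgroup.finiteIndex_iInf (fun x => ?_), ?_⟩
  · change x.2.ker.FiniteIndex
    exact Subgroup.finiteIndex_ker x.2
  · intro T h0 hn
    have : T.FiniteIndex := ⟨h0⟩
    have e : G ⧸ T ≃ Fin T.index := Finite.equivFin (G ⧸ T)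
    let f : G →* Equiv.Perm (Fin T.index) :=
      (e.permCongrHom : Equiv.Perm (G ⧸ T) →* _).comp (MulAction.toPermHom G (G ⧸ T))
    refine (iInf_le K ⟨⟨T.index, by omega⟩, f⟩).trans ?_
    intro g hg
    have hg' : f g = 1 := hg
    have h1 : MulAction.toPermHom G (G ⧸ T) g = 1 := by
      apply (e.permCongrHom).injective
      rw [map_one]; exact hg'
    have h2 := congrFun (congrArg DFunLike.coe h1) ((1 : G) : G ⧸ T)
    have h3 : ((g * 1 : G) : G ⧸ T) = ((1 : G) : G ⧸ T) := h2
    rw [mul_one, QuotientGroup.eq] at h3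
    simpa using h3

end small

section entries

variable {F : Type*} [Field F] {G : Type*} [Group G] {d : ℕ}

/-- A representation of a finitely generated group on matrices is defined over a finitely
generated algebra, which may be chosen to contain finitely many prescribed scalars. -/
lemma exists_entry_ring (A : Type*) [CommRing A] [Algebra A F] [Group.FG G]
    (φ : G →* Matrix (Fin d) (Fin d) F) (E : Finset F) :
    ∃ R : Subalgebra A F, R.FG ∧ (∀ x ∈ E, x ∈ R) ∧ ∀ g i j, φ g i j ∈ R := by
  classical
  obtain ⟨S, hS⟩ := Group.FG.out (G := G)
  let X : Finset F := E ∪ ((S ×ˢ (Finset.univ : Finset (Fin d × Fin d))).image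
      (fun x => φ x.1 x.2.1 x.2.2)) ∪ ((S ×ˢ (Finset.univ : Finset (Fin d × Fin d))).image
      (fun x => φ x.1⁻¹ x.2.1 x.2.2))
  let R := Algebra.adjoin A (X : Set F)
  have hX : ∀ x ∈ X, x ∈ R := fun x hx => Algebra.subset_adjoin hx
  refine ⟨R, Subalgebra.fg_def.2 ⟨X, X.finite_toSet, rfl⟩, ?_, ?_⟩
  · intro x hx
    exact hX x (by simp [X, hx])
  · intro g
    have hg : g ∈ Subgroup.closure (S : Set G) := hS ▸ Subgroup.mem_top g
    induction hg using Subgroup.closure_induction'' with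
    | one =>
      intro i j
      rw [map_one, Matrix.one_apply]
      split_ifs
      · exact R.one_mem
      · exact R.zero_mem
    | mem s hs =>
      intro i j
      apply hX
      simp only [X, Finset.mem_union, Finset.mem_image]
      left; right
      exact ⟨(s, (i, j)), by simpa using hs, rfl⟩
    | inv_mem s hs =>
      intro i j
      apply hX
      simp only [X, Finset.mem_union, Finset.mem_image]
      right
      exact ⟨(s, (i, j)), by simpa using hs, rfl⟩
    | mul x y _ _ hx hy =>
      intro i j
      rw [map_mul, Matrix.mul_apply]
      exact R.sum_mem fun k _ => R.mul_mem (hx i k) (hy k j)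

/-- Descent of a matrix representation to a subring containing all entries. -/
def descend {A : Type*} [CommRing A] [Algebra A F] (R : Subalgebra A F)
    (φ : G →* Matrix (Fin d) (Fin d) F) (h : ∀ g i j, φ g i j ∈ R) :
    G →* Matrix (Fin d) (Fin d) R where
  toFun g := Matrix.of fun i j => ⟨φ g i j, h g i j⟩
  map_one' := by
    ext i j
    simp only [map_one, Matrix.of_apply, Matrix.one_apply]
    split_ifs <;> rfl
  map_mul' x y := by
    ext i j
    simp only [map_mul, Matrix.of_apply, Matrix.mul_apply]
    push_cast
    rfl

@[simp] lemma descend_apply {A : Type*} [CommRing A] [Algebra A F] (R : Subalgebra A F)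
    (φ : G →* Matrix (Fin d) (Fin d) F) (h : ∀ g i j, φ g i j ∈ R) (g : G) (i j : Fin d) :
    ((descend R φ h g i j : R) : F) = φ g i j := rfl

lemma descend_map {A : Type*} [CommRing A] [Algebra A F] (R : Subalgebra A F)
    (φ : G →* Matrix (Fin d) (Fin d) F) (h : ∀ g i j, φ g i j ∈ R) (g : G) :
    (descend R φ h g).map (algebraMap R F) = φ g := by
  ext i j; rfl

/-- A matrix representation with values in a finite ring has finite-index kernel. -/
lemma finiteIndex_ker_matrix {k : Type*} [CommRing k] [Finite k]
    (φ : G →* Matrix (Fin d) (Fin d) k) : φ.ker.FiniteIndex := by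
  have h : φ.ker = φ.toHomUnits.ker := by
    ext g
    rw [MonoidHom.mem_ker, MonoidHom.mem_ker, Units.ext_iff]; rfl
  rw [h]
  have : Finite (Matrix (Fin d) (Fin d) k)ˣ := Finite.of_injective _ Units.val_injective
  exact Subgroup.finiteIndex_ker _

end entries

section residue

lemma isJacobsonRing_int : IsJacobsonRing ℤ := by
  rw [isJacobsonRing_iff_prime_eq]
  intro P hP
  by_cases h0 : P = ⊥
  · subst h0
    rw [eq_bot_iff]
    intro x hx
    rw [Ideal.mem_jacobson_bot] at hx
    have h := Int.isUnit_iff.1 (hx x)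
    have : x = 0 := by rcases h with h | h <;> nlinarith
    simp [this]
  · have : P.IsMaximal := hP.isMaximal h0
    exact Ideal.jacobson_eq_self_of_isMaximal

/-- A field which is a finitely generated ring is finite. -/
lemma finite_field_of_finiteType (k : Type*) [Field k]
    (hk : (Int.castRingHom k).FiniteType) : Finite k := by
  have : Algebra.FiniteType ℤ k := RingHom.finiteType_algebraMap.1 hk
  have := isJacobsonRing_int
  have hfin : Module.Finite ℤ k := finite_of_finite_type_of_isJacobsonRing ℤ k
  have hintg : Algebra.IsIntegral ℤ k := inferInstance
  have hninj : ¬ Function.Injective (algebraMap ℤ k) := by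
    intro hinj
    exact Int.not_isField (isField_of_isIntegral_of_isField hinj (Field.toIsField k))
  rw [injective_iff_map_eq_zero] at hninj
  push Not at hninj
  obtain ⟨a, ha, ha0⟩ := hninj
  refine Module.finite_of_fg_torsion k ?_
  intro x
  refine ⟨⟨a, mem_nonZeroDivisors_of_ne_zero ha0⟩, ?_⟩
  change a • x = 0
  rw [Algebra.smul_def, ha, zero_mul]

/-- A nonzero finitely generated ring has a finite residue field. -/
lemma exists_residue (R : Type*) [CommRing R] [Nontrivial R]
    (hR : (Int.castRingHom R).FiniteType) :
    ∃ m : Ideal R, m.IsMaximal ∧ Finite (R ⧸ m) := by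
  obtain ⟨m, hm⟩ := Ideal.exists_maximal R
  refine ⟨m, hm, ?_⟩
  let _ := Ideal.Quotient.field m
  have h := RingHom.FiniteType.comp_surjective hR (Ideal.Quotient.mk_surjective (I := m))
  rw [RingHom.ext_int ((Ideal.Quotient.mk m).comp (Int.castRingHom R)) (Int.castRingHom _)] at h
  exact finite_field_of_finiteType (R ⧸ m) h

lemma exists_prime_mem (R : Type*) [CommRing R] (m : Ideal R) [m.IsPrime] [Finite (R ⧸ m)] :
    ∃ p : ℕ, p.Prime ∧ (p : R) ∈ m := by
  obtain ⟨p, hp⟩ := CharP.exists (R ⧸ m)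
  have hp0 : p ≠ 0 := by
    rintro rfl
    have := CharP.charP_to_charZero (R ⧸ m)
    exact not_injective_infinite_finite _ (Nat.cast_injective (R := R ⧸ m))
  refine ⟨p, (CharP.char_is_prime_or_zero (R ⧸ m) p).resolve_right hp0, ?_⟩
  rw [← Ideal.Quotient.eq_zero_iff_mem, map_natCast]
  exact CharP.cast_eq_zero _ p

/-- A finitely generated domain of characteristic zero has finite residue rings of two different
characteristics. -/
lemma exists_two_residues (R : Type*) [CommRing R] [IsDomain R] [CharZero R]
    (hR : (Int.castRingHom R).FiniteType) :
    ∃ (m m' : Ideal R) (p p' : ℕ), m.IsPrime ∧ m'.IsPrime ∧ Finite (R ⧸ m) ∧ Finite (R ⧸ m') ∧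
      p.Prime ∧ p'.Prime ∧ p ≠ p' ∧ (p : R) ∈ m ∧ (p' : R) ∈ m' := by
  obtain ⟨m, hm, hf⟩ := exists_residue R hR
  obtain ⟨p, hp, hpm⟩ := exists_prime_mem R m
  have hp0 : (p : R) ≠ 0 := Nat.cast_ne_zero.2 hp.ne_zero
  let L := Localization.Away (p : R)
  have hL : Nontrivial L :=
    (IsLocalization.injective L (powers_le_nonZeroDivisors_of_noZeroDivisors hp0)).nontrivial
  have : Algebra.FiniteType R L := IsLocalization.finiteType_of_monoid_fg (Submonoid.powers (p : R)) L
  have h := (RingHom.finiteType_algebraMap.2 this).comp hR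
  rw [RingHom.ext_int ((algebraMap R L).comp (Int.castRingHom R)) (Int.castRingHom _)] at h
  obtain ⟨n, hn, hfn⟩ := exists_residue L h
  let m' : Ideal R := n.comap (algebraMap R L)
  have hm' : m'.IsPrime := Ideal.comap_isPrime _ _
  have hfm' : Finite (R ⧸ m') :=
    Finite.of_injective (Ideal.quotientMap n (algebraMap R L) le_rfl) Ideal.quotientMap_injective
  obtain ⟨p', hp', hpm'⟩ := exists_prime_mem R m'
  refine ⟨m, m', p, p', inferInstance, hm', hf, hfm', hp, hp', ?_, hpm, hpm'⟩
  rintro rfl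
  refine hn.ne_top (Ideal.eq_top_of_isUnit_mem _ hpm' ?_)
  exact IsLocalization.Away.algebraMap_isUnit (p : R)

end residue

end LinRank

/-! ### Eigenvalue quotients that are not roots of unity -/

namespace LinRank
open Module

section rootsOfUnity

/-- A root of unity congruent to `1` modulo primes of two different residue characteristics
is `1`. -/
lemma root_of_unity_eq_one {O : Type*} [CommRing O] [IsDomain O] (P P' : Ideal O) [P.IsPrime]
    [P'.IsPrime] {p p' : ℕ} (hp : p.Prime) (hp' : p'.Prime) (hne : p ≠ p') (hP : (p : O) ∈ P)
    (hP' : (p' : O) ∈ P') (ξ : O) (N : ℕ) (hN : 0 < N) (h1 : ξ ^ N = 1) (h : ξ - 1 ∈ P)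
    (h' : ξ - 1 ∈ P') : ξ = 1 := by
  by_contra hξ
  have hfin : IsOfFinOrder ξ := isOfFinOrder_iff_pow_eq_one.2 ⟨N, hN, h1⟩
  have hord : orderOf ξ ≠ 1 := fun h => hξ (orderOf_eq_one_iff.1 h)
  obtain ⟨l, hl, hdvd⟩ := Nat.exists_prime_and_dvd hord
  obtain ⟨e, he⟩ := hdvd
  have hη1 : (ξ ^ e) ^ l = 1 := by
    rw [← pow_mul, mul_comm, ← he, pow_orderOf_eq_one]
  have hη : ξ ^ e ≠ 1 := by
    intro h
    have h2 := orderOf_dvd_of_pow_eq_one h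
    have he0 : 0 < e := by
      rcases Nat.eq_zero_or_pos e with h0 | h0
      · subst h0
        exact absurd hfin.orderOf_pos (by simp [he])
      · exact h0
    have h3 := Nat.le_of_dvd he0 h2
    have h4 := hl.two_le
    nlinarith
  have hsum : ∑ i ∈ Finset.range l, (ξ ^ e) ^ i = 0 := by
    have h := geom_sum_mul (ξ ^ e) l
    rw [hη1, sub_self] at h
    exact (mul_eq_zero.1 h).resolve_right (sub_ne_zero.2 hη)
  have key : ∀ (Q : Ideal O) [Q.IsPrime] (q : ℕ), q.Prime → (q : O) ∈ Q → ξ - 1 ∈ Q → l = q := by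
    intro Q hQ q hq hqQ hQξ
    have h2 : Ideal.Quotient.mk Q ξ = 1 := by
      rw [← map_one (Ideal.Quotient.mk Q), Ideal.Quotient.eq]; exact hQξ
    have h3 := congrArg (Ideal.Quotient.mk Q) hsum
    simp only [map_sum, map_pow, h2, one_pow, Finset.sum_const, Finset.card_range, nsmul_eq_mul,
      mul_one, map_zero] at h3
    have h4 : (l : O) ∈ Q := by
      rw [← Ideal.Quotient.eq_zero_iff_mem, map_natCast]; exact h3
    by_contra hlq
    have hco : IsCoprime (l : ℤ) (q : ℤ) :=
      Nat.isCoprime_iff_coprime.2 ((Nat.coprime_primes hl hq).2 hlq)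
    obtain ⟨a, b, hab⟩ := hco
    apply hQ.ne_top
    rw [Ideal.eq_top_iff_one]
    have h5 : (a : O) * l + b * q = 1 := by exact_mod_cast congrArg (Int.cast : ℤ → O) hab
    rw [← h5]
    exact Q.add_mem (Q.mul_mem_left _ h4) (Q.mul_mem_left _ hqQ)
  exact hne ((key P p hp hP h).symm.trans (key P' p' hp' hP' h'))

end rootsOfUnity

section congruence

/-- Roots of the characteristic polynomial of a matrix congruent to `1` modulo a prime are
congruent to `1` modulo any prime above. -/
lemma eigenvalue_congr_one {R O : Type*} [CommRing R] [CommRing O] [Algebra R O] {d : ℕ}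
    (A : Matrix (Fin d) (Fin d) R) (P : Ideal O) [P.IsPrime]
    (hA : (Ideal.Quotient.mk (P.comap (algebraMap R O))).mapMatrix A = 1) (α : O)
    (hα : (A.charpoly).aeval α = 0) : α - 1 ∈ P := by
  let f : R →+* O ⧸ P := (Ideal.Quotient.mk P).comp (algebraMap R O)
  have h1 : f.mapMatrix A = 1 := by
    have h2 : f = (Ideal.quotientMap P (algebraMap R O) le_rfl).comp
        (Ideal.Quotient.mk (P.comap (algebraMap R O))) := by
      ext x; simp [f]
    rw [h2, ← RingHom.mapMatrix_comp, RingHom.comp_apply, hA, map_one]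
  have h3 : (A.charpoly).map f = (Polynomial.X - Polynomial.C 1) ^ d := by
    rw [← Matrix.charpoly_map]
    change (f.mapMatrix A).charpoly = _
    rw [h1, Matrix.charpoly_one]
    simp
  have h4 : (A.charpoly).eval₂ f (Ideal.Quotient.mk P α) = 0 := by
    have := Polynomial.hom_eval₂ A.charpoly (algebraMap R O) (Ideal.Quotient.mk P) α
    rw [← this]
    rw [Polynomial.aeval_def] at hα
    rw [hα, map_zero]
  rw [← Polynomial.eval_map, h3] at h4
  simp only [Polynomial.eval_pow, Polynomial.eval_sub, Polynomial.eval_X, Polynomial.eval_C] at h4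
  have h5 : Ideal.Quotient.mk P α - 1 = 0 := IsNilpotent.eq_zero ⟨d, h4⟩
  rw [← map_one (Ideal.Quotient.mk P), ← map_sub] at h5
  exact Ideal.Quotient.eq_zero_iff_mem.1 h5

end congruence

section eigenvalues

variable {F : Type*} [Field F] {d : ℕ}

lemma charpoly_root_inv {A B : Matrix (Fin d) (Fin d) F} (hAB : A * B = 1) {α : F}
    (hα : A.charpoly.IsRoot α) : α ≠ 0 ∧ B.charpoly.IsRoot α⁻¹ := by
  have hBA : B * A = 1 := mul_eq_one_comm.1 hAB
  rw [Polynomial.IsRoot, Matrix.eval_charpoly, ← Matrix.exists_mulVec_eq_zero_iff] at hα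
  obtain ⟨v, hv, h⟩ := hα
  have h1 : A.mulVec v = α • v := by
    rw [Matrix.sub_mulVec, sub_eq_zero] at h
    rw [← h]; simp [Matrix.scalar_apply, ← Matrix.smul_one_eq_diagonal, Matrix.smul_mulVec]
  have h2 : v = α • B.mulVec v := by
    rw [← Matrix.mulVec_smul, ← h1, Matrix.mulVec_mulVec, hBA, Matrix.one_mulVec]
  have h0 : α ≠ 0 := by
    rintro rfl
    rw [zero_smul] at h2
    exact hv h2
  refine ⟨h0, ?_⟩
  rw [Polynomial.IsRoot, Matrix.eval_charpoly, ← Matrix.exists_mulVec_eq_zero_iff]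
  refine ⟨v, hv, ?_⟩
  rw [Matrix.sub_mulVec, sub_eq_zero]
  nth_rewrite 1 [h2]
  simp [Matrix.scalar_apply, ← Matrix.smul_one_eq_diagonal, Matrix.smul_mulVec, h0]

/-- The matrix form of a representation on `Fin d → F`. -/
def matOf {G : Type*} [Group G] (ρ : Representation F G (Fin d → F)) :
    G →* Matrix (Fin d) (Fin d) F :=
  (LinearMap.toMatrixAlgEquiv' : Module.End F (Fin d → F) ≃ₐ[F] _).toAlgHom.toMonoidHom.comp ρ

lemma matOf_apply {G : Type*} [Group G] (ρ : Representation F G (Fin d → F)) (g : G) :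
    matOf ρ g = LinearMap.toMatrix' (ρ g) := rfl

lemma trace_matOf {G : Type*} [Group G] (ρ : Representation F G (Fin d → F)) (g : G) :
    (matOf ρ g).trace = LinearMap.trace F _ (ρ g) := by
  rw [matOf_apply, LinearMap.trace_eq_matrix_trace F (Pi.basisFun F (Fin d))]
  rfl

end eigenvalues

section burnsideSchur

variable {F : Type*} [Field F] [IsAlgClosed F] {d : ℕ}

lemma roots_single (A : Matrix (Fin d) (Fin d) F) (α : F)
    (h : ∀ β, A.charpoly.IsRoot β → β = α) : A.trace = d * α ∧ A.det = α ^ d := by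
  have hr : A.charpoly.roots = Multiset.replicate d α := by
    rw [Multiset.eq_replicate]
    constructor
    · rw [IsAlgClosed.card_roots_eq_natDegree, Matrix.charpoly_natDegree_eq_dim, Fintype.card_fin]
    · intro b hb
      exact h b (Polynomial.isRoot_of_mem_roots hb)
  rw [Matrix.trace_eq_sum_roots_charpoly, Matrix.det_eq_prod_roots_charpoly, hr]
  simp

lemma exists_charpoly_root [NeZero d] (A : Matrix (Fin d) (Fin d) F) :
    ∃ α, A.charpoly.IsRoot α := by
  apply IsAlgClosed.exists_root
  rw [Matrix.charpoly_degree_eq_dim]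
  simp [NeZero.ne d]

/-- Burnside–Schur: a strongly irreducible representation of dimension at least `2` of a finitely
generated group has an element with two eigenvalues whose quotient is not a root of unity. -/
theorem burnside_schur [CharZero F] {G : Type*} [Group G] [Group.FG G]
    (ρ : Representation F G (Fin d → F)) (hρ : StronglyIrr ρ) (hd : 2 ≤ d) :
    ∃ g α β, (matOf ρ g).charpoly.IsRoot α ∧ (matOf ρ g).charpoly.IsRoot β ∧
      ∀ N : ℕ, 0 < N → α ^ N ≠ β ^ N := by
  by_contra hcon
  push Not at hcon
  have : NeZero d := ⟨by omega⟩
  let φ := matOf ρ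
  obtain ⟨R, hRfg, -, hR⟩ := exists_entry_ring ℤ φ ∅
  have hRft : (Int.castRingHom R).FiniteType := by
    have h : Algebra.FiniteType ℤ R := R.fg_iff_finiteType.1 hRfg
    have h2 := RingHom.finiteType_algebraMap.2 h
    rwa [RingHom.ext_int (algebraMap ℤ R) (Int.castRingHom _)] at h2
  obtain ⟨m, m', p, p', hm, hm', hfm, hfm', hp, hp', hne, hpm, hpm'⟩ := exists_two_residues R hRft
  let O := integralClosure R F
  have hover : ∀ n : Ideal R, n.IsPrime → ∃ Q : Ideal O, Q.IsPrime ∧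
      Q.comap (algebraMap R O) = n := by
    intro n hn
    obtain ⟨Q, -, hQ, hQn⟩ := Ideal.exists_ideal_over_prime_of_isIntegral n (⊥ : Ideal O) (by
      intro x hx
      have h1 : algebraMap R O x = 0 := Ideal.mem_bot.1 (Ideal.mem_comap.1 hx)
      have h2 : ((algebraMap R O x : O) : F) = 0 := by rw [h1]; rfl
      have h3 : (x : F) = 0 := h2
      have h4 : x = 0 := Subtype.ext h3
      rw [h4]; exact n.zero_mem)
    exact ⟨Q, hQ, hQn⟩
  obtain ⟨P, hP, hPm⟩ := hover m hm
  obtain ⟨P', hP', hPm'⟩ := hover m' hm'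
  have hpP : (p : O) ∈ P := by
    have : (p : R) ∈ P.comap (algebraMap R O) := hPm ▸ hpm
    simpa using this
  have hpP' : (p' : O) ∈ P' := by
    have : (p' : R) ∈ P'.comap (algebraMap R O) := hPm' ▸ hpm'
    simpa using this
  let red : ∀ n : Ideal R, G →* Matrix (Fin d) (Fin d) (R ⧸ n) := fun n =>
    ((Ideal.Quotient.mk n).mapMatrix (m := Fin d)).toMonoidHom.comp (descend R φ hR)
  let K : Subgroup G := (red m).ker ⊓ (red m').ker
  have hK : K.FiniteIndex := by
    have h1 := finiteIndex_ker_matrix (red m)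
    have h2 := finiteIndex_ker_matrix (red m')
    infer_instance
  -- eigenvalues of elements of `K` are integral and congruent to `1`
  have hintg : ∀ g ∈ K, ∀ α, (φ g).charpoly.IsRoot α →
      ∃ a : O, (a : F) = α ∧ a - 1 ∈ P ∧ a - 1 ∈ P' := by
    intro g hg α hα
    have hroot : (descend R φ hR g).charpoly.aeval α = 0 := by
      rw [Polynomial.aeval_def, ← Polynomial.eval_map, ← Matrix.charpoly_map, descend_map]
      exact hα
    have hαO : α ∈ O := ⟨_, Matrix.charpoly_monic _, hroot⟩
    have hrootO : (descend R φ hR g).charpoly.aeval (⟨α, hαO⟩ : O) = 0 := by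
      apply Subtype.val_injective
      have := Polynomial.aeval_algebraMap_apply F (⟨α, hαO⟩ : O) (descend R φ hR g).charpoly
      exact this.symm.trans hroot
    refine ⟨⟨α, hαO⟩, rfl, ?_, ?_⟩
    · refine eigenvalue_congr_one (descend R φ hR g) P ?_ _ hrootO
      rw [hPm]
      exact hg.1
    · refine eigenvalue_congr_one (descend R φ hR g) P' ?_ _ hrootO
      rw [hPm']
      exact hg.2
  have hmulinv : ∀ g, φ g * φ g⁻¹ = 1 := fun g => by rw [← map_mul, mul_inv_cancel, map_one]
  have hRU : ∀ (a : O) (N : ℕ), 0 < N → a ^ N = 1 → a - 1 ∈ P → a - 1 ∈ P' → a = 1 :=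
    fun a N hN h1 h2 h3 =>
      root_of_unity_eq_one P P' hp hp' hne hpP hpP' a N hN h1 h2 h3
  have hcongr : ∀ (Q : Ideal O) (a b : O), a - 1 ∈ Q → b - 1 ∈ Q → a * b - 1 ∈ Q := by
    intro Q a b ha hb
    have : a * b - 1 = (a - 1) * b + (b - 1) := by ring
    rw [this]
    exact Q.add_mem (Q.mul_mem_right _ ha) hb
  -- hence each element of `K` has a single eigenvalue
  have hsingle : ∀ g ∈ K, ∀ α β, (φ g).charpoly.IsRoot α → (φ g).charpoly.IsRoot β → β = α := by
    intro g hg α β hα hβ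
    obtain ⟨N, hN, hNe⟩ := hcon g α β hα hβ
    obtain ⟨hβ0, hβ'⟩ := charpoly_root_inv (hmulinv g) hβ
    obtain ⟨a, ha, ha1, ha2⟩ := hintg g hg α hα
    obtain ⟨b, hb, hb1, hb2⟩ := hintg g⁻¹ (K.inv_mem hg) _ hβ'
    have h1 : a * b = 1 := by
      refine hRU _ N hN ?_ (hcongr P _ _ ha1 hb1) (hcongr P' _ _ ha2 hb2)
      apply Subtype.val_injective
      push_cast
      rw [ha, hb, mul_pow, hNe, ← mul_pow, mul_inv_cancel₀ hβ0, one_pow]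
    have h2 : α * β⁻¹ = 1 := by
      rw [← ha, ← hb]; exact_mod_cast congrArg (Subtype.val : O → F) h1
    rw [mul_inv_eq_one₀ hβ0] at h2
    exact h2.symm
  choose! ev hev using fun g => exists_charpoly_root (φ g)
  have hst : ∀ g ∈ K, (φ g).trace = d * ev g ∧ (φ g).det = ev g ^ d := fun g hg =>
    roots_single _ _ fun β hβ => hsingle g hg _ _ (hev g) hβ
  have hmul : ∀ g ∈ K, ∀ h ∈ K, ev (g * h) = ev g * ev h := by
    intro g hg h hh
    obtain ⟨hg0, hg'⟩ := charpoly_root_inv (hmulinv g) (hev g)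
    obtain ⟨hh0, hh'⟩ := charpoly_root_inv (hmulinv h) (hev h)
    obtain ⟨a, ha, ha1, ha2⟩ := hintg _ (K.inv_mem hg) _ hg'
    obtain ⟨b, hb, hb1, hb2⟩ := hintg _ (K.inv_mem hh) _ hh'
    obtain ⟨c, hc, hc1, hc2⟩ := hintg _ (K.mul_mem hg hh) _ (hev (g * h))
    have hdet : ev (g * h) ^ d = ev g ^ d * ev h ^ d := by
      rw [← (hst g hg).2, ← (hst h hh).2, ← (hst _ (K.mul_mem hg hh)).2, map_mul, Matrix.det_mul]
    have h1 : c * a * b = 1 := by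
      refine hRU _ d (by omega) ?_ (hcongr P _ _ (hcongr P _ _ hc1 ha1) hb1)
        (hcongr P' _ _ (hcongr P' _ _ hc2 ha2) hb2)
      apply Subtype.val_injective
      push_cast
      rw [ha, hb, hc, mul_pow, mul_pow, hdet, inv_pow, inv_pow]
      have h3 := pow_ne_zero d hg0
      have h4 := pow_ne_zero d hh0
      field_simp
    have h2 : ev (g * h) * (ev g)⁻¹ * (ev h)⁻¹ = 1 := by
      rw [← ha, ← hb, ← hc]; exact_mod_cast congrArg (Subtype.val : O → F) h1
    field_simp at h2
    exact h2
  -- `ev` is multiplicative on `K`, so `ρ g - ev g` is trace-orthogonal to `ρ K`, which spans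
  have hspan := burnside_rep ρ K (hρ K hK)
  have hscalar : ∀ g ∈ K, ρ g = ev g • 1 := by
    intro g hg
    rw [← sub_eq_zero]
    refine eq_zero_of_trace_mul _ hspan _ ?_
    rintro _ ⟨h, hh, rfl⟩
    rw [sub_mul, ← map_mul, smul_mul_assoc, one_mul, map_sub, map_smul, ← trace_matOf,
      ← trace_matOf]
    change (φ (g * h)).trace - ev g • (φ h).trace = 0
    rw [(hst _ (K.mul_mem hg hh)).1, (hst h hh).1, hmul g hg h hh, smul_eq_mul]
    ring
  let v : Fin d → F := Pi.single 0 1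
  rcases hρ K hK (Submodule.span F {v}) (by
    intro h hh u hu
    rw [hscalar h hh]
    exact Submodule.smul_mem _ _ hu) with h | h
  · rw [Submodule.span_singleton_eq_bot] at h
    exact one_ne_zero (Pi.single_eq_zero_iff.1 h)
  · have h1 := finrank_span_le_card (R := F) ({v} : Set (Fin d → F))
    rw [h, finrank_top, Module.finrank_fin_fun] at h1
    simp at h1
    omega

end burnsideSchur

end LinRank

/-! ### Replicas and the adjoint representation -/

namespace LinRank
open Module

section theta

/-- A logarithm-like homomorphism from the multiplicative group of a field to `ℚ` separating two
elements whose quotient is not a root of unity. -/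
lemma exists_theta {F : Type*} [Field F] (α β : F) (hα : α ≠ 0) (hβ : β ≠ 0)
    (h : ∀ N : ℕ, 0 < N → α ^ N ≠ β ^ N) :
    ∃ θ : F → ℚ, (∀ x y, x ≠ 0 → y ≠ 0 → θ (x * y) = θ x + θ y) ∧ θ α ≠ θ β := by
  classical
  let z : Fˣ := Units.mk0 α hα / Units.mk0 β hβ
  have hz : Function.Injective (zmultiplesHom (Additive Fˣ) (Additive.ofMul z)) := by
    rw [injective_iff_map_eq_zero]
    intro n hn
    by_contra hne
    have h1 : z ^ n = 1 := hn
    have h2 : z ^ n.natAbs = 1 := by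
      rcases Int.natAbs_eq n with h | h
      · rw [← zpow_natCast, ← h]; exact h1
      · rw [← zpow_natCast, ← inv_eq_one, ← zpow_neg, ← h]; exact h1
    refine h n.natAbs (Int.natAbs_pos.2 hne) ?_
    have h3 := congrArg Units.val h2
    simp only [z, Units.val_pow_eq_pow_val, Units.val_div_eq_div_val, Units.val_mk0,
      Units.val_one, div_pow] at h3
    exact (div_eq_one_iff_eq (pow_ne_zero _ hβ)).1 h3
  obtain ⟨f, hf⟩ := (Module.Baer.of_divisible ℚ).extension_property_addMonoidHom _ hz
    (Int.castAddHom ℚ)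
  refine ⟨fun x => if hx : x = 0 then 0 else f (Additive.ofMul (Units.mk0 x hx)), ?_, ?_⟩
  · intro x y hx hy
    simp only [hx, hy, mul_eq_zero, or_self, dite_false]
    rw [← map_add, ← ofMul_mul]
    congr 2
    ext; simp
  · simp only [hα, hβ, dite_false]
    intro heq
    have h1 := DFunLike.congr_fun hf 1
    simp only [AddMonoidHom.comp_apply, zmultiplesHom_apply, one_zsmul, Int.coe_castAddHom,
      Int.cast_one] at h1
    have h2 : Additive.ofMul z = Additive.ofMul (Units.mk0 α hα) - Additive.ofMul (Units.mk0 β hβ) :=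
      rfl
    rw [h2, map_sub, heq, sub_self] at h1
    exact zero_ne_one h1

end theta

section replica

variable {F : Type*} [Field F] {V : Type*} [AddCommGroup V] [Module F V]

/-- `D` is the `θ`-replica of `T`: it acts by the scalar `θ μ` on the generalized eigenspace of
`T` for `μ`. -/
def IsReplica (θ : F → ℚ) (T D : End F V) : Prop :=
  ∀ μ : F, ∀ v ∈ T.maxGenEigenspace μ, D v = ((θ μ : ℚ) : F) • v

lemma IsReplica.unique [IsAlgClosed F] [FiniteDimensional F V] {T D D' : End F V}
    (h : ∀ μ : F, ∀ v ∈ T.maxGenEigenspace μ, D v = D' v) : D = D' := by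
  have h1 : ⨆ μ, T.maxGenEigenspace μ ≤ LinearMap.eqLocus D D' :=
    iSup_le fun μ v hv => h μ v hv
  rw [End.iSup_maxGenEigenspace_eq_top] at h1
  ext v
  exact h1 (Submodule.mem_top : v ∈ ⊤)

/-- Replicas exist: by the Chinese remainder theorem a polynomial in `T` takes the prescribed
value on each generalized eigenspace. -/
lemma exists_replica [IsAlgClosed F] [FiniteDimensional F V] (θ : F → ℚ) (T : End F V) :
    ∃ D, IsReplica θ T D := by
  classical
  let ι := {μ : F // T.HasEigenvalue μ}
  have hfin : Finite ι := T.finite_hasEigenvalue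
  let n := finrank F V
  let I : ι → Ideal (Polynomial F) := fun μ =>
    Ideal.span {(Polynomial.X - Polynomial.C (μ : F)) ^ n}
  have hI : Pairwise (Function.onFun IsCoprime I) := by
    intro a b hab
    change IsCoprime (I a) (I b)
    rw [Ideal.isCoprime_span_singleton_iff]
    refine IsCoprime.pow ?_
    exact Polynomial.isCoprime_X_sub_C_of_isUnit_sub
      (IsUnit.mk0 _ (sub_ne_zero.2 fun h => hab (Subtype.ext h)))
  obtain ⟨q, hq⟩ := Ideal.exists_forall_sub_mem_ideal hI
    (fun μ => Polynomial.C (((θ μ : ℚ) : F)))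
  refine ⟨Polynomial.aeval T q, ?_⟩
  intro μ v hv
  by_cases hμ : T.HasEigenvalue μ
  · have h1 := hq ⟨μ, hμ⟩
    rw [Ideal.mem_span_singleton] at h1
    obtain ⟨r, hr⟩ := h1
    have h2 : ((T - algebraMap F (End F V) μ) ^ n) v = 0 := by
      rw [End.maxGenEigenspace_eq_genEigenspace_finrank, End.mem_genEigenspace_nat,
        LinearMap.mem_ker] at hv
      exact hv
    have h3 := congrArg (fun s => Polynomial.aeval T s v) hr
    simp only [map_sub, Polynomial.aeval_C, mul_comm _ r, map_mul, map_pow, Polynomial.aeval_X,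
      Module.End.mul_apply, LinearMap.sub_apply, h2, map_zero] at h3
    rw [sub_eq_zero] at h3
    rw [h3]; rfl
  · have h1 : T.maxGenEigenspace μ = ⊥ := by
      by_contra hne
      exact hμ (End.HasUnifEigenvalue.lt (k := ⊤) zero_lt_one hne)
    rw [h1, Submodule.mem_bot] at hv
    simp [hv]

end replica

section ad

variable {F : Type*} [Field F] {G : Type*} [Group G] {V : Type*} [AddCommGroup V] [Module F V]

/-- The adjoint action on endomorphisms. -/
def adRep (ρ : Representation F G V) : Representation F G (End F V) := Representation.linHom ρ ρ

lemma adRep_apply (ρ : Representation F G V) (g : G) (X : End F V) :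
    adRep ρ g X = ρ g * X * ρ g⁻¹ := by
  ext v; rfl

lemma rho_mul_inv (ρ : Representation F G V) (g : G) : ρ g * ρ g⁻¹ = 1 := by
  rw [← map_mul, mul_inv_cancel, map_one]

lemma rho_inv_mul (ρ : Representation F G V) (g : G) : ρ g⁻¹ * ρ g = 1 := by
  rw [← map_mul, inv_mul_cancel, map_one]

lemma mem_maxGen_of_sub {T : End F V} {c : F} {y : V}
    (h : (T - c • 1) y ∈ T.maxGenEigenspace c) : y ∈ T.maxGenEigenspace c := by
  rw [End.mem_maxGenEigenspace] at h ⊢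
  obtain ⟨k, hk⟩ := h
  exact ⟨k + 1, by rw [pow_succ]; exact hk⟩

/-- A generalized eigenvector of `Ad g` of weight `ν` maps generalized eigenvectors of `g` of
weight `μ` to generalized eigenvectors of weight `ν * μ`. -/
lemma maxGen_shift (ρ : Representation F G V) (g : G) (ν μ : F) :
    ∀ n i j : ℕ, i + j ≤ n → ∀ (X : End F V) (v : V), ((adRep ρ g - ν • 1) ^ i) X = 0 →
      ((ρ g - μ • 1) ^ j) v = 0 → X v ∈ End.maxGenEigenspace (ρ g) (ν * μ) := by
  intro n
  induction n with
  | zero =>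
    intro i j hij X v hX hv
    obtain rfl : i = 0 := by omega
    have : X = 0 := by simpa using hX
    rw [this]; exact Submodule.zero_mem _
  | succ n ih =>
    intro i j hij X v hX hv
    rcases i with _ | i
    · have : X = 0 := by simpa using hX
      rw [this]; exact Submodule.zero_mem _
    rcases j with _ | j
    · have : v = 0 := by simpa using hv
      rw [this, map_zero]; exact Submodule.zero_mem _
    apply mem_maxGen_of_sub
    have h1 := ih i (j + 1) (by omega) ((adRep ρ g - ν • 1) X) (ρ g v) (by
      rw [pow_succ] at hX; exact hX) (by
      have hc : Commute ((ρ g - μ • 1) ^ (j + 1)) (ρ g) := by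
        apply Commute.pow_left
        exact (Commute.refl _).sub_left ((Commute.one_left _).smul_left μ)
      rw [← Module.End.mul_apply, hc.eq, Module.End.mul_apply, hv, map_zero])
    have h2 := ih (i + 1) j (by omega) X ((ρ g - μ • 1) v) hX (by
      rw [pow_succ] at hv; exact hv)
    have h3 : (ρ g - (ν * μ) • 1) (X v) =
        ((adRep ρ g - ν • 1) X) (ρ g v) + ν • X ((ρ g - μ • 1) v) := by
      have h4 : ρ g⁻¹ (ρ g v) = v := congrArg (fun f : End F V => f v) (rho_inv_mul ρ g)
      simp [adRep_apply, h4, smul_sub, mul_smul]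
    rw [h3]
    exact Submodule.add_mem _ h1 (Submodule.smul_mem _ _ h2)

lemma maxGen_zero (ρ : Representation F G V) (g : G) {v : V}
    (hv : v ∈ End.maxGenEigenspace (ρ g) 0) : v = 0 := by
  rw [End.mem_maxGenEigenspace] at hv
  obtain ⟨k, hk⟩ := hv
  have h1 : (ρ g) ^ k = ρ (g ^ k) := (map_pow ρ g k).symm
  rw [zero_smul, sub_zero, h1] at hk
  have h2 := congrArg (fun f : End F V => f v) (rho_inv_mul ρ (g ^ k))
  simp only [Module.End.mul_apply, hk, map_zero, Module.End.one_apply] at h2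
  exact h2.symm

/-- A subspace of `End V` stable under `Ad g` is stable under the bracket with the replica. -/
lemma replica_stable [CharZero F] [IsAlgClosed F] [FiniteDimensional F V] {θ : F → ℚ}
    (hθ : ∀ x y, x ≠ 0 → y ≠ 0 → θ (x * y) = θ x + θ y) (ρ : Representation F G V) (g : G)
    {D : End F V} (hD : IsReplica θ (ρ g) D) (M : Submodule F (End F V))
    (hM : ∀ X ∈ M, ρ g * X * ρ g⁻¹ ∈ M) (X : End F V) (hX : X ∈ M) : D * X - X * D ∈ M := by
  have hdec := Submodule.eq_iSup_inf_genEigenspace (p := M) (f := adRep ρ g) ⊤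
    (fun x hx => by rw [adRep_apply]; exact hM x hx) (End.iSup_maxGenEigenspace_eq_top _)
  have hle : M ≤ M.comap (LinearMap.mulLeft F D - LinearMap.mulRight F D) := by
    conv_lhs => rw [hdec]
    refine iSup_le fun ν => ?_
    rintro Y ⟨hYM, hY⟩
    change Y ∈ End.maxGenEigenspace (adRep ρ g) ν at hY
    by_cases hν : ν = 0
    · subst hν
      rw [maxGen_zero (adRep ρ) g hY]; exact Submodule.zero_mem _
    have h1 : D * Y - Y * D = ((θ ν : ℚ) : F) • Y := by
      refine IsReplica.unique (T := ρ g) ?_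
      intro μ v hv
      by_cases hμ : μ = 0
      · subst hμ
        rw [maxGen_zero ρ g hv]; simp
      have hYv : Y v ∈ End.maxGenEigenspace (ρ g) (ν * μ) := by
        rw [End.mem_maxGenEigenspace] at hY hv
        obtain ⟨i, hi⟩ := hY
        obtain ⟨j, hj⟩ := hv
        exact maxGen_shift ρ g ν μ _ i j le_rfl Y v hi hj
      rw [LinearMap.sub_apply, Module.End.mul_apply, Module.End.mul_apply, hD _ _ hYv, hD _ _ hv,
        map_smul, hθ ν μ hν hμ, LinearMap.smul_apply]
      push_cast
      rw [add_smul]; abel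
    change D * Y - Y * D ∈ M
    rw [h1]
    exact M.smul_mem _ hYM
  exact hle hX

lemma maxGen_pow (T : End F V) (μ : F) (N : ℕ) {v : V} (hv : v ∈ T.maxGenEigenspace μ) :
    v ∈ End.maxGenEigenspace (T ^ N) (μ ^ N) := by
  rw [End.mem_maxGenEigenspace] at hv ⊢
  obtain ⟨k, hk⟩ := hv
  refine ⟨k, ?_⟩
  have hc : Commute T (μ • 1) := (Commute.one_right T).smul_right μ
  obtain ⟨r, hr, hcr⟩ : ∃ r, T ^ N - μ ^ N • 1 = r * (T - μ • 1) ∧ Commute r (T - μ • 1) := by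
    refine ⟨∑ i ∈ Finset.range N, T ^ i * (μ • 1) ^ (N - 1 - i), ?_, ?_⟩
    · rw [hc.geom_sum₂_mul, smul_pow, one_pow]
    · refine Commute.sum_left _ _ _ fun i _ => ?_
      exact Commute.mul_left (((Commute.refl T).sub_right hc).pow_left _)
        ((hc.symm.sub_right (Commute.refl _)).pow_left _)
  rw [hr, hcr.mul_pow, Module.End.mul_apply, hk, map_zero]

/-- Stability under `Ad (g ^ N)` suffices. -/
lemma replica_stable_pow [CharZero F] [IsAlgClosed F] [FiniteDimensional F V] {θ : F → ℚ}
    (hθ : ∀ x y, x ≠ 0 → y ≠ 0 → θ (x * y) = θ x + θ y) (ρ : Representation F G V) (g : G)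
    {D : End F V} (hD : IsReplica θ (ρ g) D) (M : Submodule F (End F V)) (N : ℕ) (hN : 0 < N)
    (hM : ∀ X ∈ M, ρ (g ^ N) * X * ρ (g ^ N)⁻¹ ∈ M) (X : End F V) (hX : X ∈ M) :
    D * X - X * D ∈ M := by
  have hpow : ∀ (n : ℕ) (x : F), x ≠ 0 → θ (x ^ (n + 1)) = (n + 1 : ℕ) * θ x := by
    intro n x hx
    induction n with
    | zero => simp
    | succ n ih =>
      rw [pow_succ, hθ _ _ (pow_ne_zero _ hx) hx, ih]
      push_cast; ring
  obtain ⟨D', hD'⟩ := exists_replica θ (ρ (g ^ N))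
  have h1 : D' = (N : F) • D := by
    refine IsReplica.unique (T := ρ g) ?_
    intro μ v hv
    by_cases hμ : μ = 0
    · subst hμ
      rw [maxGen_zero ρ g hv]; simp
    have hv' : v ∈ End.maxGenEigenspace (ρ (g ^ N)) (μ ^ N) := by
      rw [map_pow]; exact maxGen_pow _ _ _ hv
    obtain ⟨n, rfl⟩ : ∃ n, N = n + 1 := ⟨N - 1, by omega⟩
    rw [hD' _ _ hv', hpow n μ hμ, LinearMap.smul_apply, hD _ _ hv, smul_smul]
    push_cast; rfl
  have h2 := replica_stable hθ ρ (g ^ N) hD' M hM X hX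
  have hN0 : (N : F) ≠ 0 := Nat.cast_ne_zero.2 hN.ne'
  have h3 : D * X - X * D = (N : F)⁻¹ • (D' * X - X * D') := by
    rw [h1, smul_mul_assoc, mul_smul_comm, ← smul_sub, smul_smul, inv_mul_cancel₀ hN0, one_smul]
  rw [h3]
  exact M.smul_mem _ h2

lemma IsReplica.conj {θ : F → ℚ} (ρ : Representation F G V) (g h : G) {D : End F V}
    (hD : IsReplica θ (ρ g) D) : IsReplica θ (ρ (h * g * h⁻¹)) (ρ h * D * ρ h⁻¹) := by
  intro μ v hv
  rw [map_mul, map_mul, ← map_maxGenEigenspace_conj] at hv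
  obtain ⟨w, hw, rfl⟩ := hv
  have h4 : ρ h⁻¹ (ρ h w) = w := congrArg (fun f : End F V => f w) (rho_inv_mul ρ h)
  rw [Module.End.mul_apply, Module.End.mul_apply, h4, hD μ w hw, map_smul]

end ad

end LinRank

/-! ### Lie algebras of operators with zero trace form -/

namespace LinRank
open Module

section lie

attribute [local instance] LieRing.ofAssociativeRing

variable {F : Type*} [Field F] {V : Type*} [AddCommGroup V] [Module F V]

/-- A bracket-closed subspace of `End V` as a Lie subalgebra. -/
def lieSub (W : Submodule F (End F V)) (hW : ∀ X ∈ W, ∀ Y ∈ W, X * Y - Y * X ∈ W) :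
    LieSubalgebra F (End F V) :=
  { W with lie_mem' := fun {X Y} hX hY => hW X hX Y hY }

/-- Engel: a nonzero space carrying a Lie algebra of nilpotent operators has a nonzero vector
killed by all of them. -/
lemma engel_common_kernel [FiniteDimensional F V] [Nontrivial V] (W : Submodule F (End F V))
    (hW : ∀ X ∈ W, ∀ Y ∈ W, X * Y - Y * X ∈ W) (hnil : ∀ X ∈ W, IsNilpotent X) :
    ∃ v : V, v ≠ 0 ∧ ∀ X ∈ W, X v = 0 := by
  let L := lieSub W hW
  have h1 : LieModule.IsNilpotent L V := by
    rw [LieModule.isNilpotent_iff_forall' (R := F)]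
    intro x
    have h2 : LieModule.toEnd F L V x = (x : End F V) := by ext v; rfl
    rw [h2]
    exact hnil _ x.2
  have h2 := LieModule.nontrivial_max_triv_of_isNilpotent F L V
  obtain ⟨v, hv⟩ := exists_ne (0 : LieModule.maxTrivSubmodule F L V)
  refine ⟨v, fun h => hv (Subtype.ext h), fun X hX => ?_⟩
  have h3 := (LieModule.mem_maxTrivSubmodule F L V v.1).1 v.2
  exact h3 ⟨X, hX⟩

/-- Cartan's criterion for a perfect Lie algebra of operators with vanishing trace form. -/
lemma cartan_nilpotent [CharZero F] [FiniteDimensional F V] (W : Submodule F (End F V))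
    (hW : ∀ X ∈ W, ∀ Y ∈ W, X * Y - Y * X ∈ W)
    (hperf : W ≤ Submodule.span F {Z | ∃ X ∈ W, ∃ Y ∈ W, X * Y - Y * X = Z})
    (htr : ∀ X ∈ W, ∀ Y ∈ W, LinearMap.trace F V (X * Y) = 0) (X : End F V) (hX : X ∈ W) :
    IsNilpotent X := by
  let L := lieSub W hW
  have h1 : LieModule.traceForm F L V = 0 := by
    ext x y
    exact htr _ x.2 _ y.2
  have h2 := LieModule.isNilpotent_derivedSeries_of_traceForm_eq_zero h1
  rw [LieModule.isNilpotent_iff_forall' (R := F)] at h2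
  have h3 : ∀ Z, ∀ hZ : Z ∈ W, (⟨Z, hZ⟩ : L) ∈ LieAlgebra.derivedSeries F L 1 := by
    have h4 : Submodule.span F {Z | ∃ X ∈ W, ∃ Y ∈ W, X * Y - Y * X = Z} ≤
        ((LieAlgebra.derivedSeries F L 1).toSubmodule).map (L.toSubmodule.subtype) := by
      rw [Submodule.span_le]
      rintro _ ⟨A, hA, B, hB, rfl⟩
      refine ⟨⁅(⟨A, hA⟩ : L), (⟨B, hB⟩ : L)⁆, ?_, rfl⟩
      change ⁅(⟨A, hA⟩ : L), (⟨B, hB⟩ : L)⁆ ∈ LieAlgebra.derivedSeries F L 1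
      rw [LieAlgebra.derivedSeries_def, LieAlgebra.derivedSeriesOfIdeal_succ,
        LieAlgebra.derivedSeriesOfIdeal_zero]
      exact LieSubmodule.lie_mem_lie (LieSubmodule.mem_top _) (LieSubmodule.mem_top _)
    intro Z hZ
    obtain ⟨z, hz, hzZ⟩ := h4 (hperf hZ)
    have : z = ⟨Z, hZ⟩ := Subtype.ext hzZ
    rw [← this]; exact hz
  have h5 := h2 ⟨⟨X, hX⟩, h3 X hX⟩
  have h6 : LieModule.toEnd F (LieAlgebra.derivedSeries F L 1) V ⟨⟨X, hX⟩, h3 X hX⟩ = X := by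
    ext v; rfl
  rwa [h6] at h5

end lie

end LinRank

/-! ### A self-dual strongly irreducible subrepresentation of the adjoint representation -/

namespace LinRank
open Module

section selfdual

variable {F : Type*} [Field F] {G : Type*} [Group G] {V : Type*} [AddCommGroup V] [Module F V]

/-- A stable Lie algebra of nilpotent operators vanishes: by Engel's theorem its common kernel is a
nonzero stable subspace. -/
lemma eq_bot_of_nilpotent [FiniteDimensional F V] [Nontrivial V] {ρ : Representation F G V}
    (hρ : StronglyIrr ρ) (H : Subgroup G) (hH : H.FiniteIndex) (W : Submodule F (End F V))
    (hs : Stable (adRep ρ) H W) (hW : ∀ X ∈ W, ∀ Y ∈ W, X * Y - Y * X ∈ W)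
    (hnil : ∀ X ∈ W, IsNilpotent X) : W = ⊥ := by
  obtain ⟨v, hv0, hv⟩ := engel_common_kernel W hW hnil
  let K : Submodule F V := ⨅ X : W, LinearMap.ker (X : End F V)
  have hK : ∀ v, v ∈ K ↔ ∀ X ∈ W, X v = 0 := by
    intro v
    simp [K, Submodule.mem_iInf]
  have hKs : Stable ρ H K := by
    intro h hh u hu
    rw [hK] at hu ⊢
    intro X hX
    have h1 := hs h⁻¹ (H.inv_mem hh) X hX
    rw [adRep_apply, inv_inv] at h1
    have h2 := congrArg (ρ h) (hu _ h1)
    have h3 : ∀ w, ρ h (ρ h⁻¹ w) = w := fun w =>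
      congrArg (fun f : End F V => f w) (rho_mul_inv ρ h)
    rwa [Module.End.mul_apply, Module.End.mul_apply, h3, map_zero] at h2
  rcases hρ H hH K hKs with h | h
  · exact absurd ((Submodule.mem_bot F).1 (h ▸ (hK v).2 hv)) hv0
  · rw [Submodule.eq_bot_iff]
    intro X hX
    ext w
    exact (hK w).1 (h ▸ Submodule.mem_top) X hX

/-- A stable commutative Lie algebra of trace-zero operators is nilpotent: by primitivity each of
its elements has a single eigenvalue. -/
lemma nilpotent_of_commuting [CharZero F] [IsAlgClosed F] [FiniteDimensional F V] [Nontrivial V]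
    {ρ : Representation F G V}
    (hρ : StronglyIrr ρ) (H : Subgroup G) (hH : H.FiniteIndex) (W : Submodule F (End F V))
    (hs : Stable (adRep ρ) H W) (hW : ∀ X ∈ W, ∀ Y ∈ W, X * Y - Y * X = 0)
    (htr : ∀ X ∈ W, LinearMap.trace F V X = 0) (X : End F V) (hX : X ∈ W) : IsNilpotent X := by
  have hp : Prim (V := V) (ρ.comp H.subtype) := (hρ.restrict hH).prim
  obtain ⟨μ, hμ⟩ := hp.single_eigenvalue (W : Set (End F V))
    (fun a ha b hb => sub_eq_zero.1 (hW a ha b hb))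
    (fun g a ha => by
      have := hs g g.2 a ha
      rwa [adRep_apply] at this) X hX
  have h1 : IsNilpotent (X - μ • (1 : End F V)) := by
    refine ⟨finrank F V, ?_⟩
    ext v
    have hv : v ∈ X.maxGenEigenspace μ := hμ ▸ Submodule.mem_top
    rw [End.maxGenEigenspace_eq_genEigenspace_finrank, End.mem_genEigenspace_nat,
      LinearMap.mem_ker] at hv
    exact hv
  have h2 := (LinearMap.isNilpotent_trace_of_isNilpotent h1).eq_zero
  rw [map_sub, htr X hX, map_smul, LinearMap.trace_one, zero_sub, neg_eq_zero, smul_eq_mul] at h2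
  have h3 : (finrank F V : F) ≠ 0 := Nat.cast_ne_zero.2 finrank_pos.ne'
  have h4 : μ = 0 := (mul_eq_zero.1 h2).resolve_right h3
  rwa [h4, zero_smul, sub_zero] at h1

lemma trace_conj_rho [FiniteDimensional F V] (ρ : Representation F G V) (g : G) (X : End F V) :
    LinearMap.trace F V (ρ g * X * ρ g⁻¹) = LinearMap.trace F V X := by
  rw [LinearMap.trace_mul_comm, ← mul_assoc, rho_inv_mul, one_mul]

lemma conj_mul_conj (ρ : Representation F G V) (g : G) (X Y : End F V) :
    (ρ g * X * ρ g⁻¹) * (ρ g * Y * ρ g⁻¹) = ρ g * (X * Y) * ρ g⁻¹ := by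
  have : (ρ g * X * ρ g⁻¹) * (ρ g * Y * ρ g⁻¹) = ρ g * X * (ρ g⁻¹ * ρ g) * Y * ρ g⁻¹ := by
    simp only [mul_assoc]
  rw [this, rho_inv_mul, mul_one]
  simp only [mul_assoc]

/-- A representation with a nondegenerate invariant bilinear form has self-dual character. -/
lemma trace_inv_of_form [FiniteDimensional F V] (σ : Representation F G V)
    (B : V →ₗ[F] Dual F V) (hB : Function.Injective B)
    (hinv : ∀ g x y, B (σ g x) (σ g y) = B x y) (g : G) :
    LinearMap.trace F V (σ g⁻¹) = LinearMap.trace F V (σ g) := by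
  let e : V ≃ₗ[F] Dual F V := LinearEquiv.ofInjectiveOfFinrankEq B hB Subspace.dual_finrank_eq.symm
  have h1 : e.conj (σ g⁻¹) = Dual.transpose (R := F) (σ g) := by
    ext f y
    obtain ⟨x, rfl⟩ := e.surjective f
    rw [LinearEquiv.conj_apply_apply, LinearEquiv.symm_apply_apply]
    have h2 := hinv g (σ g⁻¹ x) y
    have h3 : σ g (σ g⁻¹ x) = x := congrArg (fun f : End F V => f x) (rho_mul_inv σ g)
    rw [h3] at h2
    exact h2.symm
  rw [← LinearMap.trace_conj' (σ g⁻¹) e, h1, LinearMap.trace_transpose']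

/-- Core of the construction: a minimal subspace of the ideal generated by a replica is a Lie
algebra with nondegenerate trace form. -/
theorem exists_selfdual_sub [CharZero F] [IsAlgClosed F] [FiniteDimensional F V] [Nontrivial V]
    {ρ : Representation F G V} (hρ : StronglyIrr ρ) (γ : G) (α β : F)
    (hα : End.HasEigenvalue (ρ γ) α) (hβ : End.HasEigenvalue (ρ γ) β)
    (hαβ : ∀ N, 0 < N → α ^ N ≠ β ^ N) :
    ∃ (H : Subgroup G) (_ : H.FiniteIndex) (W : Submodule F (End F V))
      (hs : Stable (adRep ρ) H W), StronglyIrr (subRep (adRep ρ) H W hs) ∧ 2 ≤ finrank F W ∧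
      ∀ h, LinearMap.trace F W (subRep (adRep ρ) H W hs h⁻¹) =
        LinearMap.trace F W (subRep (adRep ρ) H W hs h) := by
  have hne0 : ∀ μ, End.HasEigenvalue (ρ γ) μ → μ ≠ 0 := by
    rintro μ hμ rfl
    obtain ⟨v, hv⟩ := hμ.exists_hasEigenvector
    exact hv.2 (maxGen_zero ρ γ (End.mem_maxGenEigenspace _ _ _ |>.2 ⟨1, by
      have := hv.1
      rw [End.mem_eigenspace_iff] at this
      simp [this]⟩))
  -- `D0` is the trace-zero part of the replica of `ρ γ` attached to `θ`
  obtain ⟨θ, hθ, hθne⟩ := exists_theta α β (hne0 α hα) (hne0 β hβ) hαβ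
  obtain ⟨D, hD⟩ := exists_replica θ (ρ γ)
  let c : F := LinearMap.trace F V D / finrank F V
  have hdF : (finrank F V : F) ≠ 0 := Nat.cast_ne_zero.2 finrank_pos.ne'
  let D0 : End F V := D - c • 1
  have hD0tr : LinearMap.trace F V D0 = 0 := by
    simp only [D0, map_sub, map_smul, LinearMap.trace_one, smul_eq_mul, c]
    field_simp; ring
  have hval : ∀ μ, End.HasEigenvalue (ρ γ) μ → D0 = 0 → ((θ μ : ℚ) : F) = c := by
    intro μ hμ h0
    obtain ⟨v, hv⟩ := hμ.exists_hasEigenvector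
    have h1 : v ∈ End.maxGenEigenspace (ρ γ) μ := (End.mem_maxGenEigenspace _ _ _).2 ⟨1, by
      have := hv.1
      rw [End.mem_eigenspace_iff] at this
      simp [this]⟩
    have h2 := hD μ v h1
    have h3 : D = c • 1 := sub_eq_zero.1 h0
    rw [h3, LinearMap.smul_apply, Module.End.one_apply] at h2
    exact (smul_left_injective F hv.2 h2).symm
  have hD0 : D0 ≠ 0 := by
    intro h0
    have := (hval α hα h0).trans (hval β hβ h0).symm
    exact hθne (Rat.cast_injective this)
  let L : Submodule F (End F V) := Submodule.span F (Set.range fun h : G => ρ h * D0 * ρ h⁻¹)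
  have hL0 : L ≠ ⊥ := by
    intro h
    have h1 : ρ 1 * D0 * ρ 1⁻¹ ∈ L := Submodule.subset_span ⟨1, rfl⟩
    rw [h, Submodule.mem_bot, inv_one, map_one, one_mul, mul_one] at h1
    exact hD0 h1
  have hLs : Stable (adRep ρ) ⊤ L := by
    intro g _ X hX
    have : L ≤ L.comap (adRep ρ g) := by
      rw [Submodule.span_le]
      rintro _ ⟨h, rfl⟩
      refine Submodule.subset_span ⟨g * h, ?_⟩
      simp only [adRep_apply, mul_inv_rev, map_mul, mul_assoc]
    exact this hX
  have hLtr : ∀ X ∈ L, LinearMap.trace F V X = 0 := by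
    have : L ≤ LinearMap.ker (LinearMap.trace F V) := by
      rw [Submodule.span_le]
      rintro _ ⟨h, rfl⟩
      change LinearMap.trace F V _ = 0
      rw [trace_conj_rho, hD0tr]
    exact fun X hX => this hX
  obtain ⟨H, hH, W, hWL, hW0, hs, hmin⟩ := exists_minimal_pair (adRep ρ) L hL0 hLs
  -- a power of each conjugate of `γ` lies in `H`, hence preserves `W`, and then so does its replica
  have hLW : ∀ X ∈ L, ∀ Y ∈ W, X * Y - Y * X ∈ W := by
    intro X hX Y hY
    have : L ≤ W.comap (LinearMap.mulRight F Y - LinearMap.mulLeft F Y) := by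
      rw [Submodule.span_le]
      rintro _ ⟨h, rfl⟩
      change (ρ h * D0 * ρ h⁻¹) * Y - Y * (ρ h * D0 * ρ h⁻¹) ∈ W
      obtain ⟨N, hN, hNH⟩ : ∃ N, 0 < N ∧ (h * γ * h⁻¹) ^ N ∈ H := by
        obtain ⟨N, hN, -, h⟩ := Subgroup.exists_pow_mem_of_index_ne_zero hH.index_ne_zero
          (h * γ * h⁻¹)
        exact ⟨N, hN, h⟩
      have h1 := replica_stable_pow hθ ρ (h * γ * h⁻¹) (hD.conj ρ γ h) W N hN
        (fun X hX => by
          have := hs _ hNH X hX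
          rwa [adRep_apply] at this) Y hY
      have h2 : ρ h * D0 * ρ h⁻¹ = ρ h * D * ρ h⁻¹ - c • 1 := by
        simp only [D0, mul_sub, sub_mul, mul_smul_comm, smul_mul_assoc, mul_one, rho_mul_inv]
      rw [h2]
      convert h1 using 1
      simp only [mul_sub, sub_mul, mul_smul_comm, smul_mul_assoc, mul_one, one_mul]
      abel
    exact this hX
  have hWW : ∀ X ∈ W, ∀ Y ∈ W, X * Y - Y * X ∈ W := fun X hX => hLW X (hWL hX)
  let C : Submodule F (End F V) := Submodule.span F {Z | ∃ X ∈ W, ∃ Y ∈ W, X * Y - Y * X = Z}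
  have hCW : C ≤ W := by
    rw [Submodule.span_le]
    rintro _ ⟨X, hX, Y, hY, rfl⟩
    exact hWW X hX Y hY
  have hCs : Stable (adRep ρ) H C := by
    intro g hg X hX
    have : C ≤ C.comap (adRep ρ g) := by
      rw [Submodule.span_le]
      rintro _ ⟨X, hX, Y, hY, rfl⟩
      refine Submodule.subset_span ⟨_, hs g hg X hX, _, hs g hg Y hY, ?_⟩
      simp only [adRep_apply, conj_mul_conj, mul_sub, sub_mul]
    exact this hX
  -- otherwise `W` is commutative, hence nilpotent, hence zero by Engel
  have hCne : C ≠ ⊥ := by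
    intro hC
    have hcom : ∀ X ∈ W, ∀ Y ∈ W, X * Y - Y * X = 0 := by
      intro X hX Y hY
      have : X * Y - Y * X ∈ C := Submodule.subset_span ⟨X, hX, Y, hY, rfl⟩
      rwa [hC, Submodule.mem_bot] at this
    exact hW0 (eq_bot_of_nilpotent hρ H hH W hs hWW
      (nilpotent_of_commuting hρ H hH W hs hcom fun X hX => hLtr X (hWL hX)))
  have hCeq : C = W := (hmin H hH C hCW hCs).resolve_left hCne
  have hdim : 2 ≤ finrank F W := by
    by_contra hlt
    have h1 : finrank F W ≤ 1 := by omega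
    obtain ⟨w, hw⟩ := finrank_le_one_iff.1 h1
    apply hCne
    rw [Submodule.span_eq_bot]
    rintro _ ⟨X, hX, Y, hY, rfl⟩
    obtain ⟨a, ha⟩ := hw ⟨X, hX⟩
    obtain ⟨b, hb⟩ := hw ⟨Y, hY⟩
    have ha' : a • (w : End F V) = X := congrArg Subtype.val ha
    have hb' : b • (w : End F V) = Y := congrArg Subtype.val hb
    rw [← ha', ← hb']
    simp only [smul_mul_smul_comm, mul_comm a b, sub_self]
  let B0 : End F V →ₗ[F] End F V →ₗ[F] F :=
    (LinearMap.mul F (End F V)).compr₂ (LinearMap.trace F V)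
  have hB0 : ∀ X Y, B0 X Y = LinearMap.trace F V (X * Y) := fun _ _ => rfl
  let B : W →ₗ[F] Dual F W := B0.domRestrict₁₂ W W
  have hBapp : ∀ X Y : W, B X Y = LinearMap.trace F V ((X : End F V) * Y) := fun _ _ => rfl
  have hBinv : ∀ g x y, B (subRep (adRep ρ) H W hs g x) (subRep (adRep ρ) H W hs g y) = B x y := by
    intro g x y
    rw [hBapp, hBapp, subRep_apply, subRep_apply, adRep_apply, adRep_apply, conj_mul_conj,
      trace_conj_rho]
  -- by minimality the radical of the trace form is `0` or `W`; the latter contradicts the Cartan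
  -- criterion since `W = [W, W]`
  have hBinj : Function.Injective B := by
    let R : Submodule F (End F V) := (LinearMap.ker B).map W.subtype
    have hRW : R ≤ W := Submodule.map_subtype_le _ _
    have hRs : Stable (adRep ρ) H R := by
      rintro g hg _ ⟨x, hx, rfl⟩
      refine ⟨subRep (adRep ρ) H W hs ⟨g, hg⟩ x, ?_, rfl⟩
      change B _ = 0
      ext y
      have h1 := hBinv ⟨g, hg⟩ x (subRep (adRep ρ) H W hs ⟨g, hg⟩⁻¹ y)
      have h2 : subRep (adRep ρ) H W hs ⟨g, hg⟩ (subRep (adRep ρ) H W hs ⟨g, hg⟩⁻¹ y) = y :=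
        congrArg (fun f : End F W => f y) (rho_mul_inv (subRep (adRep ρ) H W hs) ⟨g, hg⟩)
      have h3 : B x = 0 := hx
      rw [h2, h3] at h1
      exact h1
    rcases hmin H hH R hRW hRs with h | h
    · rw [← LinearMap.ker_eq_bot]
      apply Submodule.map_injective_of_injective W.subtype_injective
      rw [Submodule.map_bot]; exact h
    · exfalso
      apply hW0
      refine eq_bot_of_nilpotent hρ H hH W hs hWW (cartan_nilpotent W hWW hCeq.ge ?_)
      intro X hX Y hY
      rw [← h] at hX
      obtain ⟨x, hx, rfl⟩ := hX
      have hx' : B x = 0 := hx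
      exact congrArg (fun f : Dual F W => f ⟨Y, hY⟩) hx'
  exact ⟨H, hH, W, hs, stronglyIrr_subRep _ H hH W hs hmin, hdim,
    trace_inv_of_form _ B hBinj hBinv⟩

end selfdual

end LinRank

/-! ### Specialization to a number field -/

namespace LinRank
open Module Polynomial

/-- On a finitely generated `ℚ`-domain, an element which is not a root of unity stays so at some
closed point. -/
lemma exists_closed_point (B : Type*) [CommRing B] [IsDomain B] [Algebra ℚ B]
    [Algebra.FiniteType ℚ B] (z : B) (hz : ∀ N : ℕ, 0 < N → z ^ N ≠ 1) :
    ∃ m : Ideal B, m.IsMaximal ∧ ∀ N : ℕ, 0 < N → z ^ N - 1 ∉ m := by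
  by_cases halg : IsAlgebraic ℚ z
  · obtain ⟨m, hm⟩ := Ideal.exists_maximal B
    refine ⟨m, hm, fun N hN hmem => ?_⟩
    have hintg : IsIntegral ℚ (z ^ N - 1) := (halg.isIntegral.pow N).sub isIntegral_one
    have h1 : aeval (Ideal.Quotient.mkₐ ℚ m (z ^ N - 1)) (minpoly ℚ (z ^ N - 1)) = 0 := by
      rw [aeval_algHom_apply, minpoly.aeval, map_zero]
    have h2 : Ideal.Quotient.mkₐ ℚ m (z ^ N - 1) = 0 := Ideal.Quotient.eq_zero_iff_mem.2 hmem
    rw [h2, ← coeff_zero_eq_aeval_zero', ] at h1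
    have h3 : (minpoly ℚ (z ^ N - 1)).coeff 0 = 0 := by
      have : Nontrivial (B ⧸ m) := Ideal.Quotient.nontrivial_iff.2 hm.ne_top
      exact (algebraMap ℚ (B ⧸ m)).injective (by rw [h1, map_zero])
    rw [minpoly.coeff_zero_eq_zero hintg, sub_eq_zero] at h3
    exact hz N hN h3
  · have htr : Transcendental ℚ z := halg
    let _ : Algebra ℚ[X] B := (aeval (R := ℚ) z).toAlgebra
    have hmap : ∀ p : ℚ[X], algebraMap ℚ[X] B p = aeval z p := fun p => rfl
    have htower : IsScalarTower ℚ ℚ[X] B := IsScalarTower.of_algebraMap_eq fun r => by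
      rw [hmap]; simp
    have hinj : Function.Injective (algebraMap ℚ[X] B) := transcendental_iff_injective.1 htr
    have hfs : FaithfulSMul ℚ[X] B := (faithfulSMul_iff_algebraMap_injective _ _).2 hinj
    have htf : Module.IsTorsionFree ℚ[X] B := inferInstance
    have hflat : Module.Flat ℚ[X] B := inferInstance
    have hft : Algebra.FiniteType ℚ[X] B := Algebra.FiniteType.of_restrictScalars_finiteType ℚ _ _
    have hfp : Algebra.FinitePresentation ℚ[X] B := Algebra.FinitePresentation.of_finiteType.1 hft
    have hopen := PrimeSpectrum.isOpenMap_comap_of_hasGoingDown_of_finitePresentation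
      (R := ℚ[X]) (S := B)
    have hU := hopen _ isOpen_univ
    have hbot : (⟨⊥, Ideal.isPrime_bot⟩ : PrimeSpectrum ℚ[X]) ∈
        PrimeSpectrum.comap (algebraMap ℚ[X] B) '' Set.univ := by
      refine ⟨⟨⊥, Ideal.isPrime_bot⟩, trivial, ?_⟩
      ext p
      simp only [PrimeSpectrum.comap_asIdeal, Ideal.mem_comap, Ideal.mem_bot]
      exact map_eq_zero_iff _ hinj
    obtain ⟨_, ⟨_, ⟨s, rfl⟩, rfl⟩, hs, hsub⟩ :=
      PrimeSpectrum.isBasis_basic_opens.exists_subset_of_mem_open hbot hU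
    have hs0 : s ≠ 0 := fun h => hs (by rw [h]; exact Submodule.zero_mem _)
    -- an integer `a ≥ 2` avoiding the finitely many zeros of `s`
    obtain ⟨a, ha2, has⟩ : ∃ a : ℕ, 2 ≤ a ∧ s.eval (a : ℚ) ≠ 0 := by
      have hinf : (((↑) : ℕ → ℚ) '' Set.Ici 2).Infinite :=
        (Set.Ici_infinite 2).image Nat.cast_injective.injOn
      obtain ⟨_, ⟨a, ha, rfl⟩, h⟩ := hinf.exists_notMem_finset s.roots.toFinset
      refine ⟨a, ha, fun h0 => h ?_⟩
      rw [Multiset.mem_toFinset, mem_roots hs0]; exact h0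
    have hpr : (Ideal.span {X - C (a : ℚ)}).IsPrime :=
      (Ideal.span_singleton_prime (X_sub_C_ne_zero _)).2 (prime_X_sub_C _)
    have hmem : (⟨_, hpr⟩ : PrimeSpectrum ℚ[X]) ∈ PrimeSpectrum.basicOpen s := by
      change s ∉ Ideal.span {X - C (a : ℚ)}
      rw [Ideal.mem_span_singleton, dvd_iff_isRoot]
      exact has
    obtain ⟨q, -, hq⟩ := hsub hmem
    have hqz : z - (a : B) ∈ q.asIdeal := by
      have h1 : X - C (a : ℚ) ∈ (PrimeSpectrum.comap (algebraMap ℚ[X] B) q).asIdeal := by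
        rw [hq]; exact Ideal.mem_span_singleton_self _
      rw [PrimeSpectrum.comap_asIdeal, Ideal.mem_comap, hmap] at h1
      simpa using h1
    obtain ⟨m, hm, hqm⟩ := Ideal.exists_le_maximal q.asIdeal q.isPrime.ne_top
    refine ⟨m, hm, fun N hN hmem => ?_⟩
    have : Nontrivial (B ⧸ m) := Ideal.Quotient.nontrivial_iff.2 hm.ne_top
    have hchar : CharZero (B ⧸ m) := algebraRat.charZero _
    have h1 : (Ideal.Quotient.mk m z) = (a : B ⧸ m) := by
      rw [← map_natCast (Ideal.Quotient.mk m), Ideal.Quotient.eq]; exact hqm hqz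
    have h2 : (Ideal.Quotient.mk m z) ^ N = 1 := by
      rw [← map_pow, ← map_one (Ideal.Quotient.mk m), Ideal.Quotient.eq]; exact hmem
    rw [h1] at h2
    have h3 : a ^ N = 1 := by exact_mod_cast h2
    exact absurd h3 (Nat.one_lt_pow hN.ne' (by omega)).ne'

/-- The determinant whose non-vanishing says that the matrices `φ (e i)` form a basis. -/
noncomputable def entryDet {G R : Type*} [Group G] [CommRing R] {d : ℕ}
    (φ : G →* Matrix (Fin d) (Fin d) R) (e : Fin d × Fin d → G) : R :=
  (Matrix.of fun i ab : Fin d × Fin d => φ (e i) ab.1 ab.2).det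

/-- Push a matrix representation along a ring homomorphism. -/
noncomputable def mapRep {G R S : Type*} [Group G] [CommRing R] [CommRing S] {d : ℕ} (f : R →+* S)
    (φ : G →* Matrix (Fin d) (Fin d) R) : G →* Matrix (Fin d) (Fin d) S :=
  (RingHom.mapMatrix f).toMonoidHom.comp φ

section mapRep
variable {G R S : Type*} [Group G] [CommRing R] [CommRing S] {d : ℕ} (f : R →+* S)
    (φ : G →* Matrix (Fin d) (Fin d) R)

lemma mapRep_apply (g : G) : mapRep f φ g = (φ g).map f := rfl

lemma trace_mapRep (g : G) : (mapRep f φ g).trace = f (φ g).trace := by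
  rw [mapRep_apply]; exact (AddMonoidHom.map_trace f.toAddMonoidHom (φ g)).symm

lemma entryDet_mapRep (e : Fin d × Fin d → G) : entryDet (mapRep f φ) e = f (entryDet φ e) := by
  rw [entryDet, entryDet, RingHom.map_det]; rfl

lemma charpoly_mapRep_root (g : G) {α : R} (h : (φ g).charpoly.IsRoot α) :
    (mapRep f φ g).charpoly.IsRoot (f α) := by
  rw [mapRep_apply, Matrix.charpoly_map]; exact h.map

end mapRep

/-- Specialization of a linear group in characteristic zero to a number field. -/
theorem exists_specialization.{u} {F : Type u} [Field F] [CharZero F] {G : Type*} [Group G]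
    [Group.FG G] {d : ℕ} (φ : G →* Matrix (Fin d) (Fin d) F)
    (hsd : ∀ g, (φ g⁻¹).trace = (φ g).trace) (e : Fin d × Fin d → G) (he : entryDet φ e ≠ 0)
    (γ : G) (α β : F) (hα : (φ γ).charpoly.IsRoot α) (hβ : (φ γ).charpoly.IsRoot β)
    (hαβ : ∀ N, 0 < N → α ^ N ≠ β ^ N) :
    ∃ (K : Type u) (_ : Field K) (_ : NumberField K) (ψ : G →* Matrix (Fin d) (Fin d) K),
      (∀ g, (ψ g⁻¹).trace = (ψ g).trace) ∧ entryDet ψ e ≠ 0 ∧ ∃ α β : K,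
        (ψ γ).charpoly.IsRoot α ∧ (ψ γ).charpoly.IsRoot β ∧ ∀ N, 0 < N → α ^ N ≠ β ^ N := by
  classical
  have hαβ0 : α ≠ 0 ∧ β ≠ 0 := by
    have h1 : φ γ * φ γ⁻¹ = 1 := by rw [← map_mul, mul_inv_cancel, map_one]
    exact ⟨(charpoly_root_inv h1 hα).1, (charpoly_root_inv h1 hβ).1⟩
  obtain ⟨R, hR, hE, hent⟩ := exists_entry_ring ℚ φ {α, β, β⁻¹, (entryDet φ e)⁻¹}
  let χ := descend R φ hent
  have hχ : mapRep (algebraMap R F) χ = φ := by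
    ext g i j; rfl
  have hft : Algebra.FiniteType ℚ R := (Subalgebra.fg_iff_finiteType R).1 hR
  let a : R := ⟨α, hE _ (by simp)⟩
  let b : R := ⟨β, hE _ (by simp)⟩
  let b' : R := ⟨β⁻¹, hE _ (by simp)⟩
  let δ' : R := ⟨(entryDet φ e)⁻¹, hE _ (by simp)⟩
  have hbb : b * b' = 1 := Subtype.ext (mul_inv_cancel₀ hαβ0.2)
  have hinj : Function.Injective (algebraMap R F) := Subtype.val_injective
  have hδ : entryDet χ e * δ' = 1 := by
    apply hinj
    rw [map_mul, ← entryDet_mapRep, hχ, map_one]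
    exact mul_inv_cancel₀ he
  obtain ⟨m, hm, hmz⟩ := exists_closed_point R (a * b') (by
    intro N hN h
    refine hαβ N hN ?_
    have h1 : a ^ N = b ^ N := by
      have := congrArg (· * b ^ N) h
      simp only [mul_pow, one_mul] at this
      rwa [mul_assoc, ← mul_pow, mul_comm b' b, hbb, one_pow, mul_one] at this
    exact congrArg Subtype.val h1)
  let K := R ⧸ m
  let iK : Field K := Ideal.Quotient.field m
  have : Algebra.FiniteType ℚ K := inferInstance
  have hfin : Module.Finite ℚ K := finite_of_finite_type_of_isJacobsonRing ℚ K
  have hcz : CharZero K := algebraRat.charZero _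
  have hnf : NumberField K := by
    refine @NumberField.mk K _ hcz ?_
    convert hfin
    exact Subsingleton.elim _ _
  let f : R →+* K := Ideal.Quotient.mk m
  have hroot : ∀ x : R, (φ γ).charpoly.IsRoot (x : F) → (mapRep f χ γ).charpoly.IsRoot (f x) := by
    intro x hx
    apply charpoly_mapRep_root
    rw [← hχ, mapRep_apply, Matrix.charpoly_map] at hx
    exact IsRoot.of_map (f := algebraMap R F) (x := x) hx hinj
  refine ⟨K, iK, hnf, mapRep f χ, ?_, ?_, f a, f b, hroot a hα, hroot b hβ, ?_⟩
  · intro g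
    rw [trace_mapRep, trace_mapRep]
    congr 1
    apply hinj
    rw [← trace_mapRep, ← trace_mapRep, hχ, hsd]
  · rw [entryDet_mapRep]
    have h1 := congrArg f hδ
    rw [map_mul, map_one] at h1
    exact left_ne_zero_of_mul_eq_one h1
  · intro N hN h
    refine hmz N hN ?_
    rw [← Ideal.Quotient.eq_zero_iff_mem]
    change f _ = 0
    rw [map_sub, map_pow, map_mul, mul_pow, h, ← mul_pow, ← map_mul, hbb, map_one, one_pow, sub_self]

end LinRank

/-! ### The arithmetic datum -/

namespace LinRank
open Module Polynomial

/-- The action of a matrix representation on column vectors. -/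
noncomputable def repOf {G k : Type*} [Group G] [Field k] {d : ℕ}
    (φ : G →* Matrix (Fin d) (Fin d) k) : Representation k G (Fin d → k) :=
  (Matrix.toLinAlgEquiv' (R := k) (n := Fin d)).toRingEquiv.toRingHom.toMonoidHom.comp φ

section span
variable {G k : Type*} [Group G] [Field k] {d : ℕ} (φ : G →* Matrix (Fin d) (Fin d) k)

lemma repOf_apply (g : G) (v : Fin d → k) : repOf φ g v = (φ g).mulVec v := rfl

lemma trace_repOf (g : G) : LinearMap.trace k _ (repOf φ g) = (φ g).trace :=
  Matrix.trace_toLin'_eq (φ g)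

lemma span_of_entryDet (e : Fin d × Fin d → G) (he : entryDet φ e ≠ 0) :
    Submodule.span k (Set.range fun i => φ (e i)) = ⊤ := by
  have h1 : LinearIndependent k
      (Matrix.of fun i ab : Fin d × Fin d => φ (e i) ab.1 ab.2).row :=
    Matrix.linearIndependent_rows_iff_isUnit.2
      ((Matrix.isUnit_iff_isUnit_det _).2 (IsUnit.mk0 _ he))
  have h2 : LinearIndependent k fun i => φ (e i) := by
    let c : Matrix (Fin d) (Fin d) k →ₗ[k] (Fin d × Fin d → k) :=
      { toFun := fun M ab => M ab.1 ab.2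
        map_add' := fun _ _ => rfl
        map_smul' := fun _ _ => rfl }
    exact LinearIndependent.of_comp c h1
  apply h2.span_eq_top_of_card_eq_finrank'
  simp [Module.finrank_matrix]

/-- A subgroup containing elements whose matrices span all matrices acts irreducibly. -/
lemma stable_trivial (e : Fin d × Fin d → G) (he : entryDet φ e ≠ 0) (T : Subgroup G)
    (hT : ∀ i, e i ∈ T) (U : Submodule k (Fin d → k)) (hU : Stable (repOf φ) T U) :
    U = ⊥ ∨ U = ⊤ := by
  by_cases h0 : U = ⊥
  · exact Or.inl h0
  right
  obtain ⟨u, hu, hu0⟩ := U.ne_bot_iff.1 h0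
  have hall : ∀ M : Matrix (Fin d) (Fin d) k, M.mulVec u ∈ U := by
    have h1 : Submodule.span k (Set.range fun i => φ (e i)) ≤
        U.comap ((Matrix.mulVecBilin k k).flip u) := by
      rw [Submodule.span_le]
      rintro _ ⟨i, rfl⟩
      exact hU _ (hT i) u hu
    rw [span_of_entryDet φ e he] at h1
    exact fun M => h1 (Submodule.mem_top : M ∈ ⊤)
  obtain ⟨i, hi⟩ : ∃ i, u i ≠ 0 := Function.ne_iff.1 hu0
  rw [Submodule.eq_top_iff']
  intro v
  have h2 := hall (Matrix.vecMulVec v (Pi.single i (u i)⁻¹))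
  rw [Matrix.vecMulVec_mulVec] at h2
  simpa [hi] using h2

end span

/-- Basis elements inside a finite-index subgroup. -/
lemma exists_entryDet {F : Type*} [Field F] [IsAlgClosed F] {G : Type*} [Group G] {d : ℕ}
    [NeZero d] (σ : Representation F G (Fin d → F)) (hσ : StronglyIrr σ) (G₁ : Subgroup G)
    (hG : G₁.FiniteIndex) : ∃ e : Fin d × Fin d → G, (∀ i, e i ∈ G₁) ∧ entryDet (matOf σ) e ≠ 0 := by
  classical
  have h1 := burnside_rep σ G₁ (hσ G₁ hG)
  let c : End F (Fin d → F) ≃ₗ[F] (Fin d × Fin d → F) :=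
    (LinearMap.toMatrix' (R := F) (m := Fin d) (n := Fin d)).trans
      (LinearEquiv.curry F F (Fin d) (Fin d)).symm
  have hc : ∀ g ab, c (σ g) ab = matOf σ g ab.1 ab.2 := fun g ab => rfl
  obtain ⟨b, hbs, hb, hli⟩ := exists_linearIndependent F (σ '' (G₁ : Set G))
  rw [h1] at hb
  let B : Basis b F (End F (Fin d → F)) := Basis.mk hli (by rw [Subtype.range_coe, hb])
  have hfinb : Finite b := Module.Finite.finite_basis B
  let _ := Fintype.ofFinite b
  have hcard : Fintype.card b = Fintype.card (Fin d × Fin d) := by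
    rw [← finrank_eq_card_basis B, c.finrank_eq]; simp
  let eq : Fin d × Fin d ≃ b := (Fintype.equivOfCardEq hcard).symm
  choose e heG heb using fun i : Fin d × Fin d => hbs (eq i).2
  refine ⟨e, heG, ?_⟩
  have hli2 : LinearIndependent F fun i => c (σ (e i)) := by
    have h3 := (hli.comp eq eq.injective).map' c.toLinearMap c.ker
    have h6 : (c.toLinearMap ∘ Subtype.val ∘ eq) = fun i => c (σ (e i)) := by
      ext i : 1
      simp [heb]
    rw [h6] at h3
    exact h3
  have h4 : (Matrix.of fun i ab : Fin d × Fin d => matOf σ (e i) ab.1 ab.2).row =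
      fun i => c (σ (e i)) := by ext i ab; rfl
  have h5 := Matrix.linearIndependent_rows_iff_isUnit.1 (h4 ▸ hli2)
  exact ((Matrix.isUnit_iff_isUnit_det _).1 h5).ne_zero

/-- The arithmetic input extracted from a linear group: a self-dual representation over a number
field whose restriction to the intersection of all subgroups of index at most `d ^ d` is absolutely
irreducible (witnessed by `e`), together with an element having two eigenvalues whose quotient is
not a root of unity. -/
structure Datum (G : Type*) [Group G] (d : ℕ) (K : Type*) [Field K] where
  ψ : G →* Matrix (Fin d) (Fin d) K
  selfdual : ∀ g, (ψ g⁻¹).trace = (ψ g).trace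
  two_le : 2 ≤ d
  e : Fin d × Fin d → G
  small : ∀ T : Subgroup G, T.index ≠ 0 → T.index ≤ d ^ d → ∀ i, e i ∈ T
  det_ne : entryDet ψ e ≠ 0
  γ : G
  α : K
  β : K
  hα : (ψ γ).charpoly.IsRoot α
  hβ : (ψ γ).charpoly.IsRoot β
  hαβ : ∀ N : ℕ, 0 < N → α ^ N ≠ β ^ N

lemma hasEigenvalue_of_matOf {F : Type*} [Field F] {G : Type*} [Group G] {d : ℕ}
    (σ : Representation F G (Fin d → F)) (g : G) (α : F) (h : (matOf σ g).charpoly.IsRoot α) :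
    End.HasEigenvalue (σ g) α := by
  rw [Module.End.hasEigenvalue_iff_isRoot_charpoly]
  rw [matOf_apply] at h
  have := LinearMap.charpoly_toMatrix (σ g) (Pi.basisFun F (Fin d))
  rw [LinearMap.toMatrix_eq_toMatrix'] at this
  rwa [← this]

/-- Coordinates for a finite-dimensional strongly irreducible representation. -/
lemma exists_coordinates {F : Type*} [Field F] {G : Type*} [Group G] {V : Type*} [AddCommGroup V]
    [Module F V] [FiniteDimensional F V] (τ : Representation F G V) (hirr : StronglyIrr τ)
    (htr : ∀ h, LinearMap.trace F V (τ h⁻¹) = LinearMap.trace F V (τ h)) :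
    ∃ σ : Representation F G (Fin (finrank F V) → F), StronglyIrr σ ∧
      ∀ h, (matOf σ h⁻¹).trace = (matOf σ h).trace := by
  let b : V ≃ₗ[F] (Fin (finrank F V) → F) := (finBasis F V).equivFun
  refine ⟨conjRep τ b, hirr.conjRep b, fun h => ?_⟩
  have hc : ∀ h, conjRep τ b h = b.conj (τ h) := fun h => rfl
  rw [trace_matOf, trace_matOf, hc, hc, LinearMap.trace_conj', LinearMap.trace_conj', htr]

/-- A strongly irreducible representation of dimension at least `2` in characteristic zero gives,
on a finite-index subgroup, a self-dual one defined over a number field. -/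
theorem exists_datum.{u} {F : Type u} [Field F] [CharZero F] [IsAlgClosed F] {G : Type*} [Group G]
    [Group.FG G] {d : ℕ} (hd : 2 ≤ d) (ρ : Representation F G (Fin d → F)) (hρ : StronglyIrr ρ) :
    ∃ (H : Subgroup G) (_ : H.FiniteIndex) (d' : ℕ) (K : Type u) (_ : Field K) (_ : NumberField K),
      Nonempty (Datum H d' K) := by
  have : NeZero d := ⟨by omega⟩
  obtain ⟨γ, α, β, hα, hβ, hαβ⟩ := burnside_schur ρ hρ hd
  obtain ⟨H, hH, W, hs, hirr, hdim, htr⟩ := exists_selfdual_sub hρ γ α β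
    (hasEigenvalue_of_matOf ρ γ α hα) (hasEigenvalue_of_matOf ρ γ β hβ) hαβ
  let d' := finrank F W
  have : NeZero d' := ⟨by omega⟩
  obtain ⟨σ, hσ, hσtr⟩ := exists_coordinates _ hirr htr
  have hHfg : Group.FG H := inferInstance
  obtain ⟨γ', α', β', hα', hβ', hαβ'⟩ := burnside_schur σ hσ hdim
  obtain ⟨G₁, hG₁, hsmall⟩ := exists_small H (d' ^ d')
  obtain ⟨e, he, hdet⟩ := exists_entryDet σ hσ G₁ hG₁
  obtain ⟨K, _, _, ψ, h1, h2, a, b, h3, h4, h5⟩ :=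
    exists_specialization (matOf σ) hσtr e hdet γ' α' β' hα' hβ' hαβ'
  exact ⟨H, hH, d', K, _, ‹_›, ⟨⟨ψ, h1, hdim, e, fun T h0 hT i => hsmall T h0 hT (he i), h2, γ',
    a, b, h3, h4, h5⟩⟩⟩

end LinRank

/-! ### A place separating two algebraic numbers -/

namespace LinRank
open Module Polynomial

lemma norm_coeff_le_one {L : Type*} [NormedField L] [IsUltrametricDist L] [IsAlgClosed L]
    (f : L[X]) (hf : f.Monic) (h : ∀ z, f.IsRoot z → ‖z‖ ≤ 1) (i : ℕ) : ‖f.coeff i‖ ≤ 1 := by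
  have hs : f.Splits := IsAlgClosed.splits f
  have hp := hs.eq_prod_roots_of_monic hf
  have key : ∀ s : Multiset L, (∀ z ∈ s, ‖z‖ ≤ 1) →
      ∀ i, ‖((s.map fun a => X - C a).prod).coeff i‖ ≤ 1 := by
    intro s
    induction s using Multiset.induction with
    | empty =>
      intro _ i
      simp only [Multiset.map_zero, Multiset.prod_zero, coeff_one]
      split_ifs <;> simp
    | cons a s ih =>
      intro h i
      have ih' := ih fun z hz => h z (Multiset.mem_cons_of_mem hz)
      have ha := h a (Multiset.mem_cons_self a s)
      rw [Multiset.map_cons, Multiset.prod_cons, sub_mul, coeff_sub, coeff_C_mul]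
      rw [sub_eq_add_neg]
      refine (IsUltrametricDist.norm_add_le_max _ _).trans (max_le ?_ ?_)
      · cases i with
        | zero => simp
        | succ i => rw [coeff_X_mul]; exact ih' i
      · rw [norm_neg, norm_mul]
        exact mul_le_one₀ ha (norm_nonneg _) (ih' i)
  rw [hp]
  refine key _ (fun z hz => h z ?_) i
  exact (mem_roots'.1 hz).2

/-- Two algebraic numbers whose ratio is not a root of unity have different absolute values
at some place, archimedean (Kronecker's theorem) or not (when the ratio is not integral). -/
lemma exists_place {K : Type*} [Field K] [NumberField K] (α β : K) (hβ : β ≠ 0)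
    (h : ∀ N : ℕ, 0 < N → α ^ N ≠ β ^ N) :
    ∃ (L : Type) (_ : NormedField L) (_ : IsAlgClosed L) (τ : K →+* L), ‖τ α‖ ≠ ‖τ β‖ := by
  set ζ := α / β with hζ
  have hred : ∀ (L : Type) (_ : NormedField L) (τ : K →+* L), ‖τ ζ‖ ≠ 1 → ‖τ α‖ ≠ ‖τ β‖ := by
    intro L _ τ h1 h2
    apply h1
    rw [hζ, map_div₀, norm_div, h2, div_self]
    simpa using hβ
  by_cases hintg : IsIntegral ℤ ζ
  · by_contra hcon
    push Not at hcon
    have hall : ∀ φ : K →+* ℂ, ‖φ ζ‖ = 1 := by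
      intro φ
      by_contra h1
      exact hred ℂ _ φ h1 (hcon ℂ _ inferInstance φ)
    obtain ⟨N, hN, hz⟩ := NumberField.Embeddings.pow_eq_one_of_norm_eq_one K ℂ hintg hall
    apply h N hN
    rw [hζ, div_pow, div_eq_one_iff_eq (pow_ne_zero _ hβ)] at hz
    exact hz
  · have hi : IsIntegral ℚ ζ := Algebra.IsIntegral.isIntegral ζ
    have hco : ∃ i, ((minpoly ℚ ζ).coeff i).den ≠ 1 := by
      by_contra hcon
      push Not at hcon
      apply hintg
      have hl : minpoly ℚ ζ ∈ lifts (Int.castRingHom ℚ) := by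
        rw [lifts_iff_coeff_lifts]
        intro i
        exact ⟨((minpoly ℚ ζ).coeff i).num, by simpa using Rat.coe_int_num_of_den_eq_one (hcon i)⟩
      obtain ⟨q, hq, -, hqm⟩ := lifts_and_degree_eq_and_monic hl (minpoly.monic hi)
      refine ⟨q, hqm, ?_⟩
      have h0 := minpoly.aeval ℚ ζ
      rw [← hq, aeval_def, eval₂_map] at h0
      rw [← h0]
      congr 1
      exact RingHom.ext_int _ _
    obtain ⟨i, hi1⟩ := hco
    obtain ⟨p, hp, hpd⟩ := Nat.exists_prime_and_dvd hi1
    have : Fact p.Prime := ⟨hp⟩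
    have hc : ¬ ‖(((minpoly ℚ ζ).coeff i : ℚ) : ℚ_[p])‖ ≤ 1 := by
      rw [Padic.norm_rat_le_one_iff_padicValuation_le_one, Rat.padicValuation_le_one_iff]
      simpa using hpd
    have hroot : ∃ z : PadicAlgCl p, aeval z (minpoly ℚ ζ) = 0 ∧ 1 < ‖z‖ := by
      by_contra hcon
      push Not at hcon
      apply hc
      have := norm_coeff_le_one ((minpoly ℚ ζ).map (algebraMap ℚ (PadicAlgCl p)))
        ((minpoly.monic hi).map _) (fun z hz => hcon z (by
          rwa [IsRoot, eval_map_algebraMap] at hz)) i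
      rw [coeff_map] at this
      rw [← PadicAlgCl.norm_extends]
      convert this using 2
      simp
    obtain ⟨z, hz, hz1⟩ := hroot
    obtain ⟨τ, hτ⟩ := IntermediateField.exists_algHom_of_splits_of_aeval (F := ℚ) (E := K)
      (K := PadicAlgCl p) (x := ζ) (y := z)
      (fun s => ⟨Algebra.IsIntegral.isIntegral s, IsAlgClosed.splits _⟩) hz
    refine ⟨PadicAlgCl p, inferInstance, inferInstance, τ.toRingHom, hred _ _ _ ?_⟩
    change ‖τ ζ‖ ≠ 1
    rw [hτ]
    exact hz1.ne'

end LinRank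

/-! ### Growth of orbits and spectral splittings -/

namespace LinRank
open Module

section growth
variable {L V : Type*} [NormedField L] [NormedAddCommGroup V] [NormedSpace L V]

/-- The vectors whose orbit under `T` grows at most like `q ^ N`. -/
def slow (T : End L V) (q : ℝ) (_hq : 0 < q) : Submodule L V where
  carrier := {v | ∃ C : ℝ, 0 ≤ C ∧ ∀ N : ℕ, ‖(T ^ N) v‖ ≤ C * q ^ N}
  zero_mem' := ⟨0, le_rfl, fun N => by simp⟩
  add_mem' := by
    rintro v w ⟨C, hC, h⟩ ⟨C', hC', h'⟩
    refine ⟨C + C', add_nonneg hC hC', fun N => ?_⟩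
    rw [map_add, add_mul]
    exact (norm_add_le _ _).trans (add_le_add (h N) (h' N))
  smul_mem' := by
    rintro c v ⟨C, hC, h⟩
    refine ⟨‖c‖ * C, by positivity, fun N => ?_⟩
    rw [map_smul, norm_smul, mul_assoc]
    exact mul_le_mul_of_nonneg_left (h N) (norm_nonneg _)

/-- Jordan blocks only contribute polynomial factors, so a generalized eigenvector with
`‖μ‖ < q` grows slower than `q ^ N`. -/
lemma maxGen_le_slow (T : End L V) (q : ℝ) (hq : 0 < q) (μ : L) (hμ : ‖μ‖ < q) :
    End.maxGenEigenspace T μ ≤ slow T q hq := by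
  have key : ∀ (k : ℕ) (v : V), ((T - μ • (1 : End L V)) ^ k) v = 0 → v ∈ slow T q hq := by
    intro k
    induction k with
    | zero =>
      intro v hv
      have : v = 0 := by simpa using hv
      rw [this]; exact Submodule.zero_mem _
    | succ k ih =>
      intro v hv
      rw [pow_succ, Module.End.mul_apply] at hv
      obtain ⟨C, hC, h⟩ := ih _ hv
      have hpos : 0 < q - ‖μ‖ := sub_pos.2 hμ
      set C' := max ‖v‖ (C / (q - ‖μ‖)) with hC'
      have h1 : C ≤ (q - ‖μ‖) * C' := by
        rw [mul_comm, ← div_le_iff₀ hpos]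
        exact le_max_right _ _
      refine ⟨C', le_max_of_le_left (norm_nonneg _), fun N => ?_⟩
      induction N with
      | zero => rw [pow_zero, pow_zero, mul_one]; exact le_max_left ‖v‖ (C / (q - ‖μ‖))
      | succ N ihN =>
        have h2 : (T ^ (N + 1)) v
            = μ • (T ^ N) v + (T ^ N) ((T - μ • (1 : End L V)) v) := by
          rw [LinearMap.sub_apply, map_sub, LinearMap.smul_apply, map_smul, pow_succ,
            Module.End.mul_apply, Module.End.one_apply]
          abel
        have hqN : 0 < q ^ N := by positivity
        calc ‖(T ^ (N + 1)) v‖ ≤ ‖μ‖ * ‖(T ^ N) v‖ + C * q ^ N := by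
              rw [h2]
              refine (norm_add_le _ _).trans (add_le_add ?_ (h N))
              rw [norm_smul]
          _ ≤ ‖μ‖ * (C' * q ^ N) + ((q - ‖μ‖) * C') * q ^ N := by
              gcongr
          _ = C' * q ^ (N + 1) := by ring
  intro v hv
  obtain ⟨k, hk⟩ := (End.mem_maxGenEigenspace T μ v).1 hv
  exact key k v hk

end growth

section coords
variable {L : Type*} [NormedField L] {d : ℕ}

lemma slow_uniform {T A : End L (Fin d → L)} {q : ℝ} {hq : 0 < q} (h : ∀ x, A x ∈ slow T q hq) :
    ∃ C : ℝ, 0 ≤ C ∧ ∀ (N : ℕ) x, ‖(T ^ N) (A x)‖ ≤ C * q ^ N * ‖x‖ := by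
  choose C hC hb using fun i : Fin d => h (Pi.single i 1)
  refine ⟨∑ i, C i, Finset.sum_nonneg fun i _ => hC i, fun N x => ?_⟩
  have hx : (T ^ N) (A x) = ∑ i, x i • (T ^ N) (A (Pi.single i 1)) := by
    have := LinearMap.pi_apply_eq_sum_univ ((T ^ N) ∘ₗ A) x
    have he : ∀ i : Fin d, (fun j => if i = j then (1 : L) else 0) = Pi.single i 1 := by
      intro i; ext j; simp [Pi.single_apply, eq_comm]
    simpa [he] using this
  rw [hx, Finset.sum_mul, Finset.sum_mul]
  refine norm_sum_le_of_le _ fun i _ => ?_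
  rw [norm_smul, mul_comm]
  exact mul_le_mul (hb i N) (norm_le_pi_norm x i) (norm_nonneg _)
    (mul_nonneg (hC i) (by positivity))

lemma exists_bound (A : End L (Fin d → L)) : ∃ C : ℝ, 0 ≤ C ∧ ∀ x, ‖A x‖ ≤ C * ‖x‖ := by
  have h : ∀ x, A x ∈ slow (1 : End L (Fin d → L)) 1 one_pos := fun x =>
    ⟨‖A x‖, norm_nonneg _, fun N => by simp⟩
  obtain ⟨C, hC, hb⟩ := slow_uniform h
  exact ⟨C, hC, fun x => by simpa using hb 0 x⟩

lemma maxGen_inv {L V : Type*} [Field L] [AddCommGroup V] [Module L V] (T T' : End L V)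
    (h : T * T' = 1) (h' : T' * T = 1) (μ : L) (hμ : μ ≠ 0) :
    End.maxGenEigenspace T μ ≤ End.maxGenEigenspace T' μ⁻¹ := by
  intro v hv
  obtain ⟨k, hk⟩ := (End.mem_maxGenEigenspace T μ v).1 hv
  refine (End.mem_maxGenEigenspace T' μ⁻¹ v).2 ⟨k, ?_⟩
  have e : T' - μ⁻¹ • (1 : End L V) = (-(μ⁻¹ • T')) * (T - μ • (1 : End L V)) := by
    rw [mul_sub, neg_mul, smul_mul_assoc, h', mul_smul_comm, mul_one, smul_neg, smul_smul,
      mul_inv_cancel₀ hμ, one_smul]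
    abel
  have hc : Commute (-(μ⁻¹ • T')) (T - μ • (1 : End L V)) := by
    refine Commute.neg_left (Commute.smul_left ?_ _)
    refine Commute.sub_right ?_ (Commute.smul_right (Commute.one_right _) _)
    rw [Commute, SemiconjBy, h, h']
  rw [e, hc.mul_pow, Module.End.mul_apply, hk, map_zero]

/-- An invertible operator having eigenvalues of different absolute values splits the space into
a dominant part (the range of `P`) and a dominated one (the kernel of `P`). -/
lemma exists_splitting [IsAlgClosed L] (T T' : End L (Fin d → L)) (h : T * T' = 1)
    (h' : T' * T = 1) (α β : L) (hα : T.HasEigenvalue α) (hβ : T.HasEigenvalue β)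
    (hαβ : ‖α‖ ≠ ‖β‖) :
    ∃ P : End L (Fin d → L), P * P = P ∧ P * T = T * P ∧ P ≠ 0 ∧ P ≠ 1 ∧
      ∃ C q q' : ℝ, 0 ≤ C ∧ 0 < q ∧ 0 < q' ∧ q * q' < 1 ∧
        (∀ (N : ℕ) x, P x = 0 → ‖(T ^ N) x‖ ≤ C * q ^ N * ‖x‖) ∧
        (∀ (N : ℕ) x, P x = x → ‖x‖ ≤ C * q' ^ N * ‖(T ^ N) x‖) := by
  have hfin : Set.Finite {μ | T.HasEigenvalue μ} := T.finite_hasEigenvalue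
  have hne0 : ∀ μ, T.HasEigenvalue μ → μ ≠ 0 := by
    rintro μ hμ rfl
    obtain ⟨v, hv, hv0⟩ := hμ.exists_hasEigenvector
    rw [Module.End.mem_eigenspace_iff, zero_smul] at hv
    apply hv0
    have : (T' * T) v = 0 := by rw [Module.End.mul_apply, hv, map_zero]
    rwa [h'] at this
  obtain ⟨μ₀, hμ₀, hmax⟩ := Set.exists_max_image _ (fun μ => ‖μ‖) hfin ⟨α, hα⟩
  set r := ‖μ₀‖ with hr
  have hr0 : 0 < r := norm_pos_iff.2 (hne0 _ hμ₀)
  obtain ⟨q, hq0, hqr, hq⟩ : ∃ q, 0 < q ∧ q < r ∧ ∀ μ, T.HasEigenvalue μ → ‖μ‖ < r → ‖μ‖ < q := by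
    have h1 : ∀ᶠ q in nhdsWithin r (Set.Iio r),
        ∀ μ ∈ {μ | T.HasEigenvalue μ}, ‖μ‖ < r → ‖μ‖ < q := by
      rw [Filter.eventually_all_finite hfin]
      intro μ _
      by_cases hμr : ‖μ‖ < r
      · have : ∀ᶠ q in nhds r, ‖μ‖ < q := lt_mem_nhds hμr
        filter_upwards [nhdsWithin_le_nhds this] with q hq _ using hq
      · exact Filter.Eventually.of_forall fun q hh => absurd hh hμr
    have h2 : ∀ᶠ q in nhdsWithin r (Set.Iio r), 0 < q := nhdsWithin_le_nhds (lt_mem_nhds hr0)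
    obtain ⟨q, hq1, hq2, hq3⟩ := (h1.and (h2.and self_mem_nhdsWithin)).exists
    exact ⟨q, hq2, hq3, fun μ hμ => hq1 μ hμ⟩
  set q' := 2 / (q + r) with hq'
  have hq'0 : 0 < q' := by positivity
  have hqq : q * q' < 1 := by
    rw [hq', mul_div_assoc', div_lt_one (by positivity)]; linarith
  have hrq : r⁻¹ < q' := by
    rw [hq', inv_lt_iff_one_lt_mul₀ hr0, div_mul_eq_mul_div, one_lt_div (by positivity)]; linarith
  set A : Set L := {μ | r ≤ ‖μ‖} with hA
  set Wp := ⨆ μ ∈ A, End.maxGenEigenspace T μ with hWp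
  set W0 := ⨆ μ ∈ Aᶜ, End.maxGenEigenspace T μ with hW0
  have hbot : ∀ μ, ¬ T.HasEigenvalue μ → End.maxGenEigenspace T μ = ⊥ := by
    intro μ hμ
    by_contra hne
    apply hμ
    rw [Submodule.eq_bot_iff] at hne
    push Not at hne
    obtain ⟨v, hv, hv0⟩ := hne
    obtain ⟨k, hk⟩ := (End.mem_maxGenEigenspace T μ v).1 hv
    refine Module.End.hasEigenvalue_of_hasGenEigenvalue (k := k) ?_
    intro hb
    apply hv0
    have : v ∈ T.genEigenspace μ k := by
      rw [Module.End.mem_genEigenspace_nat, LinearMap.mem_ker]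
      exact hk
    rw [hb] at this
    exact this
  have hdis : Disjoint Wp W0 :=
    iSupIndep.disjoint_biSup_biSup T.independent_maxGenEigenspace disjoint_compl_right
  have hcod : Wp ⊔ W0 = ⊤ := by
    rw [hWp, hW0, ← iSup_union, Set.union_compl_self, iSup_univ]
    exact T.iSup_maxGenEigenspace_eq_top
  have hc : IsCompl Wp W0 := ⟨hdis, codisjoint_iff.2 hcod⟩
  have hst : ∀ (B : Set L) x, x ∈ (⨆ μ ∈ B, End.maxGenEigenspace T μ) →
      T x ∈ ⨆ μ ∈ B, End.maxGenEigenspace T μ := by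
    intro B x hx
    have : (⨆ μ ∈ B, End.maxGenEigenspace T μ) ≤
        (⨆ μ ∈ B, End.maxGenEigenspace T μ).comap T := by
      refine iSup₂_le fun μ hμ y hy => ?_
      exact Submodule.mem_iSup_of_mem μ (Submodule.mem_iSup_of_mem hμ
        (T.mapsTo_maxGenEigenspace_of_comm rfl μ hy))
    exact this hx
  have hev : ∀ (B : Set L) μ, μ ∈ B → T.HasEigenvalue μ →
      ∃ v, v ∈ (⨆ μ ∈ B, End.maxGenEigenspace T μ) ∧ v ≠ 0 := by
    intro B μ hB hμ
    obtain ⟨v, hv, hv0⟩ := hμ.exists_hasEigenvector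
    refine ⟨v, Submodule.mem_iSup_of_mem μ (Submodule.mem_iSup_of_mem hB ?_), hv0⟩
    refine (End.mem_maxGenEigenspace T μ v).2 ⟨1, ?_⟩
    rw [Module.End.mem_eigenspace_iff] at hv
    simp [hv]
  have hslow0 : W0 ≤ slow T q hq0 := by
    refine iSup₂_le fun μ hμ => ?_
    by_cases hμe : T.HasEigenvalue μ
    · refine maxGen_le_slow T q hq0 μ (hq μ hμe ?_)
      simpa [hA] using hμ
    · rw [hbot μ hμe]; exact bot_le
  have hslowp : Wp ≤ slow T' q' hq'0 := by
    refine iSup₂_le fun μ hμ => ?_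
    have hμ0 : μ ≠ 0 := norm_pos_iff.1 (hr0.trans_le hμ)
    refine (maxGen_inv T T' h h' μ hμ0).trans (maxGen_le_slow T' q' hq'0 _ ?_)
    rw [norm_inv]
    exact (inv_anti₀ hr0 hμ).trans_lt hrq
  set P : End L (Fin d → L) := Wp.projection W0 hc with hP
  have hPW : ∀ x, P x ∈ Wp := fun x => Submodule.projection_apply_mem hc x
  have hPl : ∀ x ∈ Wp, P x = x := fun x hx => Submodule.projection_apply_of_mem_left hc hx
  have hPr : ∀ x ∈ W0, P x = 0 := fun x hx => (Submodule.projection_apply_eq_zero_iff hc).2 hx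
  have hPk : ∀ x, P x = 0 → x ∈ W0 := fun x hx => (Submodule.projection_apply_eq_zero_iff hc).1 hx
  have hPP : P * P = P := LinearMap.ext fun x => hPl _ (hPW x)
  have hPQ : ∀ x, (1 - P) x ∈ W0 := by
    intro x
    apply hPk
    have : P ((1 - P) x) = (P - P * P) x := by simp
    rw [this, hPP, sub_self, LinearMap.zero_apply]
  obtain ⟨C0, hC0, hb0⟩ := slow_uniform (A := 1 - P) fun x => hslow0 (hPQ x)
  obtain ⟨C1, hC1, hb1⟩ := slow_uniform (A := P) fun x => hslowp (hPW x)
  refine ⟨P, hPP, ?_, ?_, ?_, max C0 C1, q, q', le_max_of_le_left hC0, hq0, hq'0, hqq, ?_, ?_⟩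
  · refine LinearMap.ext fun x => ?_
    have hx : x = P x + (1 - P) x := by simp
    change P (T x) = T (P x)
    conv_lhs => rw [hx]
    rw [map_add, map_add, hPl _ (hst A _ (hPW x)), hPr _ (hst Aᶜ _ (hPQ x)), add_zero]
  · intro h0
    obtain ⟨v, hv, hv0⟩ := hev A μ₀ (le_refl r) hμ₀
    have := hPl v hv
    rw [h0] at this
    exact hv0 this.symm
  · intro h1
    have : ∃ μ, μ ∈ Aᶜ ∧ T.HasEigenvalue μ := by
      rcases lt_or_gt_of_ne hαβ with hlt | hlt
      · exact ⟨α, by simpa [hA] using hlt.trans_le (hmax β hβ), hα⟩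
      · exact ⟨β, by simpa [hA] using hlt.trans_le (hmax α hα), hβ⟩
    obtain ⟨μ, hμ, hμe⟩ := this
    obtain ⟨v, hv, hv0⟩ := hev Aᶜ μ hμ hμe
    have := hPr v hv
    rw [h1] at this
    exact hv0 this
  · intro N x hx
    have := hb0 N x
    rw [LinearMap.sub_apply, hx, Module.End.one_apply, sub_zero] at this
    refine this.trans ?_
    gcongr
    exact le_max_left _ _
  · intro N x hx
    have hmem : (T ^ N) x ∈ Wp := by
      have hxW : x ∈ Wp := hx ▸ hPW x
      clear hx
      induction N with
      | zero => simpa using hxW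
      | succ N ih => rw [pow_succ', Module.End.mul_apply]; exact hst A _ ih
    have := hb1 N ((T ^ N) x)
    have hinv : T' ^ N * T ^ N = 1 := by
      have hcm : Commute T' T := by rw [Commute, SemiconjBy, h, h']
      rw [← hcm.mul_pow, h', one_pow]
    rw [hPl _ hmem, ← Module.End.mul_apply, hinv, Module.End.one_apply] at this
    refine this.trans ?_
    gcongr
    exact le_max_right _ _

end coords

end LinRank

/-! ### Transversality -/

namespace LinRank
open Module

/-- If only the stabilizer of `W = range P` contained elements `g` with `g W ∩ ker P = 0`, the
multilinear functionals `v ↦ det (P h⁻¹ v)`, with `h` running over the cosets of the stabilizer,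
would be linearly independent, so the stabilizer would have index at most `d ^ d`. -/
lemma exists_transverse {L G : Type*} [Field L] [Group G] {d : ℕ}
    (ρ : Representation L G (Fin d → L)) (P : End L (Fin d → L)) (hPP : P * P = P) (h0 : P ≠ 0)
    (h1 : P ≠ 1)
    (hsm : ∀ T : Subgroup G, T.index ≠ 0 → T.index ≤ d ^ d → ∀ U, Stable ρ T U → U = ⊥ ∨ U = ⊤) :
    ∃ (g : G) (R : End L (Fin d → L)) (u : Fin d → L),
      R * P * ρ g * P = P ∧ P u = u ∧ P (ρ g u) ≠ ρ g u := by
  set W := LinearMap.range P with hW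
  set Q : (Fin d → L) →ₗ[L] W := P.rangeRestrict with hQ
  have hPW : ∀ w ∈ W, P w = w := by
    rintro _ ⟨x, rfl⟩
    exact LinearMap.congr_fun hPP x
  have hQv : ∀ x, ((Q x : W) : Fin d → L) = P x := fun x => rfl
  set f : G → (W →ₗ[L] W) := fun g => Q ∘ₗ ρ g ∘ₗ W.subtype with hf
  have hρi : ∀ g v, ρ g⁻¹ (ρ g v) = v := fun g v => LinearMap.congr_fun (rho_inv_mul ρ g) v
  have hρi' : ∀ g v, ρ g (ρ g⁻¹ v) = v := fun g v => LinearMap.congr_fun (rho_mul_inv ρ g) v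
  by_contra hcon
  push Not at hcon
  have H : ∀ g, LinearMap.det (f g) ≠ 0 → ∀ w ∈ W, ρ g w ∈ W := by
    intro g hg w hw
    set E := LinearMap.equivOfDetNeZero (f g) hg with hE
    have hEa : ∀ y, E.symm (f g y) = y := fun y => E.symm_apply_apply y
    have := hcon g (W.subtype ∘ₗ E.symm.toLinearMap ∘ₗ Q) w ?_ (hPW w hw)
    · rw [← this]; exact ⟨_, rfl⟩
    · refine LinearMap.ext fun x => ?_
      have e1 : Q (P (ρ g (P x))) = f g (Q x) := by
        apply Subtype.ext
        rw [hQv, hPW _ ⟨_, rfl⟩]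
        rfl
      change ((E.symm (Q (P (ρ g (P x)))) : W) : Fin d → L) = P x
      rw [e1, hEa]
      rfl
  let S : Subgroup G :=
    { carrier := {g | ∀ w, w ∈ W ↔ ρ g w ∈ W}
      one_mem' := fun w => by simp
      mul_mem' := by
        intro a b ha hb w
        rw [map_mul, Module.End.mul_apply, ← ha, ← hb]
      inv_mem' := by
        intro a ha w
        rw [ha (ρ a⁻¹ w), hρi'] }
  have hS : ∀ g, g ∈ S ↔ LinearMap.det (f g) ≠ 0 := by
    intro g
    constructor
    · intro hg hd
      obtain ⟨y, hy, hy0⟩ := Submodule.exists_mem_ne_zero_of_ne_bot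
        (LinearMap.bot_lt_ker_of_det_eq_zero hd).ne'
      apply hy0
      have e1 : P (ρ g y) = 0 := congrArg (fun z : W => (z : Fin d → L)) hy
      rw [hPW _ ((hg _).1 y.2)] at e1
      apply Subtype.ext
      rw [← hρi g y, e1, map_zero]
      rfl
    · intro hd w
      refine ⟨H g hd w, fun hw => ?_⟩
      set E := LinearMap.equivOfDetNeZero (f g) hd with hE
      have hEa : ∀ y, f g (E.symm y) = y := fun y => E.apply_symm_apply y
      have e1 := congrArg (fun z : W => (z : Fin d → L)) (hEa ⟨_, hw⟩)
      have e2 : P (ρ g (E.symm ⟨_, hw⟩ : W)) = ρ g w := e1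
      rw [hPW _ (H g hd _ (E.symm ⟨_, hw⟩).2)] at e2
      rw [← hρi g w, ← e2, hρi]
      exact Subtype.prop _
  set k := finrank L W with hk
  have hkd : k ≤ d := by
    have := Submodule.finrank_le W
    rwa [finrank_fin_fun] at this
  let b : Basis (Fin k) L W := finBasis L W
  let D : G → MultilinearMap L (fun _ : Fin k => (Fin d → L)) L := fun h =>
    (Matrix.detRowAlternating.compLinearMap
      (b.equivFun.toLinearMap ∘ₗ Q ∘ₗ ρ h⁻¹)).toMultilinearMap
  have hD : ∀ h g, D h (fun i => ρ g (b i)) = LinearMap.det (f (h⁻¹ * g)) := by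
    intro h g
    rw [← LinearMap.det_toMatrix b, ← Matrix.det_transpose]
    change Matrix.det _ = _
    congr 1
    ext i j
    rw [Matrix.transpose_apply, LinearMap.toMatrix_apply]
    change b.repr (Q (ρ h⁻¹ (ρ g (b i)))) j = b.repr (Q (ρ (h⁻¹ * g) (b i))) j
    rw [map_mul, Module.End.mul_apply]
  -- evaluating at `c.out` applied to the basis of `W` kills all terms but the one of the coset `c`
  have hli : LinearIndependent L (fun (c : G ⧸ S) (J : Fin k → Fin d) =>
      D c.out (fun i => Pi.basisFun L (Fin d) (J i))) := by
    rw [linearIndependent_iff']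
    intro s a ha c hc
    have hz : ∑ c ∈ s, a c • D c.out = 0 := by
      refine Basis.ext_multilinear (fun _ => Pi.basisFun L (Fin d)) fun J => ?_
      have := congrFun ha J
      simpa using this
    have hz2 := congrArg (fun m : MultilinearMap L (fun _ : Fin k => (Fin d → L)) L =>
      m (fun i => ρ c.out (b i))) hz
    simp only [sum_apply, smul_apply, hD,
      zero_apply] at hz2
    rw [Finset.sum_eq_single c] at hz2
    · refine (smul_eq_zero.1 hz2).resolve_right ?_
      rw [← ne_eq, ← hS, inv_mul_cancel]
      exact one_mem S
    · intro c' _ hne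
      have : c'.out⁻¹ * c.out ∉ S := by
        intro hm
        apply hne
        rw [← QuotientGroup.eq, QuotientGroup.out_eq', QuotientGroup.out_eq'] at hm
        exact hm
      rw [hS, not_not] at this
      rw [this, smul_zero]
    · exact fun h => absurd hc h
  have hfin : Finite (G ⧸ S) := hli.finite
  have : Fintype (G ⧸ S) := Fintype.ofFinite _
  have hcard := hli.fintype_card_le_finrank
  rw [finrank_pi, Fintype.card_fun, Fintype.card_fin, Fintype.card_fin] at hcard
  have hd : 0 < d := by
    rcases Nat.eq_zero_or_pos d with rfl | h
    · exact absurd (Subsingleton.elim P 0) h0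
    · exact h
  have hidx : S.index = Fintype.card (G ⧸ S) := by
    rw [Subgroup.index, Nat.card_eq_fintype_card]
  have hst : Stable ρ S W := fun g hg w hw => (hg w).1 hw
  rcases hsm S (by rw [hidx]; exact Fintype.card_ne_zero)
    (by rw [hidx]; exact hcard.trans (Nat.pow_le_pow_right hd hkd)) W hst with hb | ht
  · exact h0 (LinearMap.range_eq_bot.1 hb)
  · apply h1
    refine LinearMap.ext fun x => hPW x ?_
    rw [ht]; trivial

end LinRank

/-! ### Cones and ping-pong -/

namespace LinRank
open Module

/-- The product of a word in two letters. -/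
def evWord {G : Type*} [Monoid G] (a b : G) (w : List Bool) : G :=
  (w.map fun c => if c then a else b).prod

lemma evWord_cons {G : Type*} [Monoid G] (a b : G) (c : Bool) (w : List Bool) :
    evWord a b (c :: w) = (if c then a else b) * evWord a b w := by
  simp [evWord]

section cone
variable {L : Type*} [NormedField L] {d : ℕ}

/-- The cone of vectors that are close to the range of `P`. -/
def Cone (P : End L (Fin d → L)) (M : ℝ) (x : Fin d → L) : Prop := ‖x - P x‖ ≤ M * ‖P x‖

lemma Cone.mono {P : End L (Fin d → L)} {M M' : ℝ} (h : M ≤ M') {x} (hx : Cone P M x) :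
    Cone P M' x := hx.trans (by gcongr)

lemma cone_of_fixed {P : End L (Fin d → L)} {M : ℝ} (hM : 0 ≤ M) {x} (hx : P x = x) :
    Cone P M x := by
  rw [Cone, hx, sub_self, norm_zero]; positivity

variable {P : End L (Fin d → L)}

/-- If `T` expands the range of `P` more than its kernel, high powers of `T` contract wide cones
into narrow ones. -/
lemma cone_contract {T : End L (Fin d → L)} (hPP : P * P = P) (hPT : P * T = T * P)
    {C q q' : ℝ} (hC : 0 ≤ C) (hq : 0 < q)
    (h1 : ∀ (N : ℕ) x, P x = 0 → ‖(T ^ N) x‖ ≤ C * q ^ N * ‖x‖)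
    (h2 : ∀ (N : ℕ) x, P x = x → ‖x‖ ≤ C * q' ^ N * ‖(T ^ N) x‖)
    {M : ℝ} (hM : 0 ≤ M) (N : ℕ) {x} (hx : Cone P M x) :
    Cone P (C * C * M * (q * q') ^ N) ((T ^ N) x) := by
  have hcomm : Commute P (T ^ N) := Commute.pow_right hPT N
  have hc : ∀ y, P ((T ^ N) y) = (T ^ N) (P y) := fun y => LinearMap.congr_fun hcomm y
  have hpp : ∀ y, P (P y) = P y := fun y => LinearMap.congr_fun hPP y
  have e1 : (T ^ N) x - P ((T ^ N) x) = (T ^ N) (x - P x) := by rw [hc, map_sub]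
  rw [Cone, e1]
  have a1 := h1 N (x - P x) (by rw [map_sub, hpp, sub_self])
  have a2 := h2 N (P x) (hpp x)
  rw [← hc] at a2
  calc ‖(T ^ N) (x - P x)‖ ≤ C * q ^ N * ‖x - P x‖ := a1
    _ ≤ C * q ^ N * (M * ‖P x‖) := by gcongr; exact hx
    _ ≤ C * q ^ N * (M * (C * q' ^ N * ‖P ((T ^ N) x)‖)) := by gcongr
    _ = C * C * M * (q * q') ^ N * ‖P ((T ^ N) x)‖ := by rw [mul_pow]; ring

/-- An operator moving the range of `P` to a complement of its kernel maps narrow cones into a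
cone of controlled width. -/
lemma cone_move {A R : End L (Fin d → L)} (hR : R * P * A * P = P) {K : ℝ} (hK : 1 ≤ K)
    (hA : ∀ x, ‖P (A x)‖ ≤ K * ‖x‖) (hA' : ∀ x, ‖A x - P (A x)‖ ≤ K * ‖x‖)
    (hRK : ∀ x, ‖R x‖ ≤ K * ‖x‖) {ε : ℝ} (hε : 2 * K ^ 2 * ε ≤ 1) {x}
    (hx : Cone P ε x) : Cone P (4 * K ^ 2) (A x) := by
  have hrp : R (P (A (P x))) = P x := LinearMap.congr_fun hR x
  have hx' : ‖x - P x‖ ≤ ε * ‖P x‖ := hx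
  have b1 : ‖P x‖ ≤ K * ‖P (A (P x))‖ := by
    have := hRK (P (A (P x))); rwa [hrp] at this
  have b2 : ‖P (A (P x))‖ ≤ ‖P (A x)‖ + K * ‖x - P x‖ := by
    have e : P (A (P x)) = P (A x) - P (A (x - P x)) := by
      rw [map_sub, map_sub]; abel
    rw [e]
    exact (norm_sub_le _ _).trans (add_le_add le_rfl (hA _))
  have hp := norm_nonneg (P x)
  have hK0 : 0 < K := by linarith
  have hε1 : ε ≤ 1 := by nlinarith
  have b3 : ‖P x‖ ≤ 2 * K * ‖P (A x)‖ := by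
    have : ‖P x‖ ≤ K * (‖P (A x)‖ + K * (ε * ‖P x‖)) :=
      b1.trans (by gcongr; exact b2.trans (by gcongr))
    nlinarith
  have b4 : ‖x‖ ≤ 2 * ‖P x‖ := by
    have e : x = P x + (x - P x) := by abel
    calc ‖x‖ = ‖P x + (x - P x)‖ := by rw [← e]
      _ ≤ ‖P x‖ + ‖x - P x‖ := norm_add_le _ _
      _ ≤ 2 * ‖P x‖ := by nlinarith
  rw [Cone]
  calc ‖A x - P (A x)‖ ≤ K * ‖x‖ := hA' x
    _ ≤ K * (2 * (2 * K * ‖P (A x)‖)) := by gcongr; exact b4.trans (by gcongr)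
    _ = 4 * K ^ 2 * ‖P (A x)‖ := by ring

/-- A vector close to `u` cannot be sent by `A` close to the range of `P` when `A u` is not in
that range. -/
lemma cone_separate {A : End L (Fin d → L)} {K : ℝ} (hK : 1 ≤ K)
    (hA : ∀ x, ‖P (A x)‖ ≤ K * ‖x‖) (hA' : ∀ x, ‖A x - P (A x)‖ ≤ K * ‖x‖)
    {ε : ℝ} (hε0 : 0 ≤ ε) (hε1 : ε ≤ 1) {u y : Fin d → L} (hu : P y = u) (hy : Cone P ε y)
    (hAy : Cone P ε (A y)) : ‖A u - P (A u)‖ ≤ 3 * K * ε * ‖u‖ := by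
  rw [Cone, hu] at hy
  have hAy' : ‖A y - P (A y)‖ ≤ ε * ‖P (A y)‖ := hAy
  have b4 : ‖y‖ ≤ 2 * ‖u‖ := by
    have e : y = u + (y - u) := by abel
    have := norm_nonneg u
    calc ‖y‖ = ‖u + (y - u)‖ := by rw [← e]
      _ ≤ ‖u‖ + ‖y - u‖ := norm_add_le _ _
      _ ≤ 2 * ‖u‖ := by nlinarith
  have e : A u - P (A u) = (A y - P (A y)) - (A (y - u) - P (A (y - u))) := by
    rw [map_sub, map_sub]; abel
  rw [e]
  calc _ ≤ ‖A y - P (A y)‖ + ‖A (y - u) - P (A (y - u))‖ := norm_sub_le _ _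
    _ ≤ ε * (K * (2 * ‖u‖)) + K * (ε * ‖u‖) := by
        refine add_le_add (hAy'.trans ?_) ((hA' _).trans ?_)
        · gcongr; exact (hA y).trans (by gcongr)
        · gcongr
    _ = 3 * K * ε * ‖u‖ := by ring

end cone

/-- The ping-pong argument. -/
lemma pingpong {L G : Type*} [NormedField L] [Group G] {d : ℕ}
    (ρ : Representation L G (Fin d → L)) (γ g : G) (P R : End L (Fin d → L)) (u : Fin d → L)
    (hPP : P * P = P) (hPT : P * ρ γ = ρ γ * P) (hR : R * P * ρ g * P = P) (hu : P u = u)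
    (hgu : P (ρ g u) ≠ ρ g u) {C q q' : ℝ} (hC : 0 ≤ C) (hq : 0 < q) (hq' : 0 < q')
    (hqq : q * q' < 1)
    (h1 : ∀ (N : ℕ) x, P x = 0 → ‖(ρ γ ^ N) x‖ ≤ C * q ^ N * ‖x‖)
    (h2 : ∀ (N : ℕ) x, P x = x → ‖x‖ ≤ C * q' ^ N * ‖(ρ γ ^ N) x‖) :
    ∃ a b : G, ∀ w w' : List Bool, w.length = w'.length →
      ρ (evWord a b w) = ρ (evWord a b w') → w = w' := by
  obtain ⟨K1, -, hK1⟩ := exists_bound (P * ρ g)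
  obtain ⟨K2, -, hK2⟩ := exists_bound (ρ g - P * ρ g)
  obtain ⟨K3, -, hK3⟩ := exists_bound R
  set K := max 1 (max K1 (max K2 K3)) with hK
  have hK1' : 1 ≤ K := le_max_left _ _
  have hA : ∀ x, ‖P (ρ g x)‖ ≤ K * ‖x‖ := fun x => (hK1 x).trans (by
    gcongr; exact (le_max_left _ _).trans (le_max_right _ _))
  have hA' : ∀ x, ‖ρ g x - P (ρ g x)‖ ≤ K * ‖x‖ := fun x => (hK2 x).trans (by
    gcongr
    exact (le_max_left _ _).trans ((le_max_right _ _).trans (le_max_right _ _)))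
  have hRK : ∀ x, ‖R x‖ ≤ K * ‖x‖ := fun x => (hK3 x).trans (by
    gcongr
    exact (le_max_right _ _).trans ((le_max_right _ _).trans (le_max_right _ _)))
  have hK0 : 0 < K := by linarith
  set δ := ‖ρ g u - P (ρ g u)‖ with hδ
  have hδ0 : 0 < δ := norm_pos_iff.2 (sub_ne_zero.2 hgu.symm)
  have hu0 : 0 < ‖u‖ := by
    rw [norm_pos_iff]
    rintro rfl
    simp at hgu
  set ε := min (1 / (2 * K ^ 2)) (δ / (4 * K * ‖u‖)) with hε
  have hε0 : 0 < ε := lt_min (by positivity) (by positivity)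
  have hεK : 2 * K ^ 2 * ε ≤ 1 := by
    have : ε ≤ 1 / (2 * K ^ 2) := min_le_left _ _
    rwa [le_div_iff₀ (by positivity), mul_comm] at this
  have hεδ : 4 * K * ‖u‖ * ε ≤ δ := by
    have : ε ≤ δ / (4 * K * ‖u‖) := min_le_right _ _
    rwa [le_div_iff₀ (by positivity), mul_comm] at this
  have hε1 : ε ≤ 1 := by nlinarith
  set M := 4 * K ^ 2 with hM
  have hM1 : 1 ≤ M := by nlinarith
  have hεM : ε ≤ M := hε1.trans hM1
  obtain ⟨N, hN⟩ : ∃ N : ℕ, C * C * M * (q * q') ^ N ≤ ε := by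
    have ht := (tendsto_pow_atTop_nhds_zero_of_lt_one (by positivity : 0 ≤ q * q') hqq).const_mul
      (C * C * M)
    rw [mul_zero] at ht
    obtain ⟨N, hN⟩ := (ht.eventually (gt_mem_nhds hε0)).exists
    exact ⟨N, hN.le⟩
  have hcon : ∀ x, Cone P M x → Cone P ε (ρ (γ ^ N) x) := by
    intro x hx
    rw [map_pow]
    exact (cone_contract hPP hPT hC hq h1 h2 (by positivity) N hx).mono hN
  have hmov : ∀ x, Cone P ε x → Cone P M (ρ g x) := fun x hx =>
    cone_move hR hK1' hA hA' hRK hεK hx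
  set a := γ ^ N with ha
  set b := g * γ ^ N with hb
  have hword : ∀ w : List Bool, ∀ x, Cone P M x → Cone P M (ρ (evWord a b w) x) := by
    intro w
    induction w with
    | nil => intro x hx; simpa [evWord] using hx
    | cons c w ih =>
      intro x hx
      rw [evWord_cons, map_mul, Module.End.mul_apply]
      cases c with
      | true => exact (hcon _ (ih x hx)).mono hεM
      | false =>
        change Cone P M (ρ b _)
        rw [hb, map_mul, Module.End.mul_apply]
        exact hmov _ (hcon _ (ih x hx))
  have hpp : ∀ y, P (P y) = P y := fun y => LinearMap.congr_fun hPP y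
  -- a vector `x` of `range P` with `P (A' x) = u` is sent close to `ρ g u`, outside the narrow cone, by
  -- any word starting with `b`, but into the narrow cone by any word starting with `a`
  have hdiff : ∀ w w' : List Bool, ρ (a * evWord a b w) ≠ ρ (b * evWord a b w') := by
    intro w w' heq
    set A' := ρ (γ ^ N * evWord a b w') with hA'def
    have hA'c : ∀ x, Cone P M x → Cone P ε (A' x) := by
      intro x hx
      rw [hA'def, map_mul, Module.End.mul_apply]
      exact hcon _ (hword w' x hx)
    set W := LinearMap.range P with hW
    have hPW : ∀ x ∈ W, P x = x := by
      rintro _ ⟨x, rfl⟩; exact hpp x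
    let f : W →ₗ[L] W := P.rangeRestrict ∘ₗ A' ∘ₗ W.subtype
    have hinj : Function.Injective f := by
      rw [← LinearMap.ker_eq_bot, Submodule.eq_bot_iff]
      intro x hx
      have e1 : P (A' x) = 0 := congrArg (fun z : W => (z : Fin d → L)) hx
      have hc := hA'c x (cone_of_fixed (by positivity) (hPW x x.2))
      rw [Cone, e1, sub_zero, norm_zero, mul_zero, norm_le_zero_iff] at hc
      apply Subtype.ext
      have := LinearMap.congr_fun (rho_inv_mul ρ (γ ^ N * evWord a b w')) x
      rw [Module.End.mul_apply, ← hA'def, hc, map_zero] at this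
      exact this.symm
    obtain ⟨x, hx⟩ := LinearMap.injective_iff_surjective.1 hinj ⟨u, u, hu⟩
    have hxu : P (A' x) = u := congrArg (fun z : W => (z : Fin d → L)) hx
    have hxc : Cone P M (x : Fin d → L) := cone_of_fixed (by positivity) (hPW x x.2)
    have hgy : Cone P ε (ρ g (A' x)) := by
      have e2 : ρ g (A' x) = ρ (a * evWord a b w) x := by
        rw [heq, hb, mul_assoc, map_mul, Module.End.mul_apply]
      rw [e2, map_mul, Module.End.mul_apply]
      exact hcon _ (hword w _ hxc)
    have := cone_separate hK1' hA hA' hε0.le hε1 hxu (hA'c _ hxc) hgy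
    have h3 : 0 < K * ε * ‖u‖ := by positivity
    nlinarith
  refine ⟨a, b, fun w => ?_⟩
  induction w with
  | nil =>
    intro w' hl _
    exact (List.length_eq_zero_iff.1 hl.symm).symm
  | cons c w ih =>
    intro w' hl heq
    cases w' with
    | nil => simp at hl
    | cons c' w' =>
      have hl' : w.length = w'.length := by simpa using hl
      rw [evWord_cons, evWord_cons] at heq
      by_cases hcc : c = c'
      · subst hcc
        rw [ih w' hl']
        rw [map_mul, map_mul] at heq
        have := congrArg (fun z => ρ (if c then a else b)⁻¹ * z) heq
        simpa only [← mul_assoc, rho_inv_mul, one_mul] using this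
      · exfalso
        cases c <;> cases c' <;> simp at hcc
        · exact hdiff w' w heq.symm
        · exact hdiff w w' heq

/-- The image of the representation contains a free semigroup on two generators. -/
lemma Datum.exists_free {G K : Type*} [Group G] [Field K] [NumberField K] {d : ℕ}
    (D : Datum G d K) : ∃ a b : G, ∀ w w' : List Bool, w.length = w'.length →
      D.ψ (evWord a b w) = D.ψ (evWord a b w') → w = w' := by
  have hinv : D.ψ D.γ * D.ψ D.γ⁻¹ = 1 := by rw [← map_mul, mul_inv_cancel, map_one]
  have hβ0 := (charpoly_root_inv hinv D.hβ).1
  obtain ⟨L, _, _, τ, hτ⟩ := exists_place D.α D.β hβ0 D.hαβ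
  set φ := mapRep τ D.ψ with hφ
  set ρ := repOf φ with hρ
  have hev : ∀ x, (D.ψ D.γ).charpoly.IsRoot x → End.HasEigenvalue (ρ D.γ) (τ x) := by
    intro x hx
    have h1 := charpoly_mapRep_root τ D.ψ D.γ hx
    rw [Module.End.hasEigenvalue_iff_isRoot_charpoly]
    convert h1 using 1
    exact Matrix.charpoly_toLin' _
  obtain ⟨P, hPP, hPT, hP0, hP1, C, q, q', hC, hq, hq', hqq, h1, h2⟩ :=
    exists_splitting (ρ D.γ) (ρ D.γ⁻¹) (rho_mul_inv ρ _) (rho_inv_mul ρ _) _ _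
      (hev _ D.hα) (hev _ D.hβ) hτ
  have hdet : entryDet φ D.e ≠ 0 := by
    rw [hφ, entryDet_mapRep]
    simpa using D.det_ne
  obtain ⟨g, R, u, hR, hu, hgu⟩ := exists_transverse ρ P hPP hP0 hP1
    (fun T h0 hT U hU => stable_trivial φ D.e hdet T (D.small T h0 hT) U hU)
  obtain ⟨a, b, hab⟩ := pingpong ρ D.γ g P R u hPP hPT hR hu hgu hC hq hq' hqq h1 h2
  refine ⟨a, b, fun w w' hl h => hab w w' hl ?_⟩
  refine LinearMap.ext fun v => ?_
  rw [hρ, repOf_apply, repOf_apply, hφ, mapRep_apply, mapRep_apply, h]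

end LinRank

/-! ### Localized rings of integers -/

namespace LinRank
open Module NumberField

section localized
variable (K : Type*) [Field K] [NumberField K]

/-- The subring `𝓞[1/M]` of the number field `K`. -/
def invSub (M : ℕ) : Subalgebra ℤ K where
  carrier := {x | ∃ j : ℕ, IsIntegral ℤ ((M : K) ^ j * x)}
  mul_mem' := by
    rintro x y ⟨i, hi⟩ ⟨j, hj⟩
    refine ⟨i + j, ?_⟩
    have e : (M : K) ^ (i + j) * (x * y) = ((M : K) ^ i * x) * ((M : K) ^ j * y) := by ring
    rw [e]
    exact hi.mul hj
  add_mem' := by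
    rintro x y ⟨i, hi⟩ ⟨j, hj⟩
    have hM : IsIntegral ℤ (M : K) := by
      simpa using (isIntegral_algebraMap : IsIntegral ℤ (algebraMap ℤ K (M : ℤ)))
    refine ⟨i + j, ?_⟩
    have e : (M : K) ^ (i + j) * (x + y)
        = (M : K) ^ j * ((M : K) ^ i * x) + (M : K) ^ i * ((M : K) ^ j * y) := by ring
    rw [e]
    exact ((hM.pow j).mul hi).add ((hM.pow i).mul hj)
  algebraMap_mem' := by
    intro r
    refine ⟨0, ?_⟩
    rw [pow_zero, one_mul]
    exact isIntegral_algebraMap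

variable {K}

lemma invSub_mono {M M' : ℕ} (h : M ∣ M') : invSub K M ≤ invSub K M' := by
  obtain ⟨c, rfl⟩ := h
  rintro x ⟨j, hj⟩
  refine ⟨j, ?_⟩
  have hc : IsIntegral ℤ ((c : K) ^ j) := by
    have : IsIntegral ℤ (c : K) := by
      simpa using (isIntegral_algebraMap : IsIntegral ℤ (algebraMap ℤ K (c : ℤ)))
    exact this.pow j
  have e : ((M * c : ℕ) : K) ^ j * x = (c : K) ^ j * ((M : K) ^ j * x) := by push_cast; ring
  rw [e]
  exact hc.mul hj

lemma mem_invSub_of_isIntegral {M : ℕ} {x : K} (h : IsIntegral ℤ x) : x ∈ invSub K M :=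
  ⟨0, by simpa using h⟩

lemma exists_mem_invSub (x : K) : ∃ M : ℕ, 0 < M ∧ x ∈ invSub K M := by
  have hx : IsAlgebraic ℤ x :=
    (IsFractionRing.isAlgebraic_iff ℤ ℚ K).2 (Algebra.IsAlgebraic.isAlgebraic x)
  obtain ⟨m, hm, hi⟩ := hx.exists_integral_multiple
  refine ⟨m.natAbs, Int.natAbs_pos.2 hm, 1, ?_⟩
  rw [pow_one]
  rcases Int.natAbs_eq m with h | h
  · rw [h, zsmul_eq_mul] at hi; simpa using hi
  · rw [h, zsmul_eq_mul] at hi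
    have := hi.neg
    simpa using this

lemma exists_le_invSub (R : Subalgebra ℤ K) (hR : R.FG) : ∃ M : ℕ, 0 < M ∧ R ≤ invSub K M := by
  obtain ⟨X, rfl⟩ := hR
  choose f hf0 hf using fun x : K => exists_mem_invSub x
  refine ⟨∏ x ∈ X, f x, Finset.prod_pos fun x _ => hf0 x, ?_⟩
  rw [Algebra.adjoin_le_iff]
  intro x hx
  exact invSub_mono (Finset.dvd_prod_of_mem f hx) (hf x)

lemma not_unit_invSub {M p : ℕ} (hp : p.Prime) (hpM : ¬ p ∣ M) : ¬ IsUnit (p : invSub K M) := by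
  intro hu
  obtain ⟨y, hy⟩ := hu.exists_right_inv
  obtain ⟨j, hj⟩ := y.2
  have hy' : (p : K) * y = 1 := by
    have := congrArg (fun z : invSub K M => (z : K)) hy
    simpa using this
  have hp0 : (p : K) ≠ 0 := by exact_mod_cast hp.ne_zero
  have e : (M : K) ^ j * (y : K) = algebraMap ℚ K ((M : ℚ) ^ j / p) := by
    rw [map_div₀, map_pow, map_natCast, map_natCast, eq_div_iff hp0, mul_assoc, mul_comm (y : K),
      hy', mul_one]
  rw [e, isIntegral_algebraMap_iff (algebraMap ℚ K).injective] at hj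
  obtain ⟨z, hz⟩ := IsIntegrallyClosed.isIntegral_iff.1 hj
  have hp0' : (p : ℚ) ≠ 0 := by exact_mod_cast hp.ne_zero
  rw [eq_div_iff hp0'] at hz
  have hz' : z * (p : ℤ) = (M : ℤ) ^ j := by
    have : ((z : ℤ) : ℚ) * (p : ℚ) = (M : ℚ) ^ j := hz
    exact_mod_cast this
  have : (p : ℤ) ∣ (M : ℤ) ^ j := ⟨z, by rw [← hz', mul_comm]⟩
  have h2 : p ∣ M ^ j := by exact_mod_cast this
  exact hpM (hp.dvd_of_dvd_pow h2)

/-- The inclusion of the ring of integers. -/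
def intToInv (M : ℕ) : 𝓞 K →+* invSub K M where
  toFun x := ⟨x, mem_invSub_of_isIntegral x.2⟩
  map_one' := rfl
  map_mul' _ _ := rfl
  map_zero' := rfl
  map_add' _ _ := rfl

/-- Reduction of `𝓞[1/M]` at a prime above `p ∤ M`. -/
lemma exists_reduction {M p : ℕ} (hp : p.Prime) (hpM : ¬ p ∣ M) :
    ∃ P : Ideal (invSub K M), P.IsMaximal ∧ (p : invSub K M) ∈ P ∧ Finite (invSub K M ⧸ P) ∧
      Nat.card (invSub K M ⧸ P) ≤ p ^ finrank ℚ K := by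
  obtain ⟨P, hP, hpP⟩ := exists_max_ideal_of_mem_nonunits (not_unit_invSub (K := K) hp hpM)
  set f : 𝓞 K →+* (invSub K M ⧸ P) := (Ideal.Quotient.mk P).comp (intToInv M) with hf
  have hpf : f p = 0 := by
    rw [hf, RingHom.comp_apply, map_natCast]
    exact Ideal.Quotient.eq_zero_iff_mem.2 hpP
  have hcop : IsCoprime (M : ℤ) (p : ℤ) :=
    Nat.isCoprime_iff_coprime.2 ((Nat.Prime.coprime_iff_not_dvd hp).2 hpM).symm
  obtain ⟨a, b, hab⟩ := hcop
  have hMinv : (a : invSub K M ⧸ P) * (M : invSub K M ⧸ P) = 1 := by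
    have h1 := congrArg (fun z : ℤ => (z : invSub K M ⧸ P)) hab
    have hp0 : (p : invSub K M ⧸ P) = 0 := by simpa using hpf
    simpa [hp0] using h1
  have hsurj : Function.Surjective f := by
    intro y
    obtain ⟨x, rfl⟩ := Ideal.Quotient.mk_surjective y
    obtain ⟨j, hj⟩ := x.2
    obtain ⟨z, hz⟩ : ∃ z : 𝓞 K, (z : K) = (M : K) ^ j * x := ⟨⟨_, hj⟩, rfl⟩
    refine ⟨(a : 𝓞 K) ^ j * z, ?_⟩
    have e : intToInv M z = (M : invSub K M) ^ j * x := by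
      apply Subtype.ext
      have h1 : ((intToInv M z : invSub K M) : K) = z := rfl
      rw [h1, hz]
      simp
    rw [map_mul, map_pow, map_intCast, hf, RingHom.comp_apply, e, map_mul, map_pow, map_natCast,
      ← mul_assoc, ← mul_pow, hMinv, one_pow, one_mul]
  have hcard : Nat.card (𝓞 K ⧸ Ideal.span {(p : 𝓞 K)}) = p ^ finrank ℚ K := by
    have := Ideal.absNorm_span_singleton (p : 𝓞 K)
    rw [Ideal.absNorm_apply, Submodule.cardQuot_apply] at this
    rw [this]
    have h2 := Algebra.norm_algebraMap_of_basis (RingOfIntegers.basis K) (p : ℤ)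
    rw [map_natCast (algebraMap ℤ (𝓞 K))] at h2
    rw [h2, Int.natAbs_pow, Int.natAbs_natCast, ← finrank_eq_card_basis (RingOfIntegers.basis K),
      RingOfIntegers.rank]
  have hfin : Finite (𝓞 K ⧸ Ideal.span {(p : 𝓞 K)}) :=
    Nat.finite_of_card_ne_zero (by rw [hcard]; exact pow_ne_zero _ hp.ne_zero)
  have hle : ∀ x ∈ Ideal.span {(p : 𝓞 K)}, f x = 0 := by
    intro x hx
    obtain ⟨y, rfl⟩ := Ideal.mem_span_singleton'.1 hx
    rw [map_mul, hpf, mul_zero]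
  have hs2 : Function.Surjective (Ideal.Quotient.lift _ f hle) :=
    Ideal.Quotient.lift_surjective_of_surjective _ hle hsurj
  exact ⟨P, hP, hpP, Finite.of_surjective _ hs2, 
    (Nat.card_le_card_of_surjective _ hs2).trans hcard.le⟩

/-- A nonzero algebraic integer lying in primes above all elements of `S` has norm at least their
product. -/
lemma prod_le_of_mem {ι : Type*} (S : Finset ι) (p : ι → ℕ) (hp : ∀ i ∈ S, (p i).Prime)
    (hinj : Set.InjOn p S) (k : ι → Type*) [∀ i, Field (k i)] [∀ i, CharP (k i) (p i)]
    (f : ∀ i, 𝓞 K →+* k i) (x : 𝓞 K) (hx : x ≠ 0) (h : ∀ i ∈ S, f i x = 0) (B : ℝ)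
    (hB : ∀ τ : K →+* ℂ, ‖τ x‖ ≤ B) : ((∏ i ∈ S, p i : ℕ) : ℝ) ≤ B ^ finrank ℚ K := by
  set m := (Algebra.norm ℤ x).natAbs with hm
  have hm0 : m ≠ 0 := by
    rw [hm, Int.natAbs_ne_zero, Algebra.norm_ne_zero_iff]
    exact hx
  have hdvd : ∀ i ∈ S, p i ∣ m := by
    intro i hi
    have h1 := Ideal.absNorm_mem (Ideal.span {x})
    rw [Ideal.absNorm_span_singleton] at h1
    obtain ⟨y, hy⟩ := Ideal.mem_span_singleton'.1 h1
    have h2 : f i (m : 𝓞 K) = 0 := by rw [← hy, map_mul, h i hi, mul_zero]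
    rw [map_natCast] at h2
    exact (CharP.cast_eq_zero_iff (k i) (p i) m).1 h2
  have hprod : ∏ i ∈ S, p i ∣ m := by
    refine Finset.prod_dvd_of_isRelPrime ?_ hdvd
    intro i hi j hj hij
    exact Nat.coprime_iff_isRelPrime.1
      ((Nat.coprime_primes (hp i hi) (hp j hj)).2 fun e => hij (hinj hi hj e))
  have hle : ((∏ i ∈ S, p i : ℕ) : ℝ) ≤ m := by
    exact_mod_cast Nat.le_of_dvd (Nat.pos_of_ne_zero hm0) hprod
  refine hle.trans ?_
  have h1 : ((m : ℕ) : ℝ) = ‖algebraMap ℚ ℂ (Algebra.norm ℚ (x : K))‖ := by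
    rw [← Algebra.coe_norm_int]
    simp [hm, Nat.cast_natAbs]
  rw [h1, Algebra.norm_eq_prod_embeddings, norm_prod]
  calc _ ≤ ∏ _τ : K →ₐ[ℚ] ℂ, B := Finset.prod_le_prod (fun _ _ => norm_nonneg _)
        fun τ _ => hB τ.toRingHom
    _ = _ := by rw [Finset.prod_const, Finset.card_univ, AlgHom.card]

end localized

end LinRank

/-! ### Reductions modulo primes -/

namespace LinRank
open Module NumberField

/-- An absolutely irreducible self-dual representation over a finite field of characteristic `p`;
irreducibility is witnessed by the elements `e`. -/
structure Red (G : Type*) [Group G] (d : ℕ) (e : Fin d × Fin d → G) (p : ℕ) where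
  k : Type*
  [fld : Field k]
  [fin : Finite k]
  [chr : CharP k p]
  σ : G →* Matrix (Fin d) (Fin d) k
  selfdual : ∀ g, (σ g⁻¹).trace = (σ g).trace
  det_ne : entryDet σ e ≠ 0

attribute [instance] Red.fld Red.fin Red.chr

section words
variable {G K : Type*} [Group G] [Field K] {d : ℕ}

/-- The entries of words of length `n` have denominators dividing `μ ^ n` and conjugates of size
exponential in `n`. -/
lemma word_bound (ψ : G →* Matrix (Fin d) (Fin d) K) (a b : G) (μ : K) (B0 : ℝ)
    (hintg : ∀ c : Bool, ∀ i j, IsIntegral ℤ (μ * ψ (if c then a else b) i j))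
    (hB : ∀ (τ : K →+* ℂ) (c : Bool), ∀ i j, ‖τ (μ * ψ (if c then a else b) i j)‖ ≤ B0)
    (hB0 : 0 ≤ B0) (w : List Bool) :
    ∀ i j, IsIntegral ℤ (μ ^ w.length * ψ (evWord a b w) i j) ∧
      ∀ τ : K →+* ℂ, ‖τ (μ ^ w.length * ψ (evWord a b w) i j)‖ ≤ (d * B0) ^ w.length := by
  induction w with
  | nil =>
    intro i j
    have h1 : evWord a b [] = 1 := rfl
    rw [h1, map_one, Matrix.one_apply]
    split_ifs
    · simpa using isIntegral_one
    · simpa using isIntegral_zero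
  | cons c w ih =>
    intro i j
    have e : μ ^ (c :: w).length * ψ (evWord a b (c :: w)) i j
        = ∑ l, (μ * ψ (if c then a else b) i l) * (μ ^ w.length * ψ (evWord a b w) l j) := by
      rw [evWord_cons, map_mul, Matrix.mul_apply, Finset.mul_sum]
      refine Finset.sum_congr rfl fun l _ => ?_
      rw [List.length_cons]
      ring
    rw [e]
    refine ⟨IsIntegral.sum _ fun l _ => (hintg c i l).mul (ih l j).1, fun τ => ?_⟩
    rw [map_sum]
    calc _ ≤ ∑ _l : Fin d, B0 * (d * B0) ^ w.length := by
          refine norm_sum_le_of_le _ fun l _ => ?_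
          rw [map_mul, norm_mul]
          exact mul_le_mul (hB τ c i l) ((ih l j).2 τ) (norm_nonneg _) hB0
      _ = (d * B0) ^ (c :: w).length := by
          rw [Finset.sum_const, Finset.card_univ, Fintype.card_fin, List.length_cons, nsmul_eq_mul]
          ring

lemma two_mul_pow_le {B : ℝ} (hB : 1 ≤ B) {n : ℕ} (hn : n ≠ 0) (r : ℕ) :
    (2 * B ^ n) ^ r ≤ ((2 * B) ^ r) ^ n := by
  rw [pow_right_comm (2 * B) r n]
  have h1 : (2 : ℝ) ≤ 2 ^ n := le_self_pow₀ (by norm_num) hn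
  refine pow_le_pow_left₀ (by positivity) ?_ _
  rw [mul_pow]
  gcongr

end words

set_option maxHeartbeats 400000 in
/-- A datum has reductions at almost all primes `p`, over fields of size `p ^ O(1)`. By the product
formula two words of length `n` in a free pair cannot agree modulo every prime of a set whose product
exceeds `B ^ n`, so the common kernel of these reductions has index at least `2 ^ n`. -/
lemma Datum.exists_reductions.{u, v} {G : Type u} {K : Type v} [Group G] [Group.FG G] [Field K]
    [NumberField K] {d : ℕ} (D : Datum G d K) (M₀ : ℕ) (hM₀ : 0 < M₀) :
    ∃ (M : ℕ) (B : ℝ), 0 < M ∧ M₀ ∣ M ∧ 1 ≤ B ∧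
      ∃ red : ∀ p : {p : ℕ // p.Prime ∧ ¬ p ∣ M}, Red.{u, v} G d D.e p,
        (∀ p, Nat.card (red p).k ≤ (p : ℕ) ^ finrank ℚ K) ∧
        ∀ (S : Finset {p : ℕ // p.Prime ∧ ¬ p ∣ M}) (n : ℕ), B ^ n < ((∏ p ∈ S, (p : ℕ) : ℕ) : ℝ) →
          2 ^ n ≤ (⨅ p ∈ S, (red p).σ.ker).index := by
  classical
  obtain ⟨a, b, hfree⟩ := D.exists_free
  set δ := entryDet D.ψ D.e with hδ
  obtain ⟨R, hRfg, hRE, hRψ⟩ := exists_entry_ring ℤ D.ψ {δ⁻¹}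
  obtain ⟨M₁, hM₁, hRM⟩ := exists_le_invSub R hRfg
  set M := M₀ * M₁ with hM
  have hM0 : 0 < M := Nat.mul_pos hM₀ hM₁
  have hRM' : R ≤ invSub K M := hRM.trans (invSub_mono (Dvd.intro_left _ rfl))
  have hent : ∀ g i j, D.ψ g i j ∈ invSub K M := fun g i j => hRM' (hRψ g i j)
  have hδi : δ⁻¹ ∈ invSub K M := hRM' (hRE _ (Finset.mem_singleton_self _))
  set Ψ := descend (invSub K M) D.ψ hent with hΨ
  have hΨm : mapRep (algebraMap (invSub K M) K) Ψ = D.ψ := by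
    ext g : 1
    exact descend_map (invSub K M) D.ψ hent g
  have hΨdet : ((entryDet Ψ D.e : invSub K M) : K) = δ := by
    have := entryDet_mapRep (algebraMap (invSub K M) K) Ψ D.e
    rw [hΨm] at this
    exact this.symm
  have hunit : IsUnit (entryDet Ψ D.e) := by
    refine IsUnit.of_mul_eq_one ⟨δ⁻¹, hδi⟩ (Subtype.ext ?_)
    change ((entryDet Ψ D.e : invSub K M) : K) * δ⁻¹ = 1
    rw [hΨdet, mul_inv_cancel₀ D.det_ne]
  have hΨtr : ∀ g, (Ψ g⁻¹).trace = (Ψ g).trace := by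
    intro g
    apply Subtype.coe_injective
    have h1 := trace_mapRep (algebraMap (invSub K M) K) Ψ g
    have h2 := trace_mapRep (algebraMap (invSub K M) K) Ψ g⁻¹
    rw [hΨm] at h1 h2
    exact h2.symm.trans ((D.selfdual g).trans h1)
  choose P hPmax hPp hPfin hPcard using
    fun p : {p : ℕ // p.Prime ∧ ¬ p ∣ M} => exists_reduction (K := K) p.2.1 p.2.2
  let fld : ∀ p, Field (invSub K M ⧸ P p) := fun p => Ideal.Quotient.field (P p)
  have hchar : ∀ p, CharP (invSub K M ⧸ P p) (p : ℕ) := by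
    intro p
    have hp0 : ((p : ℕ) : invSub K M ⧸ P p) = 0 := by
      have := Ideal.Quotient.eq_zero_iff_mem.2 (hPp p)
      rwa [map_natCast] at this
    have : Fact (p : ℕ).Prime := ⟨p.2.1⟩
    have := (hPmax p)
    exact (CharP.charP_iff_prime_eq_zero p.2.1).2 hp0
  let red : ∀ p : {p : ℕ // p.Prime ∧ ¬ p ∣ M}, Red G d D.e p := fun p =>
    { k := invSub K M ⧸ P p
      fld := fld p
      fin := hPfin p
      chr := hchar p
      σ := mapRep (Ideal.Quotient.mk (P p)) Ψ
      selfdual := fun g => by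
        have h1 := trace_mapRep (Ideal.Quotient.mk (P p)) Ψ g
        have h2 := trace_mapRep (Ideal.Quotient.mk (P p)) Ψ g⁻¹
        exact h2.trans ((congrArg _ (hΨtr g)).trans h1.symm)
      det_ne := by
        have h1 := entryDet_mapRep (Ideal.Quotient.mk (P p)) Ψ D.e
        intro h0
        have := (hPmax p)
        have h2 : IsUnit (Ideal.Quotient.mk (P p) (entryDet Ψ D.e)) := hunit.map _
        exact h2.ne_zero (h1.symm.trans h0) }
  have hent2 : ∀ g i j, ∃ t : ℕ, IsIntegral ℤ ((M : K) ^ t * D.ψ g i j) := hent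
  choose ex hex using hent2
  -- a common denominator of the entries of `a` and `b`
  set μ : ℕ := M ^ (∑ c : Bool, ∑ i, ∑ j, ex (if c then a else b) i j) with hμ
  have hμint : ∀ c : Bool, ∀ i j, IsIntegral ℤ ((μ : K) * D.ψ (if c then a else b) i j) := by
    intro c i j
    obtain ⟨t, ht⟩ : ∃ t, (∑ c : Bool, ∑ i, ∑ j, ex (if c then a else b) i j)
        = t + ex (if c then a else b) i j := by
      have h1 : ex (if c then a else b) i j ≤ ∑ j, ex (if c then a else b) i j :=
        Finset.single_le_sum (f := fun j => ex (if c then a else b) i j)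
          (fun _ _ => Nat.zero_le _) (Finset.mem_univ j)
      have h2 : ∑ j, ex (if c then a else b) i j ≤ ∑ i, ∑ j, ex (if c then a else b) i j :=
        Finset.single_le_sum (f := fun i => ∑ j, ex (if c then a else b) i j)
          (fun _ _ => Nat.zero_le _) (Finset.mem_univ i)
      have h3 : ∑ i, ∑ j, ex (if c then a else b) i j
          ≤ ∑ c : Bool, ∑ i, ∑ j, ex (if c then a else b) i j :=
        Finset.single_le_sum (f := fun c : Bool => ∑ i, ∑ j, ex (if c then a else b) i j)
          (fun _ _ => Nat.zero_le _) (Finset.mem_univ c)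
      exact ⟨_, (Nat.sub_add_cancel (h1.trans (h2.trans h3))).symm⟩
    have hMi : IsIntegral ℤ (M : K) := by
      simpa using (isIntegral_algebraMap : IsIntegral ℤ (algebraMap ℤ K (M : ℤ)))
    have e : (μ : K) * D.ψ (if c then a else b) i j = (M : K) ^ t *
        ((M : K) ^ ex (if c then a else b) i j * D.ψ (if c then a else b) i j) := by
      rw [hμ, ht]; push_cast; ring
    rw [e]
    exact (hMi.pow t).mul (hex _ i j)
  have hμ0 : (μ : K) ≠ 0 := by
    rw [hμ]; exact_mod_cast pow_ne_zero _ hM0.ne'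
  set B0 : ℝ := 1 + ∑ τ : K →+* ℂ, ∑ c : Bool, ∑ i, ∑ j,
    ‖τ ((μ : K) * D.ψ (if c then a else b) i j)‖ with hB0
  have hB01 : 1 ≤ B0 := by
    rw [hB0]; exact le_add_of_nonneg_right (by positivity)
  have hBd : ∀ (τ : K →+* ℂ) (c : Bool), ∀ i j,
      ‖τ ((μ : K) * D.ψ (if c then a else b) i j)‖ ≤ B0 := by
    intro τ c i j
    have h1 := Finset.single_le_sum (f := fun j => ‖τ ((μ : K) * D.ψ (if c then a else b) i j)‖)
      (fun _ _ => by positivity) (Finset.mem_univ j)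
    have h2 := Finset.single_le_sum
      (f := fun i => ∑ j, ‖τ ((μ : K) * D.ψ (if c then a else b) i j)‖)
      (fun _ _ => by positivity) (Finset.mem_univ i)
    have h3 := Finset.single_le_sum
      (f := fun c : Bool => ∑ i, ∑ j, ‖τ ((μ : K) * D.ψ (if c then a else b) i j)‖)
      (fun _ _ => by positivity) (Finset.mem_univ c)
    have h4 := Finset.single_le_sum
      (f := fun τ : K →+* ℂ => ∑ c : Bool, ∑ i, ∑ j,
        ‖τ ((μ : K) * D.ψ (if c then a else b) i j)‖)
      (fun _ _ => by positivity) (Finset.mem_univ τ)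
    beta_reduce at h1 h2 h3 h4
    linarith
  have hword := word_bound D.ψ a b (μ : K) B0 hμint hBd (by linarith)
  set B1 : ℝ := d * B0 with hB1
  have hd1 : (1 : ℝ) ≤ d := by
    have := D.two_le
    exact_mod_cast (by omega : 1 ≤ d)
  have hB11 : 1 ≤ B1 := by rw [hB1]; nlinarith
  have hB2 : 1 ≤ (2 * B1) ^ finrank ℚ K := one_le_pow₀ (by linarith)
  refine ⟨M, (2 * B1) ^ finrank ℚ K, hM0, Dvd.intro _ rfl, hB2, red, hPcard, ?_⟩
  intro S n hn
  set N := ⨅ p ∈ S, (red p).σ.ker with hN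
  have hNfi : N.FiniteIndex := by
    have hk : ∀ p, ((red p).σ.ker).FiniteIndex := fun p => finiteIndex_ker_matrix (red p).σ
    exact Subgroup.finiteIndex_iInf' _ fun p _ => hk p
  -- words of length `n` are pairwise distinct modulo the common kernel
  have hinj : Function.Injective
      (fun w : Fin n → Bool => (QuotientGroup.mk (evWord a b (List.ofFn w)) : G ⧸ N)) := by
    intro w w' hww
    apply List.ofFn_injective
    by_contra hne
    have hlen : (List.ofFn w).length = (List.ofFn w').length := by simp
    have hψ : D.ψ (evWord a b (List.ofFn w)) ≠ D.ψ (evWord a b (List.ofFn w')) :=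
      fun h => hne (hfree _ _ hlen h)
    obtain ⟨i, j, hij⟩ : ∃ i j, D.ψ (evWord a b (List.ofFn w)) i j
        ≠ D.ψ (evWord a b (List.ofFn w')) i j := by
      by_contra hcon
      push Not at hcon
      exact hψ (Matrix.ext hcon)
    obtain ⟨hi1, hb1⟩ := hword (List.ofFn w) i j
    obtain ⟨hi2, hb2⟩ := hword (List.ofFn w') i j
    rw [List.length_ofFn] at hi1 hi2 hb1 hb2
    obtain ⟨x, hx⟩ : ∃ x : 𝓞 K, (x : K) = (μ : K) ^ n * D.ψ (evWord a b (List.ofFn w)) i j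
      - (μ : K) ^ n * D.ψ (evWord a b (List.ofFn w')) i j := ⟨⟨_, hi1.sub hi2⟩, rfl⟩
    have hx0 : x ≠ 0 := by
      rintro rfl
      have hz : ((0 : 𝓞 K) : K) = 0 := rfl
      rw [hz, ← mul_sub] at hx
      rcases mul_eq_zero.1 hx.symm with h | h
      · exact pow_ne_zero _ hμ0 h
      · exact hij (sub_eq_zero.1 h)
    have hn0 : n ≠ 0 := by
      rintro rfl
      exact hne (by simp)
    have hmem := (QuotientGroup.eq).1 hww
    have hfx : ∀ p ∈ S, ((Ideal.Quotient.mk (P p)).comp (intToInv M)) x = 0 := by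
      intro p hp
      have h1 : (evWord a b (List.ofFn w))⁻¹ * evWord a b (List.ofFn w') ∈ (red p).σ.ker := by
        have := (Subgroup.mem_iInf.1 hmem) p
        exact (Subgroup.mem_iInf.1 this) hp
      have h2 : (red p).σ (evWord a b (List.ofFn w)) = (red p).σ (evWord a b (List.ofFn w')) :=
        (((red p).σ.eq_iff).2 h1).symm
      have h3 : Ideal.Quotient.mk (P p) (Ψ (evWord a b (List.ofFn w)) i j)
          = Ideal.Quotient.mk (P p) (Ψ (evWord a b (List.ofFn w')) i j) :=
        congrFun (congrFun h2 i) j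
      have h4 : intToInv M x = (μ : invSub K M) ^ n * (Ψ (evWord a b (List.ofFn w)) i j
          - Ψ (evWord a b (List.ofFn w')) i j) := by
        apply Subtype.ext
        change (x : K) = _
        rw [hx, ← mul_sub]
        rfl
      rw [RingHom.comp_apply, h4, map_mul, map_sub, h3, sub_self, mul_zero]
    have hfin := prod_le_of_mem S (fun p => (p : ℕ)) (fun p _ => p.2.1)
      (Subtype.coe_injective.injOn) (fun p => invSub K M ⧸ P p)
      (fun p => (Ideal.Quotient.mk (P p)).comp (intToInv M)) x hx0 hfx (2 * B1 ^ n) (fun τ => by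
        rw [hx, map_sub]
        refine (norm_sub_le _ _).trans ?_
        linarith [hb1 τ, hb2 τ])
    have hle : (2 * B1 ^ n) ^ finrank ℚ K ≤ ((2 * B1) ^ finrank ℚ K) ^ n := by
      exact two_mul_pow_le hB11 hn0 _
    exact absurd (hfin.trans hle) (not_le.2 hn)
  have hcard := Nat.card_le_card_of_injective _ hinj
  rw [Nat.card_fun, Nat.card_eq_fintype_card, Fintype.card_bool, Nat.card_eq_fintype_card,
    Fintype.card_fin] at hcard
  exact hcard

end LinRank

/-! ### Simple quotients of a finite-dimensional algebra -/

namespace LinRank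
open Module

/-- The simple quotients of a finite-dimensional algebra `A` over a field `k`: surjections `π i`
onto matrix algebras, jointly surjective, whose common kernel `J` is nilpotent. -/
structure Wed (k A : Type*) [Field k] [Ring A] [Algebra k A] where
  n : ℕ
  d : Fin n → ℕ
  pos : ∀ i, 0 < d i
  π : ∀ i, A →ₐ[k] Matrix (Fin (d i)) (Fin (d i)) k
  surj : ∀ f : ∀ i, Matrix (Fin (d i)) (Fin (d i)) k, ∃ a, ∀ i, π i a = f i
  J : Ideal A
  nil : IsNilpotent J
  mem : ∀ a, a ∈ J ↔ ∀ i, π i a = 0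

/-- The Wedderburn decomposition of `A / rad A`. -/
lemma exists_wed (k A : Type*) [Field k] [IsAlgClosed k] [Ring A] [Algebra k A]
    [FiniteDimensional k A] : Nonempty (Wed k A) := by
  have : IsArtinianRing A := IsArtinianRing.of_finite k A
  have hss : IsSemisimpleRing (A ⧸ Ring.jacobson A) := inferInstance
  have hfin : FiniteDimensional k (A ⧸ Ring.jacobson A) :=
    Module.Finite.of_surjective (Ideal.Quotient.mkₐ k (Ring.jacobson A)).toLinearMap
      Ideal.Quotient.mk_surjective
  obtain ⟨n, d, hd, ⟨e⟩⟩ :=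
    IsSemisimpleRing.exists_algEquiv_pi_matrix_of_isAlgClosed k (A ⧸ Ring.jacobson A)
  refine ⟨⟨n, d, fun i => Nat.pos_of_ne_zero (hd i).out,
    fun i => ((Pi.evalAlgHom k (fun i => Matrix (Fin (d i)) (Fin (d i)) k) i).comp e.toAlgHom).comp
      (Ideal.Quotient.mkₐ k (Ring.jacobson A)), ?_, Ring.jacobson A,
      IsSemiprimaryRing.isNilpotent, ?_⟩⟩
  · intro f
    obtain ⟨a, ha⟩ := Ideal.Quotient.mk_surjective (e.symm f)
    refine ⟨a, fun i => ?_⟩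
    change e (Ideal.Quotient.mk _ a) i = f i
    rw [ha, e.apply_symm_apply]
  · intro a
    rw [← Ideal.Quotient.eq_zero_iff_mem]
    constructor
    · intro h i
      change e (Ideal.Quotient.mk _ a) i = 0
      rw [h, map_zero]; rfl
    · intro h
      apply e.injective
      rw [map_zero]
      exact funext h

lemma trace_eq_zero_of_nilpotent {k : Type*} [Field k] {X : Type*} [Fintype X] [DecidableEq X]
    {M : Matrix X X k} (h : IsNilpotent M) : M.trace = 0 :=
  (Matrix.isNilpotent_trace_of_isNilpotent h).eq_zero

lemma matrix_eq_zero_of_nilpotent_mul {k : Type*} [Field k] {m : ℕ}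
    {M : Matrix (Fin m) (Fin m) k} (h : ∀ X, IsNilpotent (X * M)) : M = 0 := by
  ext r s
  have h1 := trace_eq_zero_of_nilpotent (h (Matrix.single s r 1))
  rw [Matrix.trace_single_mul] at h1
  simpa using h1

lemma matrix_eq_zero_of_mul_mul {k : Type*} [Field k] {m : ℕ}
    {M N : Matrix (Fin m) (Fin m) k} (h : ∀ X, M * X * N = 0) (hN : N ≠ 0) : M = 0 := by
  obtain ⟨a, b, hab⟩ : ∃ a b, N a b ≠ 0 := by
    by_contra hcon
    push Not at hcon
    exact hN (Matrix.ext hcon)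
  ext r s
  have h1 := congrFun (congrFun (h (Matrix.single s a 1)) r) b
  rw [Matrix.mul_apply, Finset.sum_eq_single a] at h1
  · rw [Matrix.mul_single_apply_same] at h1
    simpa [hab] using h1
  · intro c _ hc
    rw [Matrix.mul_single_apply_of_ne _ _ _ _ _ hc, zero_mul]
  · simp

/-- A nonzero idempotent matrix with one-dimensional corner has trace one. -/
lemma trace_eq_one_of_corner {k : Type*} [Field k] {m : ℕ}
    {M : Matrix (Fin m) (Fin m) k} (hM : M * M = M) (h0 : M ≠ 0)
    (hc : ∀ X, ∃ c : k, M * X * M = c • M) : M.trace = 1 := by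
  obtain ⟨r, s, hrs⟩ : ∃ a b, M a b ≠ 0 := by
    by_contra hcon
    push Not at hcon
    exact h0 (Matrix.ext hcon)
  obtain ⟨c, hc⟩ := hc (Matrix.single s r 1)
  have h1 : ∀ a b, M a s * M r b = c * M a b := by
    intro a b
    have h2 := congrFun (congrFun hc a) b
    rw [Matrix.mul_apply, Finset.sum_eq_single r] at h2
    · rw [Matrix.mul_single_apply_same] at h2
      simpa using h2
    · intro c _ hc
      rw [Matrix.mul_single_apply_of_ne _ _ _ _ _ hc, zero_mul]
    · simp
  have hcr : c = M r s := by
    have := h1 r s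
    exact (mul_right_cancel₀ hrs this).symm
  have h3 : M r s * M.trace = M r s := by
    conv_rhs => rw [← hM, Matrix.mul_apply]
    rw [Matrix.trace, Finset.mul_sum]
    refine Finset.sum_congr rfl fun a _ => ?_
    rw [Matrix.diag_apply, ← hcr, ← h1 a a, mul_comm]
  exact mul_left_cancel₀ hrs (h3.trans (mul_one _).symm)

namespace Wed
variable {k A : Type*} [Field k] [Ring A] [Algebra k A] (W : Wed k A)

/-- The irreducible characters. -/
noncomputable def χ (i : Fin W.n) : A →ₗ[k] k :=
  (Matrix.traceLinearMap (Fin (W.d i)) k k).comp (W.π i).toLinearMap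

lemma χ_apply (i : Fin W.n) (a : A) : W.χ i a = (W.π i a).trace := rfl

lemma exists_unit (i : Fin W.n) (r s : Fin (W.d i)) :
    ∃ u : A, W.π i u = Matrix.single r s 1 ∧ ∀ j, j ≠ i → W.π j u = 0 := by
  classical
  obtain ⟨u, hu⟩ := W.surj (Pi.single i (Matrix.single r s 1))
  refine ⟨u, by rw [hu, Pi.single_eq_same], fun j hj => by rw [hu, Pi.single_eq_of_ne hj]⟩

lemma exists_one (i : Fin W.n) : ∃ u : A, W.π i u = 1 ∧ ∀ j, j ≠ i → W.π j u = 0 := by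
  classical
  obtain ⟨u, hu⟩ := W.surj (Pi.single i 1)
  refine ⟨u, by rw [hu, Pi.single_eq_same], fun j hj => by rw [hu, Pi.single_eq_of_ne hj]⟩

lemma χ_unit (i : Fin W.n) : ∃ u : A, W.χ i u = 1 ∧ ∀ j, j ≠ i → W.χ j u = 0 := by
  obtain ⟨u, h1, h2⟩ := W.exists_unit i ⟨0, W.pos i⟩ ⟨0, W.pos i⟩
  refine ⟨u, ?_, fun j hj => ?_⟩
  · rw [χ_apply, h1, Matrix.trace_single_eq_same]
  · rw [χ_apply, h2 j hj, Matrix.trace_zero]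

lemma coeff_eq (c : Fin W.n → k) (i : Fin W.n) {u : A} (hu : W.χ i u = 1)
    (hu' : ∀ j, j ≠ i → W.χ j u = 0) : ∑ j, c j * W.χ j u = c i := by
  rw [Finset.sum_eq_single i, hu, mul_one]
  · intro j _ hj
    rw [hu' j hj, mul_zero]
  · simp

/-- A trace-like functional killing `J` is a combination of the irreducible characters. -/
lemma exists_combination (f : A →ₗ[k] k) (hf : ∀ a b, f (a * b) = f (b * a))
    (hJ : ∀ a ∈ W.J, f a = 0) : ∃ c : Fin W.n → k, ∀ a, f a = ∑ i, c i * W.χ i a := by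
  classical
  choose u hu hu' using W.exists_unit
  have hcongr : ∀ a b, (∀ i, W.π i a = W.π i b) → f a = f b := by
    intro a b h
    rw [← sub_eq_zero, ← map_sub]
    refine hJ _ ((W.mem _).2 fun i => ?_)
    rw [map_sub, h, sub_self]
  have hmul : ∀ i r s t, f (u i r s * u i s t) = f (u i r t) := by
    intro i r s t
    refine hcongr _ _ fun j => ?_
    rw [map_mul]
    by_cases hj : j = i
    · subst hj
      rw [hu, hu, hu, Matrix.single_mul_single_same, mul_one]
    · rw [hu' i r s j hj, hu' i r t j hj, zero_mul]
  have hzero : ∀ i r s s' t, s ≠ s' → f (u i r s * u i s' t) = 0 := by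
    intro i r s s' t hs
    rw [← map_zero f]
    refine hcongr _ _ fun j => ?_
    rw [map_mul, map_zero]
    by_cases hj : j = i
    · subst hj
      rw [hu, hu, Matrix.single_mul_single_of_ne _ _ _ _ hs]
    · rw [hu' i r s j hj, zero_mul]
  refine ⟨fun i => f (u i ⟨0, W.pos i⟩ ⟨0, W.pos i⟩), fun a => ?_⟩
  have hoff : ∀ i r s, r ≠ s → f (u i r s) = 0 := by
    intro i r s hrs
    rw [← hmul i r s s, hf, hzero i s s r s hrs.symm]
  have hdiag : ∀ i r, f (u i r r) = f (u i ⟨0, W.pos i⟩ ⟨0, W.pos i⟩) := by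
    intro i r
    rw [← hmul i r ⟨0, W.pos i⟩ r, hf, hmul]
  have ha : f a = f (∑ i, ∑ r, ∑ s, W.π i a r s • u i r s) := by
    refine hcongr _ _ fun j => ?_
    rw [map_sum, Finset.sum_eq_single j]
    · simp only [map_sum, map_smul, hu]
      conv_lhs => rw [Matrix.matrix_eq_sum_single (W.π j a)]
      simp only [Matrix.smul_single, smul_eq_mul, mul_one]
    · intro i _ hi
      simp only [map_sum, map_smul]
      refine Finset.sum_eq_zero fun r _ => Finset.sum_eq_zero fun s _ => ?_
      rw [hu' i r s j hi.symm, smul_zero]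
    · simp
  rw [ha, map_sum]
  refine Finset.sum_congr rfl fun i _ => ?_
  rw [χ_apply, Matrix.trace, Finset.mul_sum, map_sum]
  refine Finset.sum_congr rfl fun r _ => ?_
  rw [map_sum, Finset.sum_eq_single r]
  · rw [map_smul, hdiag, smul_eq_mul, mul_comm, Matrix.diag_apply]
  · intro s _ hs
    rw [map_smul, hoff i r s hs.symm, smul_zero]
  · simp

lemma isNilpotent_of_mem {a : A} (ha : a ∈ W.J) : IsNilpotent a := by
  obtain ⟨N, hN⟩ := W.nil
  refine ⟨N, ?_⟩
  have := Ideal.pow_mem_pow ha N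
  rw [hN] at this
  simpa using this

/-- Every surjection onto a matrix algebra is equivalent to one of the `π i`. -/
lemma exists_index {m : ℕ} (hm : 0 < m) (π' : A →ₐ[k] Matrix (Fin m) (Fin m) k)
    (hs : Function.Surjective π') :
    ∃ i, (∀ a, W.π i a = 0 ↔ π' a = 0) ∧ ∀ a, (π' a).trace = W.χ i a := by
  classical
  have : Nonempty (Fin m) := ⟨⟨0, hm⟩⟩
  have hJ : ∀ a ∈ W.J, π' a = 0 := by
    intro a ha
    apply matrix_eq_zero_of_nilpotent_mul
    intro X
    obtain ⟨b, rfl⟩ := hs X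
    rw [← map_mul]
    exact (W.isNilpotent_of_mem (W.J.mul_mem_left b ha)).map π'
  choose o ho ho' using W.exists_one
  have hsum : π' (∑ i, o i) = 1 := by
    rw [← map_one π', ← sub_eq_zero, ← map_sub]
    refine hJ _ ((W.mem _).2 fun j => ?_)
    rw [map_sub, map_sum, map_one, Finset.sum_eq_single j, ho, sub_self]
    · intro i _ hi
      exact ho' i j hi.symm
    · simp
  obtain ⟨i, hi⟩ : ∃ i, π' (o i) ≠ 0 := by
    by_contra hcon
    push Not at hcon
    rw [map_sum, Finset.sum_eq_zero fun i _ => hcon i] at hsum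
    exact zero_ne_one hsum
  have hk1 : ∀ a, W.π i a = 0 → π' a = 0 := by
    intro a ha
    refine matrix_eq_zero_of_mul_mul (fun X => ?_) hi
    obtain ⟨b, rfl⟩ := hs X
    rw [← map_mul, ← map_mul]
    refine hJ _ ((W.mem _).2 fun j => ?_)
    by_cases hj : j = i
    · subst hj
      rw [map_mul, map_mul, ha, zero_mul, zero_mul]
    · rw [map_mul, ho' i j hj, mul_zero]
  have hcongr : ∀ a b, W.π i a = W.π i b → π' a = π' b := by
    intro a b h
    rw [← sub_eq_zero, ← map_sub]
    exact hk1 _ (by rw [map_sub, h, sub_self])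
  choose u hu hu' using W.exists_unit
  have hk2 : ∀ a, π' a = 0 → W.π i a = 0 := by
    intro a ha
    by_contra hne
    obtain ⟨s, t, hst⟩ : ∃ s t, W.π i a s t ≠ 0 := by
      by_contra hcon
      push Not at hcon
      exact hne (Matrix.ext hcon)
    have h1 : π' (∑ r, (W.π i a s t)⁻¹ • (u i r s * a * u i t r)) = π' 1 := by
      apply hcongr
      rw [map_sum, map_one]
      simp only [map_smul, map_mul, hu]
      ext x y
      rw [Matrix.sum_apply, Matrix.one_apply, Finset.sum_eq_single x]
      · split_ifs with hxy
        · subst hxy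
          simp [hst]
        · simp [hxy]
      · intro r _ hr
        rw [Matrix.smul_apply, mul_assoc, Matrix.single_mul_apply_of_ne _ _ _ _ _ hr.symm,
          smul_zero]
      · simp
    rw [map_one, map_sum, Finset.sum_eq_zero] at h1
    · exact zero_ne_one h1
    · intro r _
      rw [map_smul, map_mul, map_mul, ha, mul_zero, zero_mul, smul_zero]
  refine ⟨i, fun a => ⟨hk1 a, hk2 a⟩, ?_⟩
  obtain ⟨c, hc⟩ := W.exists_combination
    ((Matrix.traceLinearMap (Fin m) k k).comp π'.toLinearMap)
    (fun a b => by
      change (π' (a * b)).trace = (π' (b * a)).trace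
      rw [map_mul, map_mul, Matrix.trace_mul_comm])
    (fun a ha => by
      change (π' a).trace = 0
      rw [hJ a ha, Matrix.trace_zero])
  have hc' : ∀ a, (π' a).trace = ∑ i, c i * W.χ i a := hc
  have hcj : ∀ j, j ≠ i → c j = 0 := by
    intro j hj
    set v := u j ⟨0, W.pos j⟩ ⟨0, W.pos j⟩ with hv
    have h1 := W.coeff_eq c j (u := v) (by rw [χ_apply, hv, hu, Matrix.trace_single_eq_same])
      (fun l hl => by rw [χ_apply, hv, hu' _ _ _ _ hl, Matrix.trace_zero])
    rw [← h1, ← hc', hk1 v (hu' _ _ _ _ hj.symm), Matrix.trace_zero]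
  have hci : c i = 1 := by
    set z : Fin (W.d i) := ⟨0, W.pos i⟩
    set v := u i z z with hv
    have h1 := W.coeff_eq c i (u := v) (by rw [χ_apply, hv, hu, Matrix.trace_single_eq_same])
      (fun l hl => by rw [χ_apply, hv, hu' _ _ _ _ hl, Matrix.trace_zero])
    rw [← h1, ← hc']
    apply trace_eq_one_of_corner
    · rw [← map_mul]
      apply hcongr
      rw [map_mul, hv, hu, Matrix.single_mul_single_same, mul_one]
    · intro h0
      have := hk2 v h0
      rw [hv, hu] at this
      have := congrFun (congrFun this z) z
      simp at this
    · intro X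
      obtain ⟨b, rfl⟩ := hs X
      refine ⟨W.π i b z z, ?_⟩
      rw [← map_mul, ← map_mul, ← map_smul]
      apply hcongr
      rw [map_mul, map_mul, map_smul, hv, hu]
      ext x y
      by_cases hy : y = z
      · by_cases hx : x = z
        · subst hx hy
          simp
        · subst hy
          simp [Matrix.single_mul_apply_of_ne _ _ _ _ _ hx, Ne.symm hx]
      · simp [Matrix.mul_single_apply_of_ne _ _ _ _ _ hy, Ne.symm hy]
  intro a
  rw [hc', Finset.sum_eq_single i, hci, one_mul]
  · intro j _ hj
    rw [hcj j hj, zero_mul]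
  · simp

end Wed

end LinRank

/-! ### Modular characters and Frobenius -/

namespace LinRank
open Module

section frob
variable {K : Type*} [Group K]

/-- Raising to the power `q` projects onto the `p`-regular part. -/
lemma exists_frob (K : Type*) [Group K] [Finite K] (p : ℕ) (hp : p.Prime) :
    ∃ N, 0 < N ∧ ∀ x : K, (x ^ p ^ N) ^ p ^ N = x ^ p ^ N := by
  obtain ⟨a, m, hm, hK⟩ := Nat.exists_eq_pow_mul_and_not_dvd (Nat.card_pos (α := K)).ne' p
    hp.ne_one
  have hm0 : 0 < m := Nat.pos_of_ne_zero fun h => hm (h ▸ dvd_zero p)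
  have hcop : p.Coprime m := (Nat.Prime.coprime_iff_not_dvd hp).2 hm
  refine ⟨(a + 1) * m.totient, Nat.mul_pos (Nat.succ_pos a) (Nat.totient_pos.2 hm0), fun x => ?_⟩
  set N := (a + 1) * m.totient with hN
  have h1 : p ^ N ≡ 1 [MOD m] := by
    rw [hN, mul_comm, pow_mul]
    simpa using (Nat.ModEq.pow_totient hcop).pow (a + 1)
  have h2 : p ^ a ∣ p ^ N := pow_dvd_pow p (by
    have := Nat.totient_pos.2 hm0
    nlinarith)
  have h3 : p ^ N * p ^ N ≡ p ^ N [MOD Nat.card K] := by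
    rw [hK]
    have h4 : p ^ N * p ^ N ≡ p ^ N * 1 [MOD p ^ N * m] := Nat.ModEq.mul_left' _ h1
    rw [mul_one] at h4
    exact h4.of_dvd (Nat.mul_dvd_mul_right h2 m)
  rw [← pow_mul]
  exact pow_eq_pow_iff_modEq.2 (h3.of_dvd (orderOf_dvd_natCard x))

/-- The power projecting onto the `p`-regular part kills `p`-elements. -/
lemma frob_eq_one {p N : ℕ} (hN : 0 < N) {x : K}
    (h : ∀ x : K, (x ^ p ^ N) ^ p ^ N = x ^ p ^ N) {b : ℕ} (hb : x ^ p ^ b = 1) :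
    x ^ p ^ N = 1 := by
  have h1 : ∀ j, (x ^ p ^ N) ^ p ^ (N * j) = x ^ p ^ N := by
    intro j
    induction j with
    | zero => simp
    | succ j ih => rw [Nat.mul_succ, pow_add, pow_mul, ih, h]
  obtain ⟨t, ht⟩ := Nat.exists_eq_add_of_le (Nat.le_mul_of_pos_left b hN)
  rw [← h1 b, ht, pow_add, pow_mul, ← pow_mul x, mul_comm (p ^ N), pow_mul x, hb, one_pow, one_pow]

/-- A group of odd order has no nontrivial element conjugate to its inverse. -/
lemma eq_one_of_conj_inv [Finite K] (hodd : Odd (Nat.card K)) {g : K} (h : IsConj g g⁻¹) : g = 1 := by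
  obtain ⟨c, hc⟩ := isConj_iff.1 h
  obtain ⟨t, ht⟩ := hodd
  have hpow : ∀ x : K, (x ^ 2) ^ (t + 1) = x := by
    intro x
    rw [← pow_mul, show 2 * (t + 1) = Nat.card K + 1 by omega, pow_succ, pow_card_eq_one', one_mul]
  have h1 : Commute (c ^ 2) g := by
    have : c * g⁻¹ * c⁻¹ = g := by
      have := congrArg (fun x => x⁻¹) hc
      simpa [mul_assoc] using this
    have h2 : c * (c * g * c⁻¹) * c⁻¹ = g := by rw [hc, this]
    rw [Commute, SemiconjBy]
    calc c ^ 2 * g = c * (c * g * c⁻¹) * c⁻¹ * c ^ 2 := by simp only [pow_two]; group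
      _ = g * c ^ 2 := by rw [h2]
  have h2 : Commute c g := by
    have := h1.pow_left (t + 1)
    rwa [hpow] at this
  have h3 : g = g⁻¹ := by
    rw [← hc, h2.eq, mul_inv_cancel_right]
  have h4 : g ^ 2 = 1 := by
    rw [pow_two]
    nth_rewrite 2 [h3]
    exact mul_inv_cancel g
  rw [← hpow g, h4, one_pow]

end frob

section chars
variable {k K : Type*} [Field k] [Group K] (W : Wed k (MonoidAlgebra k K))

/-- The irreducible characters as functions on the group. -/
noncomputable def ch (i : Fin W.n) (g : K) : k := W.χ i (MonoidAlgebra.of k K g)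

lemma ch_conj (i : Fin W.n) (c g : K) : ch W i (c * g * c⁻¹) = ch W i g := by
  have h1 : MonoidAlgebra.of k K c⁻¹ * MonoidAlgebra.of k K c = 1 := by
    rw [← map_mul, inv_mul_cancel, map_one]
  rw [ch, ch, W.χ_apply, W.χ_apply, map_mul, map_mul, map_mul, map_mul, Matrix.trace_mul_comm,
    ← mul_assoc, ← map_mul, h1, map_one, one_mul]

lemma ch_frob {p : ℕ} [Fact p.Prime] [CharP k p] {N : ℕ}
    (h : ∀ x : K, (x ^ p ^ N) ^ p ^ N = x ^ p ^ N) (i : Fin W.n) (g : K) :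
    ch W i (g ^ p ^ N) = ch W i g := by
  rw [ch, ch, W.χ_apply, W.χ_apply, ← sub_eq_zero, ← Matrix.trace_sub]
  apply trace_eq_zero_of_nilpotent
  have : Nonempty (Fin (W.d i)) := ⟨⟨0, W.pos i⟩⟩
  have hch : CharP (Matrix (Fin (W.d i)) (Fin (W.d i)) k) p := inferInstance
  refine ⟨p ^ N, ?_⟩
  rw [sub_pow_char_pow_of_commute p N, ← map_pow, ← map_pow, h, ← map_pow, ← map_pow, sub_self]
  rw [map_pow, map_pow]
  exact Commute.pow_left (Commute.refl _) _

lemma eq_on_of {E : Type*} [AddCommGroup E] [Module k E] {f f' : MonoidAlgebra k K →ₗ[k] E}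
    (h : ∀ g, f (MonoidAlgebra.of k K g) = f' (MonoidAlgebra.of k K g)) (a : MonoidAlgebra k K) :
    f a = f' a := by
  induction a using MonoidAlgebra.induction_on with
  | of m => exact h m
  | add x y hx hy => rw [map_add, map_add, hx, hy]
  | smul r x hx => rw [map_smul, map_smul, hx]

lemma ch_injective {c : Fin W.n → k} (h : ∀ g, ∑ i, c i * ch W i g = 0) : c = 0 := by
  have h1 : ∀ a, (∑ i, c i • W.χ i) a = 0 := by
    intro a
    refine eq_on_of (f' := 0) (fun g => ?_) a
    simpa [ch] using h g
  funext i
  obtain ⟨u, hu, hu'⟩ := W.χ_unit i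
  rw [← W.coeff_eq c i hu hu']
  simpa using h1 u

/-- Permutation matrices. -/
noncomputable def fnMat {X : Type*} [Fintype X] [DecidableEq X] (s : X → X) : Matrix X X k :=
  Matrix.of fun x y => if s y = x then 1 else 0

lemma fnMat_mul {X : Type*} [Fintype X] [DecidableEq X] (s t : X → X) :
    (fnMat s * fnMat t : Matrix X X k) = fnMat (s ∘ t) := by
  ext x y
  rw [Matrix.mul_apply, Finset.sum_eq_single (t y)]
  · simp [fnMat]
  · intro z _ hz
    simp [fnMat, Ne.symm hz]
  · simp

lemma fnMat_id {X : Type*} [Fintype X] [DecidableEq X] :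
    (fnMat (id : X → X) : Matrix X X k) = 1 := by
  ext x y
  simp [fnMat, Matrix.one_apply, eq_comm]

lemma trace_fnMat {X : Type*} [Fintype X] [DecidableEq X] (s : X → X) :
    (fnMat s : Matrix X X k).trace = (Nat.card {x // s x = x} : k) := by
  rw [Matrix.trace, Nat.card_eq_fintype_card, Fintype.card_subtype, ← Finset.sum_boole]
  rfl

/-- The number of fixed points of `g` twisted by an equivariant map `r` is a combination of
irreducible characters. -/
lemma exists_combination_fixed {X : Type*} [Finite X] [MulAction K X] (r : X → X)
    (hr : ∀ (g : K) x, r (g • x) = g • r x) :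
    ∃ c : Fin W.n → k, ∀ g : K, (Nat.card {x // g • r x = x} : k) = ∑ i, c i * ch W i g := by
  classical
  have := Fintype.ofFinite X
  let L₀ : K →* Matrix X X k :=
    { toFun := fun g => fnMat fun x => g • x
      map_one' := by
        rw [← fnMat_id]
        congr 1
        funext x
        exact one_smul K x
      map_mul' := fun g h => by
        rw [fnMat_mul]
        congr 1
        funext x
        exact mul_smul g h x }
  let L : MonoidAlgebra k K →ₐ[k] Matrix X X k := MonoidAlgebra.lift k _ K L₀
  set R : Matrix X X k := fnMat r
  have hL : ∀ g, L (MonoidAlgebra.of k K g) = fnMat fun x => g • x := fun g =>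
    MonoidAlgebra.lift_of L₀ g
  have hcomm : ∀ a, L a * R = R * L a := by
    refine eq_on_of (f := (LinearMap.mulRight k R).comp L.toLinearMap)
      (f' := (LinearMap.mulLeft k R).comp L.toLinearMap) fun g => ?_
    change L _ * R = R * L _
    rw [hL, fnMat_mul, fnMat_mul]
    congr 1
    funext x
    exact (hr g x).symm
  obtain ⟨c, hc⟩ := W.exists_combination
    ((Matrix.traceLinearMap X k k).comp ((LinearMap.mulRight k R).comp L.toLinearMap))
    (fun a b => by
      change (L (a * b) * R).trace = (L (b * a) * R).trace
      rw [map_mul, map_mul, mul_assoc, Matrix.trace_mul_comm, hcomm b, mul_assoc,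
        Matrix.trace_mul_comm])
    (fun a ha => by
      change (L a * R).trace = 0
      apply trace_eq_zero_of_nilpotent
      exact Commute.isNilpotent_mul_right (hcomm a) ((W.isNilpotent_of_mem ha).map L))
  refine ⟨c, fun g => ?_⟩
  have h1 : (L (MonoidAlgebra.of k K g) * R).trace = ∑ i, c i * ch W i g := hc _
  rw [← h1, hL, fnMat_mul, trace_fnMat]
  rfl

end chars

end LinRank

/-! ### Characters as class functions on p-regular elements -/

namespace LinRank
open Module

section indicator
variable {k K : Type*} [Field k] [Group K] [Finite K] (W : Wed k (MonoidAlgebra k K))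
  {p : ℕ} [Fact p.Prime] [CharP k p] {N : ℕ}

/-- On `p`-regular elements, the indicator function of the class of a `p`-regular element `c` is a
combination of irreducible characters: twist the permutation module on the cosets of a Sylow
`p`-subgroup of the centralizer of `c` by right translation by `c⁻¹`. -/
lemma exists_indicator (hN : 0 < N) (h : ∀ x : K, (x ^ p ^ N) ^ p ^ N = x ^ p ^ N) (c : K)
    (hc : c ^ p ^ N = c) : ∃ v : Fin W.n → k, (∑ i, v i * ch W i c = 1) ∧
      ∀ g : K, g ^ p ^ N = g → ¬ IsConj c g → ∑ i, v i * ch W i g = 0 := by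
  classical
  let C := Subgroup.centralizer ({c} : Set K)
  have hC : ∀ z, z ∈ C ↔ z * c = c * z := by
    intro z
    rw [Subgroup.mem_centralizer_singleton_iff]
  let P0 : Sylow p C := default
  let P : Subgroup K := (P0 : Subgroup C).map C.subtype
  have hPC : ∀ u ∈ P, u * c = c * u := by
    rintro _ ⟨w, _, rfl⟩
    exact (hC _).1 w.2
  have hPp : ∀ u ∈ P, ∃ b, u ^ p ^ b = 1 := by
    rintro _ ⟨w, hw, rfl⟩
    obtain ⟨b, hb⟩ := P0.isPGroup' ⟨w, hw⟩
    refine ⟨b, ?_⟩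
    have := congrArg (fun z : (P0 : Subgroup C) => ((z : C) : K)) hb
    simpa using this
  -- right translation by `c⁻¹` on the cosets, well defined because `P` centralizes `c`
  let r : K ⧸ P → K ⧸ P := Quotient.map' (fun y => y * c⁻¹) (by
    intro a b hab
    rw [QuotientGroup.leftRel_apply] at hab ⊢
    have h1 := hPC _ hab
    have e : (a * c⁻¹)⁻¹ * (b * c⁻¹) = c * (a⁻¹ * b) * c⁻¹ := by group
    rw [e, ← h1, mul_inv_cancel_right]
    exact hab)
  have hr : ∀ (g : K) x, r (g • x) = g • r x := by
    intro g x
    induction x using Quotient.inductionOn' with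
    | h y =>
      change ((g * y * c⁻¹ : K) : K ⧸ P) = ((g * (y * c⁻¹) : K) : K ⧸ P)
      rw [mul_assoc]
  have hfix : ∀ g y : K, g ^ p ^ N = g → g • r (y : K ⧸ P) = (y : K ⧸ P) → y⁻¹ * g * y = c := by
    intro g y hg hy
    have h1 : ((g * (y * c⁻¹) : K) : K ⧸ P) = (y : K ⧸ P) := hy
    have h2 := QuotientGroup.eq.1 h1
    set u := (g * (y * c⁻¹))⁻¹ * y with hu
    have h3 : y⁻¹ * g * y = c * u⁻¹ := by
      rw [← hPC _ (P.inv_mem h2), hu]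
      group
    obtain ⟨b, hb⟩ := hPp _ (P.inv_mem h2)
    have h5 := frob_eq_one hN h hb
    have h6 : Commute c u⁻¹ := (hPC _ (P.inv_mem h2)).symm
    have h7 : (y⁻¹ * g * y) ^ p ^ N = y⁻¹ * g * y := by
      have := conj_pow (i := p ^ N) (a := y⁻¹) (b := g)
      rw [inv_inv] at this
      rw [this, hg]
    rw [← h7, h3, h6.mul_pow, h5, hc, mul_one]
  obtain ⟨v, hv⟩ := exists_combination_fixed W r hr
  -- the fixed points of `c` are the cosets of `P` inside the centralizer; their number is prime to `p`
  have hcard : Nat.card {x // c • r x = x} = (P0 : Subgroup C).index := by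
    let ψ : C ⧸ (P0 : Subgroup C) → K ⧸ P := Quotient.map' (fun z => (z : K)) (by
      intro a b hab
      rw [QuotientGroup.leftRel_apply] at hab ⊢
      exact ⟨_, hab, rfl⟩)
    have hψ : ∀ z, c • r (ψ z) = ψ z := by
      intro z
      induction z using Quotient.inductionOn' with
      | h y =>
        change ((c * (y * c⁻¹) : K) : K ⧸ P) = ((y : K) : K ⧸ P)
        rw [← mul_assoc, ← (hC _).1 y.2, mul_inv_cancel_right]
    rw [Subgroup.index]
    symm
    apply Nat.card_eq_of_bijective (fun z => (⟨ψ z, hψ z⟩ : {x // c • r x = x}))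
    constructor
    · intro z z' hz
      have hz' := congrArg Subtype.val hz
      induction z using Quotient.inductionOn' with
      | h y =>
      induction z' using Quotient.inductionOn' with
      | h y' =>
        have h1 : ((y : K) : K ⧸ P) = ((y' : K) : K ⧸ P) := hz'
        obtain ⟨w, hw, hw'⟩ := QuotientGroup.eq.1 h1
        apply QuotientGroup.eq.2
        have : w = y⁻¹ * y' := Subtype.ext hw'
        rw [← this]
        exact hw
    · rintro ⟨x, hx⟩
      induction x using Quotient.inductionOn' with
      | h y =>
        have h1 := hfix c y hc hx
        have h2 : y ∈ C := by
          rw [hC]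
          nth_rewrite 1 [← h1]
          group
        exact ⟨((⟨y, h2⟩ : C) : C ⧸ (P0 : Subgroup C)), rfl⟩
  have hne : ((Nat.card {x // c • r x = x} : ℕ) : k) ≠ 0 := by
    rw [hcard, Ne, CharP.cast_eq_zero_iff k p]
    exact P0.not_dvd_index
  refine ⟨fun i => ((Nat.card {x // c • r x = x} : ℕ) : k)⁻¹ * v i, ?_, ?_⟩
  · simp only [mul_assoc]
    rw [← Finset.mul_sum, ← hv, inv_mul_cancel₀ hne]
  · intro g hg hcg
    simp only [mul_assoc]
    rw [← Finset.mul_sum, ← hv]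
    have : IsEmpty {x // g • r x = x} := by
      refine ⟨?_⟩
      rintro ⟨x, hx⟩
      induction x using Quotient.inductionOn' with
      | h y =>
        have h1 := hfix g y hg hx
        refine hcg (isConj_iff.2 ⟨y, ?_⟩)
        rw [← h1]
        group
    rw [Nat.card_of_isEmpty (α := {x // g • r x = x}), Nat.cast_zero, mul_zero]

/-- The irreducible characters span the class functions that only depend on `p`-regular parts. -/
lemma exists_combination_regular (hN : 0 < N) (h : ∀ x : K, (x ^ p ^ N) ^ p ^ N = x ^ p ^ N)
    (f : K → k) (hf : ∀ c g, f (c * g * c⁻¹) = f g) (hf' : ∀ g, f (g ^ p ^ N) = f g) :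
    ∃ v : Fin W.n → k, ∀ g, f g = ∑ i, v i * ch W i g := by
  classical
  have := Fintype.ofFinite K
  have hex : ∀ κ : ConjClasses K, ∃ v : Fin W.n → k, ∀ g, g ^ p ^ N = g →
      ∑ i, v i * ch W i g = if ConjClasses.mk g = κ then 1 else 0 := by
    intro κ
    obtain ⟨c, rfl⟩ := ConjClasses.mk_surjective κ
    by_cases hc : c ^ p ^ N = c
    · obtain ⟨v, hv, hv'⟩ := exists_indicator W hN h c hc
      refine ⟨v, fun g hg => ?_⟩
      split_ifs with hcg
      · obtain ⟨y, hy⟩ := isConj_iff.1 (ConjClasses.mk_eq_mk_iff_isConj.1 hcg).symm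
        rw [← hv]
        refine Finset.sum_congr rfl fun i _ => ?_
        rw [← hy, ch_conj]
      · exact hv' g hg fun hh => hcg (ConjClasses.mk_eq_mk_iff_isConj.2 hh.symm)
    · refine ⟨0, fun g hg => ?_⟩
      rw [if_neg]
      · simp
      · intro hcg
        obtain ⟨y, hy⟩ := isConj_iff.1 (ConjClasses.mk_eq_mk_iff_isConj.1 hcg)
        refine hc ?_
        rw [← hy, conj_pow, hg]
  choose v hv using hex
  have hconj : ∀ a b, ConjClasses.mk a = ConjClasses.mk b → f a = f b := by
    intro a b hab
    obtain ⟨y, hy⟩ := isConj_iff.1 (ConjClasses.mk_eq_mk_iff_isConj.1 hab)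
    rw [← hy, hf]
  refine ⟨fun i => ∑ κ : ConjClasses K, f κ.out * v κ i, fun g => ?_⟩
  have h1 : ∀ g, g ^ p ^ N = g → f g = ∑ i, (∑ κ : ConjClasses K, f κ.out * v κ i) * ch W i g := by
    intro g hg
    simp only [Finset.sum_mul]
    rw [Finset.sum_comm]
    simp only [mul_assoc, ← Finset.mul_sum]
    rw [Finset.sum_eq_single (ConjClasses.mk g)]
    · rw [hv _ g hg, if_pos rfl, mul_one]
      exact hconj _ _ (Quotient.out_eq (ConjClasses.mk g)).symm
    · intro κ _ hκ
      rw [hv _ g hg, if_neg (Ne.symm hκ), mul_zero]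
    · simp
  rw [← hf' g, h1 _ (h g)]
  refine Finset.sum_congr rfl fun i _ => ?_
  rw [ch_frob W h]

end indicator

end LinRank

/-! ### Self-dual characters of groups of odd order -/

namespace LinRank
open Module

section dual
variable {k K : Type*} [Field k] [Group K] (W : Wed k (MonoidAlgebra k K))

/-- The contragredient of an irreducible representation. -/
lemma exists_dual (i : Fin W.n) : ∃ j, ∀ g, ch W j g = ch W i g⁻¹ := by
  let φ : K →* Matrix (Fin (W.d i)) (Fin (W.d i)) k :=
    { toFun := fun g => (W.π i (MonoidAlgebra.of k K g⁻¹)).transpose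
      map_one' := by rw [inv_one, map_one, map_one, Matrix.transpose_one]
      map_mul' := fun g h => by
        rw [mul_inv_rev, map_mul, map_mul, Matrix.transpose_mul] }
  let π' : MonoidAlgebra k K →ₐ[k] Matrix (Fin (W.d i)) (Fin (W.d i)) k :=
    MonoidAlgebra.lift k _ K φ
  have hπ' : ∀ g, π' (MonoidAlgebra.of k K g) = (W.π i (MonoidAlgebra.of k K g⁻¹)).transpose :=
    fun g => MonoidAlgebra.lift_of φ g
  have hs : Function.Surjective π' := by
    intro M
    obtain ⟨a, ha⟩ : ∃ a, W.π i a = M.transpose := by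
      classical
      obtain ⟨a, ha⟩ := W.surj (Pi.single i M.transpose)
      exact ⟨a, by rw [ha, Pi.single_eq_same]⟩
    have h1 : ∀ a, ∃ b, π' b = (W.π i a).transpose := by
      intro a
      induction a using MonoidAlgebra.induction_on with
      | of g => exact ⟨MonoidAlgebra.of k K g⁻¹, by rw [hπ', inv_inv]⟩
      | add x y hx hy =>
        obtain ⟨b, hb⟩ := hx
        obtain ⟨c, hc⟩ := hy
        exact ⟨b + c, by rw [map_add, map_add, hb, hc, Matrix.transpose_add]⟩
      | smul r x hx =>
        obtain ⟨b, hb⟩ := hx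
        exact ⟨r • b, by rw [map_smul, map_smul, hb, Matrix.transpose_smul]⟩
    obtain ⟨b, hb⟩ := h1 a
    exact ⟨b, by rw [hb, ha, Matrix.transpose_transpose]⟩
  obtain ⟨j, _, hj⟩ := W.exists_index (W.pos i) π' hs
  refine ⟨j, fun g => ?_⟩
  rw [ch, ← hj, hπ', Matrix.trace_transpose, ch, W.χ_apply]

lemma exists_trivial : ∃ i, (∀ g, ch W i g = 1) ∧ ∀ g, W.π i (MonoidAlgebra.of k K g) = 1 := by
  let φ : K →* Matrix (Fin 1) (Fin 1) k := 1
  let π' : MonoidAlgebra k K →ₐ[k] Matrix (Fin 1) (Fin 1) k := MonoidAlgebra.lift k _ K φ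
  have hπ' : ∀ g, π' (MonoidAlgebra.of k K g) = 1 := fun g => MonoidAlgebra.lift_of φ g
  have hs : Function.Surjective π' := by
    intro M
    refine ⟨M 0 0 • 1, ?_⟩
    rw [map_smul, map_one]
    ext a b
    rw [Subsingleton.elim a 0, Subsingleton.elim b 0]
    simp
  obtain ⟨i, hi, hi'⟩ := W.exists_index one_pos π' hs
  refine ⟨i, fun g => ?_, fun g => ?_⟩
  · rw [ch, ← hi', hπ']
    simp
  · rw [← sub_eq_zero, ← map_one (W.π i), ← map_sub, hi, map_sub, hπ', map_one, sub_self]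

lemma ch_inj {i j : Fin W.n} (h : ∀ g, ch W i g = ch W j g) : i = j := by
  classical
  by_contra hij
  have h1 := ch_injective W (c := Pi.single i 1 - Pi.single j 1) (fun g => by
    simp [sub_mul, Finset.sum_sub_distrib, Pi.single_apply, h g])
  have h2 := congrFun h1 i
  simp [hij] at h2

end dual

/-- The sign of a comparison. -/
def cmpSign (k : Type*) [Field k] {α : Type*} [LinearOrder α] (a b : α) : k :=
  if a < b then 1 else if b < a then -1 else 0

lemma cmpSign_swap (k : Type*) [Field k] {α : Type*} [LinearOrder α] (a b : α) :
    cmpSign k b a = -cmpSign k a b := by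
  unfold cmpSign
  rcases lt_trichotomy a b with h | h | h
  · simp [h, h.not_gt]
  · simp [h]
  · simp [h, h.not_gt]

lemma cmpSign_eq_zero (k : Type*) [Field k] {α : Type*} [LinearOrder α] {a b : α}
    (h : cmpSign k a b = 0) : a = b := by
  unfold cmpSign at h
  rcases lt_trichotomy a b with h' | h' | h'
  · simp [h'] at h
  · exact h'
  · simp [h', h'.not_gt] at h

lemma cmpSign_self (k : Type*) [Field k] {α : Type*} [LinearOrder α] (a : α) :
    cmpSign k a a = 0 := by
  simp [cmpSign]

section brauer
variable {k K : Type*} [Field k] [Group K] [Finite K] (W : Wed k (MonoidAlgebra k K))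

/-- In a group of odd order at most one irreducible character is self-dual. In the span of the
irreducible characters, i.e. the class functions that depend only on the `p`-regular part, consider
the functions that are symmetric, resp. antisymmetric, under inversion. Two self-dual characters would
make the symmetric part exceed the antisymmetric one by at least 2 in dimension. No nontrivial class of
`p`-regular elements is closed under inversion, so multiplication by a sign that is odd under inversion
shows that the excess is at most 1. -/
theorem selfdual_unique (p : ℕ) [Fact p.Prime] [CharP k p] (h2 : (2 : k) ≠ 0)
    (hodd : Odd (Nat.card K)) {i₀ i₁ : Fin W.n}
    (h₀ : ∀ g, ch W i₀ g⁻¹ = ch W i₀ g) (h₁ : ∀ g, ch W i₁ g⁻¹ = ch W i₁ g) : i₁ = i₀ := by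
  classical
  by_contra hne
  obtain ⟨N, hN, hfr⟩ := exists_frob K p Fact.out
  choose τ hτ using exists_dual W
  have hτ0 : τ i₀ = i₀ := ch_inj W fun g => by rw [hτ, h₀]
  have hτ1 : τ i₁ = i₁ := ch_inj W fun g => by rw [hτ, h₁]
  have hττ : ∀ i, τ (τ i) = i := fun i => ch_inj W fun g => by rw [hτ, hτ, inv_inv]
  let τe : Equiv.Perm (Fin W.n) := ⟨τ, τ, hττ, hττ⟩
  let T : (Fin W.n → k) →ₗ[k] (K → k) :=
    { toFun := fun v g => ∑ i, v i * ch W i g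
      map_add' := fun v w => by
        funext g
        simp [add_mul, Finset.sum_add_distrib]
      map_smul' := fun c v => by
        funext g
        simp [mul_assoc, Finset.mul_sum] }
  have hT : ∀ v g, T v g = ∑ i, v i * ch W i g := fun _ _ => rfl
  have hTinj : ∀ v, T v = 0 → v = 0 := fun v hv => ch_injective W fun g => congrFun hv g
  have hTinv : ∀ v g, T v g⁻¹ = T (v ∘ τ) g := by
    intro v g
    rw [hT, hT, ← Equiv.sum_comp τe]
    refine Finset.sum_congr rfl fun i _ => ?_
    change v (τ i) * ch W (τ i) g⁻¹ = v (τ i) * ch W i g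
    rw [hτ, inv_inv]
  have hTconj : ∀ v c g, T v (c * g * c⁻¹) = T v g := by
    intro v c g
    simp only [hT, ch_conj]
  have hTfr : ∀ v g, T v (g ^ p ^ N) = T v g := by
    intro v g
    simp only [hT, ch_frob W hfr]
  let Anti : Submodule k (Fin W.n → k) :=
    { carrier := {v | ∀ i, v (τ i) = -v i}
      add_mem' := fun {a b} ha hb i => by
        rw [Pi.add_apply, Pi.add_apply, ha i, hb i, neg_add]
      zero_mem' := fun i => by simp
      smul_mem' := fun c v hv i => by
        rw [Pi.smul_apply, Pi.smul_apply, hv i, smul_neg] }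
  let η : Fin W.n → k := fun i => cmpSign k i (τ i)
  have hη : ∀ i, η (τ i) = -η i := by
    intro i
    change cmpSign k (τ i) (τ (τ i)) = _
    rw [hττ, cmpSign_swap]
  -- `s` embeds `Anti × k × k` in the symmetric coefficient vectors: the sign `η` turns antisymmetric
  -- vectors into symmetric ones vanishing at the fixed points `i₀` and `i₁` of `τ`.
  let s : (Anti × k × k) →ₗ[k] (Fin W.n → k) :=
    { toFun := fun x i => η i * x.1.1 i + (x.2.1 * (Pi.single i₀ 1 : Fin W.n → k) i
        + x.2.2 * (Pi.single i₁ 1 : Fin W.n → k) i)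
      map_add' := fun x y => by
        funext i
        simp only [Prod.fst_add, Prod.snd_add, Submodule.coe_add, Pi.add_apply]
        ring
      map_smul' := fun c x => by
        funext i
        simp only [Prod.smul_fst, Prod.smul_snd, Submodule.coe_smul, Pi.smul_apply, smul_eq_mul,
          RingHom.id_apply]
        ring }
  have hs : ∀ x i, s x i = η i * x.1.1 i + (x.2.1 * (Pi.single i₀ 1 : Fin W.n → k) i
        + x.2.2 * (Pi.single i₁ 1 : Fin W.n → k) i) := fun _ _ => rfl
  have hfixed : ∀ j : Fin W.n, τ j = j → ∀ i, (Pi.single j 1 : Fin W.n → k) (τ i)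
      = (Pi.single j 1 : Fin W.n → k) i := by
    intro j hj i
    rw [Pi.single_apply, Pi.single_apply]
    refine if_congr ⟨fun hh => ?_, fun hh => ?_⟩ rfl rfl
    · rw [← hττ i, hh, hj]
    · rw [hh, hj]
  have hssym : ∀ x, s x ∘ τ = s x := by
    intro x
    funext i
    rw [Function.comp_apply, hs, hs, hη, x.1.2 i, hfixed i₀ hτ0, hfixed i₁ hτ1]
    ring
  have hsinj : ∀ x, s x = 0 → x = 0 := by
    intro x hx
    have hη0 : η i₀ = 0 := by
      change cmpSign k _ _ = 0
      rw [hτ0, cmpSign_self]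
    have hη1 : η i₁ = 0 := by
      change cmpSign k _ _ = 0
      rw [hτ1, cmpSign_self]
    have ha : x.2.1 = 0 := by
      have := congrFun hx i₀
      rw [hs, hη0] at this
      simpa [Pi.single_apply, Ne.symm hne] using this
    have hb : x.2.2 = 0 := by
      have := congrFun hx i₁
      rw [hs, hη1] at this
      simpa [Pi.single_apply, hne] using this
    refine Prod.ext (Subtype.ext (funext fun i => ?_)) (Prod.ext ha hb)
    have h3 := congrFun hx i
    rw [hs, ha, hb, zero_mul, zero_mul, add_zero, add_zero] at h3
    rcases mul_eq_zero.1 h3 with h4 | h4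
    · have h5 : i = τ i := cmpSign_eq_zero k h4
      have h6 := x.1.2 i
      rw [← h5] at h6
      have h7 : 2 * x.1.1 i = 0 := by
        rw [two_mul]
        nth_rewrite 1 [h6]
        exact neg_add_cancel _
      exact (mul_eq_zero.1 h7).resolve_left h2
    · exact h4
  let e := Finite.equivFin (ConjClasses K)
  -- an odd class function with values `0, ±1` on `p`-regular parts, vanishing only where that part
  -- is `1`: no other element of a group of odd order is conjugate to its inverse
  let ε : K → k := fun g =>
    cmpSign k (e (ConjClasses.mk (g ^ p ^ N))) (e (ConjClasses.mk ((g⁻¹) ^ p ^ N)))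
  have hεinv : ∀ g, ε g⁻¹ = -ε g := by
    intro g
    change cmpSign k _ _ = _
    rw [inv_inv, cmpSign_swap]
  have hεconj : ∀ c g, ε (c * g * c⁻¹) = ε g := by
    intro c g
    have h3 : ∀ x : K, ConjClasses.mk ((c * x * c⁻¹) ^ p ^ N) = ConjClasses.mk (x ^ p ^ N) := by
      intro x
      rw [ConjClasses.mk_eq_mk_iff_isConj, conj_pow]
      exact (isConj_iff.2 ⟨c, rfl⟩).symm
    change cmpSign k _ _ = cmpSign k _ _
    rw [conj_inv, h3, h3]
  have hεfr : ∀ g, ε (g ^ p ^ N) = ε g := by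
    intro g
    change cmpSign k _ _ = cmpSign k _ _
    rw [← inv_pow, hfr, hfr]
  have hε0 : ∀ g, ε g = 0 → g ^ p ^ N = 1 := by
    intro g hg
    have h3 := e.injective (cmpSign_eq_zero k hg)
    rw [inv_pow] at h3
    exact eq_one_of_conj_inv hodd (ConjClasses.mk_eq_mk_iff_isConj.1 h3)
  -- multiplication by `ε` turns symmetric functions into antisymmetric ones; its kernel on symmetric
  -- functions is at most one-dimensional
  let Ψ : (Anti × k × k) →ₗ[k] (K → k) :=
    { toFun := fun x g => ε g * T (s x) g
      map_add' := fun x y => by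
        funext g
        simp only [map_add, Pi.add_apply, mul_add]
      map_smul' := fun c x => by
        funext g
        simp only [map_smul, Pi.smul_apply, smul_eq_mul, RingHom.id_apply]
        ring }
  have hΨ : ∀ x, Ψ x ∈ Anti.map T := by
    intro x
    obtain ⟨w, hw⟩ := exists_combination_regular W hN hfr (Ψ x)
      (fun c g => by
        change ε _ * T (s x) _ = ε g * T (s x) g
        rw [hεconj, hTconj])
      (fun g => by
        change ε _ * T (s x) _ = ε g * T (s x) g
        rw [hεfr, hTfr])
    have hw' : T w = Ψ x := funext fun g => (hw g).symm
    refine ⟨w, ?_, hw'⟩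
    have h3 : T (w ∘ τ + w) = 0 := by
      funext g
      rw [map_add, Pi.add_apply, ← hTinv, hw']
      change ε g⁻¹ * T (s x) g⁻¹ + ε g * T (s x) g = 0
      rw [hεinv, hTinv, hssym]
      ring
    intro i
    exact eq_neg_of_add_eq_zero_left (congrFun (hTinj _ h3) i)
  -- A symmetric function killed by the sign `ε` and vanishing at `1` is zero, so that `Θ` is injective;
  -- this contradicts the dimensions of its source and target.
  let Θ : (Anti × k × k) →ₗ[k] (Anti.map T × k) :=
    (Ψ.codRestrict _ hΨ).prod ((LinearMap.proj (1 : K)).comp (T.comp s))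
  have hΘ : Function.Injective Θ := by
    rw [injective_iff_map_eq_zero]
    intro x hx
    have hx1 : ∀ g, ε g * T (s x) g = 0 := fun g =>
      congrFun (congrArg Subtype.val (congrArg Prod.fst hx)) g
    have hx2 : T (s x) 1 = 0 := congrArg Prod.snd hx
    apply hsinj
    apply hTinj
    funext g
    rcases mul_eq_zero.1 (hx1 g) with h3 | h3
    · rw [← hTfr, hε0 g h3]
      exact hx2
    · exact h3
  have h5 := LinearMap.finrank_le_finrank_of_injective hΘ
  have h6 : finrank k (Anti.map T) ≤ finrank k Anti := Submodule.finrank_map_le T Anti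
  rw [Module.finrank_prod, Module.finrank_prod, Module.finrank_prod, Module.finrank_self] at h5
  omega

end brauer

end LinRank

/-! ### Normal subgroups of odd order -/

namespace LinRank
open Module

section odd
variable {k Q V : Type*} [Field k] [Group Q] [AddCommGroup V] [Module k V]

/-- The part of a module on which an algebra acts through its `i`-th simple quotient. -/
def isoPart {A : Type*} [Ring A] [Algebra k A] (W : Wed k A) (L : A →ₐ[k] End k V)
    (i : Fin W.n) : Submodule k V :=
  ⨅ a : {a : A // W.π i a = 0}, LinearMap.ker (L a)

section alg
variable {A : Type*} [Ring A] [Algebra k A] (W : Wed k A) (L : A →ₐ[k] End k V)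

lemma mem_isoPart {i : Fin W.n} {v : V} :
    v ∈ isoPart W L i ↔ ∀ a, W.π i a = 0 → L a v = 0 := by
  simp only [isoPart, Submodule.mem_iInf, LinearMap.mem_ker, Subtype.forall]

lemma iSupIndep_isoPart : iSupIndep (isoPart W L) := by
  intro i
  obtain ⟨u, hu, hu'⟩ := W.exists_one i
  rw [Submodule.disjoint_def]
  intro v hv hv'
  have h1 : L u v = v := by
    have := (mem_isoPart W L).1 hv (u - 1) (by rw [map_sub, hu, map_one, sub_self])
    rw [map_sub, map_one, LinearMap.sub_apply, sub_eq_zero] at this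
    exact this
  have h2 : (⨆ j, ⨆ (_ : j ≠ i), isoPart W L j) ≤ LinearMap.ker (L u) := by
    refine iSup₂_le fun j hj x hx => ?_
    exact (mem_isoPart W L).1 hx u (hu' j hj)
  rw [← h1]
  exact h2 hv'

lemma exists_isoPart_ne_bot [Nontrivial V] : ∃ i, isoPart W L i ≠ ⊥ := by
  classical
  have : W.J.IsTwoSided := ⟨fun {a} b ha => by
    rw [W.mem] at ha ⊢
    intro j
    rw [map_mul, ha j, zero_mul]⟩
  obtain ⟨v, hv0, hv⟩ : ∃ v : V, v ≠ 0 ∧ ∀ a ∈ W.J, L a v = 0 := by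
    obtain ⟨N, hN⟩ := W.nil
    have hex : ∃ m, ∀ a ∈ W.J ^ m, L a = 0 := ⟨N, fun a ha => by
      rw [hN] at ha
      rw [(Submodule.mem_bot A).1 ha, map_zero]⟩
    have hspec := Nat.find_spec hex
    have hmin := fun m => Nat.find_min hex (m := m)
    generalize Nat.find hex = m at hspec hmin
    cases m with
    | zero =>
      exfalso
      have h1 := hspec 1 (by rw [Submodule.pow_zero, Ideal.one_eq_top]; exact Submodule.mem_top)
      rw [map_one] at h1
      obtain ⟨v, hv⟩ := exists_ne (0 : V)
      exact hv (LinearMap.congr_fun h1 v)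
    | succ m =>
      have h1 := hmin m (Nat.lt_succ_self m)
      push Not at h1
      obtain ⟨b, hb, hb0⟩ := h1
      obtain ⟨w, hw⟩ : ∃ w, L b w ≠ 0 := by
        by_contra hcon
        push Not at hcon
        exact hb0 (LinearMap.ext hcon)
      refine ⟨L b w, hw, fun a ha => ?_⟩
      have h2 := hspec (a * b) (by
        rw [Ideal.IsTwoSided.pow_succ]
        exact Ideal.mul_mem_mul ha hb)
      rw [map_mul] at h2
      exact LinearMap.congr_fun h2 w
  choose u hu hu' using W.exists_one
  have hsum : L (∑ i, u i) v = v := by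
    have h1 := hv (∑ i, u i - 1) (by
      rw [W.mem]
      intro j
      rw [map_sub, map_sum, map_one, Finset.sum_eq_single j, hu, sub_self]
      · intro i _ hi
        exact hu' i j hi.symm
      · intro h
        exact absurd (Finset.mem_univ j) h)
    rw [map_sub, map_one, LinearMap.sub_apply, sub_eq_zero] at h1
    exact h1
  by_contra hcon
  push Not at hcon
  apply hv0
  rw [← hsum, map_sum, LinearMap.sum_apply]
  refine Finset.sum_eq_zero fun i _ => ?_
  rw [← Submodule.mem_bot k, ← hcon i, mem_isoPart]
  intro a ha
  have h1 := hv (a * u i) (by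
    rw [W.mem]
    intro j
    rw [map_mul]
    by_cases hj : j = i
    · rw [hj, ha, zero_mul]
    · rw [hu' i j hj, mul_zero])
  rw [map_mul] at h1
  exact h1

end alg

variable (N : Subgroup Q)

/-- Conjugation by `g` as an automorphism of the group algebra of a normal subgroup. -/
noncomputable def conjAlg (k : Type*) [Field k] (N : Subgroup Q) [N.Normal] (g : Q) :
    MonoidAlgebra k N →ₐ[k] MonoidAlgebra k N :=
  MonoidAlgebra.lift k _ N ((MonoidAlgebra.of k N).comp (MulAut.conjNormal g).toMonoidHom)

lemma conjAlg_of [N.Normal] (g : Q) (x : N) :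
    conjAlg k N g (MonoidAlgebra.of k N x) = MonoidAlgebra.of k N (MulAut.conjNormal g x) :=
  MonoidAlgebra.lift_of _ x

lemma conjAlg_conjAlg [N.Normal] (g : Q) (a : MonoidAlgebra k N) :
    conjAlg k N g (conjAlg k N g⁻¹ a) = a := by
  induction a using MonoidAlgebra.induction_on with
  | of x => 
    rw [conjAlg_of, conjAlg_of, ← MulAut.mul_apply, ← map_mul, mul_inv_cancel, map_one,
      MulAut.one_apply]
  | add x y hx hy => rw [map_add, map_add, hx, hy]
  | smul r x hx => rw [map_smul, map_smul, hx]

/-- The action of the group algebra of a subgroup. -/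
noncomputable def algAct (ρ : Representation k Q V) (N : Subgroup Q) :
    MonoidAlgebra k N →ₐ[k] End k V :=
  MonoidAlgebra.lift k _ N (MonoidHom.comp ρ N.subtype)

lemma algAct_of (ρ : Representation k Q V) (x : N) :
    algAct ρ N (MonoidAlgebra.of k N x) = ρ x :=
  MonoidAlgebra.lift_of _ x

lemma algAct_conjAlg [N.Normal] (ρ : Representation k Q V) (g : Q) (a : MonoidAlgebra k N) (v : V) :
    algAct ρ N (conjAlg k N g a) (ρ g v) = ρ g (algAct ρ N a v) := by
  induction a using MonoidAlgebra.induction_on with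
  | of x =>
    rw [conjAlg_of, algAct_of, algAct_of, ← Module.End.mul_apply, ← Module.End.mul_apply,
      ← map_mul, ← map_mul, MulAut.conjNormal_apply, inv_mul_cancel_right]
  | add x y hx hy =>
    rw [map_add, map_add, map_add, LinearMap.add_apply, LinearMap.add_apply, map_add, hx, hy]
  | smul r x hx =>
    rw [map_smul, map_smul, map_smul, LinearMap.smul_apply, LinearMap.smul_apply, map_smul, hx]

lemma isoPart_permuted [N.Normal] (ρ : Representation k Q V) (W : Wed k (MonoidAlgebra k N)) (g : Q)
    (i : Fin W.n) :
    ∃ j, (isoPart W (algAct ρ N) i).map (ρ g) = isoPart W (algAct ρ N) j := by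
  have hs : Function.Surjective ((W.π i).comp (conjAlg k N g⁻¹)) := by
    classical
    intro M
    obtain ⟨a, ha⟩ := W.surj (Pi.single i M)
    refine ⟨conjAlg k N g a, ?_⟩
    have h1 := conjAlg_conjAlg N g⁻¹ a
    rw [inv_inv] at h1
    rw [AlgHom.comp_apply, h1, ha, Pi.single_eq_same]
  obtain ⟨j, hj, _⟩ := W.exists_index (W.pos i) _ hs
  refine ⟨j, le_antisymm ?_ ?_⟩
  · rintro _ ⟨v, hv, rfl⟩
    rw [mem_isoPart]
    intro a ha
    have h1 := (mem_isoPart W _).1 hv (conjAlg k N g⁻¹ a) ((hj a).1 ha)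
    rw [← conjAlg_conjAlg N g a, algAct_conjAlg, h1, map_zero]
  · intro v hv
    refine ⟨ρ g⁻¹ v, ?_, ?_⟩
    · rw [SetLike.mem_coe, mem_isoPart]
      intro a ha
      have h1 := conjAlg_conjAlg N g⁻¹ a
      rw [inv_inv] at h1
      rw [← h1, algAct_conjAlg, (mem_isoPart W _).1 hv _ ((hj _).2 _), map_zero]
      rw [AlgHom.comp_apply, h1, ha]
    · rw [← Module.End.mul_apply, rho_mul_inv, Module.End.one_apply]

/-- A normal subgroup of odd order acts trivially in a primitive self-dual representation of
degree prime to `p`: by primitivity its group algebra acts through one simple quotient, whose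
character is a multiple of the self-dual one, hence trivial. -/
theorem trivial_of_odd [N.Normal] [IsAlgClosed k] [FiniteDimensional k V] (p : ℕ) [Fact p.Prime] [CharP k p]
    (h2 : (2 : k) ≠ 0) (hdim : (finrank k V : k) ≠ 0) (ρ : Representation k Q V) (hρ : Prim ρ)
    (hsd : ∀ g, LinearMap.trace k V (ρ g⁻¹) = LinearMap.trace k V (ρ g)) [Finite N]
    (hodd : Odd (Nat.card N)) {x : Q} (hx : x ∈ N) : ρ x = 1 := by
  classical
  have : FiniteDimensional k (MonoidAlgebra k N) := inferInstance
  obtain ⟨W⟩ := exists_wed k (MonoidAlgebra k N)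
  have : Nontrivial V := by
    by_contra hcon
    rw [not_nontrivial_iff_subsingleton] at hcon
    exact hdim (by rw [finrank_zero_of_subsingleton, Nat.cast_zero])
  obtain ⟨i, hi⟩ := exists_isoPart_ne_bot W (algAct ρ N)
  have htop := hρ.eq_top_of_permuted _ (iSupIndep_isoPart W (algAct ρ N))
    (isoPart_permuted N ρ W) i hi
  have hker : ∀ a, W.π i a = 0 → algAct ρ N a = 0 := by
    intro a ha
    refine LinearMap.ext fun v => ?_
    have hv : v ∈ isoPart W (algAct ρ N) i := by rw [htop]; exact Submodule.mem_top
    exact (mem_isoPart W _).1 hv a ha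
  obtain ⟨c, hc⟩ := W.exists_combination
    ((LinearMap.trace k V).comp (algAct ρ N).toLinearMap)
    (fun a b => by
      change LinearMap.trace k V (algAct ρ N (a * b)) = LinearMap.trace k V (algAct ρ N (b * a))
      rw [map_mul (algAct ρ N), map_mul (algAct ρ N), LinearMap.trace_mul_comm])
    (fun a ha => by
      change LinearMap.trace k V (algAct ρ N a) = 0
      rw [hker a ((W.mem a).1 ha i), map_zero])
  have hc' : ∀ a, LinearMap.trace k V (algAct ρ N a) = ∑ j, c j * W.χ j a := hc
  have hcj : ∀ j, j ≠ i → c j = 0 := by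
    intro j hj
    obtain ⟨u, h3, h4⟩ := W.exists_unit j ⟨0, W.pos j⟩ ⟨0, W.pos j⟩
    rw [← W.coeff_eq c j (u := u), ← hc', hker u (h4 i hj.symm), map_zero]
    · rw [W.χ_apply, h3, Matrix.trace_single_eq_same]
    · intro l hl
      rw [W.χ_apply, h4 l hl, Matrix.trace_zero]
  have htr : ∀ g : N, LinearMap.trace k V (ρ g) = c i * ch W i g := by
    intro g
    rw [← algAct_of, hc', Finset.sum_eq_single i]
    · rfl
    · intro j _ hj
      rw [hcj j hj, zero_mul]
    · intro h
      exact absurd (Finset.mem_univ i) h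
  have hci : c i ≠ 0 := by
    intro h0
    have h1 := htr 1
    rw [h0, zero_mul, OneMemClass.coe_one, map_one, LinearMap.trace_one] at h1
    exact hdim h1
  have hself : ∀ g : N, ch W i g⁻¹ = ch W i g := by
    intro g
    refine mul_left_cancel₀ hci ?_
    rw [← htr, ← htr, InvMemClass.coe_inv, hsd]
  obtain ⟨i₀, h5, h6⟩ := exists_trivial W
  have hii := selfdual_unique W p h2 hodd (fun g => by rw [h5, h5]) hself
  subst hii
  have h7 := hker (MonoidAlgebra.of k N ⟨x, hx⟩ - 1) (by rw [map_sub, h6, map_one, sub_self])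
  rw [map_sub, map_one, algAct_of, sub_eq_zero] at h7
  exact h7

end odd

end LinRank

/-! ### Involutions in images of normal subgroups -/

namespace LinRank
open Module

/-- The image of a normal subgroup under a reduction is trivial or of even order. -/
theorem Red.exists_involution {G : Type*} [Group G] {d : ℕ} {e : Fin d × Fin d → G} {p : ℕ}
    (R : Red G d e p) (hp : p.Prime) (hp2 : p ≠ 2) (hpd : ¬ p ∣ d)
    (hsmall : ∀ T : Subgroup G, T.index ≠ 0 → T.index ≤ d → ∀ i, e i ∈ T)
    (N : Subgroup G) [N.Normal] {x : G} (hx : x ∈ N) (hx1 : R.σ x ≠ 1) :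
    ∃ t ∈ N, R.σ t ≠ 1 ∧ R.σ (t * t) = 1 := by
  classical
  have : Fact p.Prime := ⟨hp⟩
  let k' := AlgebraicClosure R.k
  have hchar : CharP k' p := charP_of_injective_algebraMap (algebraMap R.k k').injective p
  let f := R.σ.toHomUnits
  have hf : ∀ g, ((f g : (Matrix (Fin d) (Fin d) R.k)ˣ) : Matrix (Fin d) (Fin d) R.k) = R.σ g :=
    fun g => rfl
  have hf1 : ∀ g, f g = 1 ↔ R.σ g = 1 := fun g => by rw [← hf, Units.val_eq_one]
  let q := f.rangeRestrict
  have hq : Function.Surjective q := f.rangeRestrict_surjective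
  have : Finite (Matrix (Fin d) (Fin d) R.k) :=
    inferInstanceAs (Finite (Fin d → Fin d → R.k))
  have : Finite (Matrix (Fin d) (Fin d) R.k)ˣ := inferInstance
  let τ₀ : f.range →* Matrix (Fin d) (Fin d) R.k := (Units.coeHom _).comp f.range.subtype
  have hτ₀ : ∀ g, τ₀ (q g) = R.σ g := fun g => rfl
  let τ := mapRep (algebraMap R.k k') τ₀
  let φ := mapRep (algebraMap R.k k') R.σ
  have hτφ : ∀ g, τ (q g) = φ g := fun g => rfl
  have hsd : ∀ y, LinearMap.trace k' _ (repOf τ y⁻¹) = LinearMap.trace k' _ (repOf τ y) := by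
    intro y
    obtain ⟨g, rfl⟩ := hq y
    rw [trace_repOf, trace_repOf, ← map_inv, hτφ, hτφ, trace_mapRep, trace_mapRep, R.selfdual]
  have hprim : Prim (repOf τ) := by
    intro T hT0 hTd U hU
    rw [Module.finrank_fin_fun] at hTd
    have hidx : (T.comap q).index = T.index := Subgroup.index_comap_of_surjective T hq
    refine stable_trivial φ e ?_ (T.comap q) (hsmall _ (by rwa [hidx]) (by rwa [hidx])) U ?_
    · rw [entryDet_mapRep]
      exact (map_ne_zero _).2 R.det_ne
    · intro g hg u hu
      exact hU (q g) hg u hu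
  have h2 : (2 : k') ≠ 0 := by
    have h3 : ((2 : ℕ) : k') ≠ 0 := by
      rw [Ne, CharP.cast_eq_zero_iff k' p]
      intro h
      exact hp2 ((Nat.prime_dvd_prime_iff_eq hp Nat.prime_two).1 h)
    exact_mod_cast h3
  have hdim : (finrank k' (Fin d → k') : k') ≠ 0 := by
    rw [Module.finrank_fin_fun, Ne, CharP.cast_eq_zero_iff k' p]
    exact hpd
  have hN' : (N.map q).Normal := Subgroup.Normal.map inferInstance q hq
  have heven : ¬ Odd (Nat.card (N.map q)) := by
    intro hodd
    have h3 := trivial_of_odd (N.map q) p h2 hdim (repOf τ) hprim hsd hodd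
      (Subgroup.mem_map_of_mem q hx)
    apply hx1
    have h4 : τ (q x) = 1 := by
      apply (Matrix.toLinAlgEquiv' (R := k') (n := Fin d)).injective
      rw [map_one]
      exact h3
    rw [hτφ] at h4
    have h5 : (R.σ x).map (algebraMap R.k k') = (1 : Matrix (Fin d) (Fin d) R.k).map
        (algebraMap R.k k') := by
      rw [Matrix.map_one _ (map_zero _) (map_one _)]
      exact h4
    exact Matrix.map_injective (algebraMap R.k k').injective h5
  rw [Nat.not_odd_iff_even] at heven
  have : Fact (Nat.Prime 2) := ⟨Nat.prime_two⟩
  obtain ⟨y, hy⟩ := exists_prime_orderOf_dvd_card' (G := N.map q) 2 heven.two_dvd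
  obtain ⟨t, ht, hty⟩ := y.2
  have hty' : f t = ((y : f.range) : (Matrix (Fin d) (Fin d) R.k)ˣ) := congrArg Subtype.val hty
  refine ⟨t, ht, ?_, ?_⟩
  · rw [Ne, ← hf1, hty', OneMemClass.coe_eq_one, OneMemClass.coe_eq_one]
    intro h
    rw [h, orderOf_one] at hy
    omega
  · rw [← hf1, map_mul, hty', ← pow_two]
    have h3 := pow_orderOf_eq_one y
    rw [hy] at h3
    exact congrArg (fun z : N.map q => ((z : f.range) : (Matrix (Fin d) (Fin d) R.k)ˣ)) h3

end LinRank

/-! ### Subgroups needing many generators -/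

namespace LinRank
open Module

/-- Every finite generating set has at least `m` elements. -/
def NeedsGens (H : Type*) [Group H] (m : ℕ) : Prop :=
  ∀ S : Finset H, Subgroup.closure (S : Set H) = ⊤ → m ≤ S.card

/-- A group with `m` independent homomorphisms to a group of order two needs `m` generators. -/
lemma needsGens_of_hom {H ι : Type*} [Group H] [Fintype ι] [DecidableEq ι]
    (θ : H →* Multiplicative (ι → ZMod 2))
    (h : ∀ i, ∃ t, (θ t).toAdd = Pi.single i 1) : NeedsGens H (Fintype.card ι) := by
  classical
  intro S hS
  let T : Finset (ι → ZMod 2) := S.image fun x => (θ x).toAdd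
  have hmem : ∀ x : H, (θ x).toAdd ∈ Submodule.span (ZMod 2) (T : Set (ι → ZMod 2)) := by
    intro x
    have hx : x ∈ Subgroup.closure (S : Set H) := by rw [hS]; exact Subgroup.mem_top x
    induction hx using Subgroup.closure_induction with
    | mem x hx => exact Submodule.subset_span (by
        rw [Finset.mem_coe, Finset.mem_image]
        exact ⟨x, hx, rfl⟩)
    | one => rw [map_one, toAdd_one]; exact Submodule.zero_mem _
    | mul x y _ _ hx hy => rw [map_mul, toAdd_mul]; exact Submodule.add_mem _ hx hy
    | inv x _ hx => rw [map_inv, toAdd_inv]; exact Submodule.neg_mem _ hx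
  have htop : Submodule.span (ZMod 2) (T : Set (ι → ZMod 2)) = ⊤ := by
    rw [Submodule.eq_top_iff']
    intro v
    rw [pi_eq_sum_univ v]
    refine Submodule.sum_mem _ fun i _ => Submodule.smul_mem _ _ ?_
    obtain ⟨t, ht⟩ := h i
    have h1 := hmem t
    rw [ht] at h1
    convert h1 using 1
    funext j
    simp [Pi.single_apply, eq_comm]
  have h1 := finrank_span_finset_le_card (R := ZMod 2) T
  rw [Set.finrank, htop, finrank_top, Module.finrank_fintype_fun_eq_card] at h1
  exact h1.trans Finset.card_image_le

section comb
variable {G ι : Type*} [Group G] {M : ι → Type*} [∀ i, Monoid (M i)] (f : ∀ i, G →* M i)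

lemma mem_kerInf {S : Finset ι} {g : G} : g ∈ (⨅ i ∈ S, (f i).ker) ↔ ∀ i ∈ S, f i g = 1 := by
  simp only [Subgroup.mem_iInf, MonoidHom.mem_ker]

instance kerInf_normal (S : Finset ι) : (⨅ i ∈ S, (f i).ker).Normal where
  conj_mem := fun n hn g => by
    rw [mem_kerInf] at hn ⊢
    intro i hi
    rw [map_mul, map_mul, hn i hi, mul_one, ← map_mul, mul_inv_cancel, map_one]

/-- The elements whose image under every `f i` is `1` or the involution `f i (t i)`. -/
def boxSubgroup (S : Finset ι) (t : ι → G) (ht : ∀ i ∈ S, f i (t i * t i) = 1) : Subgroup G where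
  carrier := {g | ∀ i ∈ S, f i g = 1 ∨ f i g = f i (t i)}
  one_mem' := fun i _ => Or.inl (map_one _)
  mul_mem' := fun {a b} ha hb i hi => by
    have h1 := ht i hi
    rw [map_mul] at h1 ⊢
    rcases ha i hi with ha | ha <;> rcases hb i hi with hb | hb <;> rw [ha, hb] <;> simp [h1]
  inv_mem' := fun {a} ha i hi => by
    have h1 := ht i hi
    rw [map_mul] at h1
    have h2 : f i a⁻¹ * f i a = 1 := by rw [← map_mul, inv_mul_cancel, map_one]
    rcases ha i hi with ha | ha
    · left
      rw [ha, mul_one] at h2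
      exact h2
    · right
      calc f i a⁻¹ = f i a⁻¹ * (f i (t i) * f i (t i)) := by rw [h1, mul_one]
        _ = f i (t i) := by rw [← mul_assoc, ← ha, h2, one_mul]

lemma mem_boxSubgroup {S : Finset ι} {t : ι → G} {ht : ∀ i ∈ S, f i (t i * t i) = 1} {g : G} :
    g ∈ boxSubgroup f S t ht ↔ ∀ i ∈ S, f i g = 1 ∨ f i g = f i (t i) := Iff.rfl

open Classical in
/-- The coordinates of the box subgroup in the elementary abelian `2`-group. -/
noncomputable def boxHom (S : Finset ι) (t : ι → G) (ht : ∀ i ∈ S, f i (t i * t i) = 1)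
    (ht1 : ∀ i ∈ S, f i (t i) ≠ 1) :
    boxSubgroup f S t ht →* Multiplicative (S → ZMod 2) where
  toFun g := Multiplicative.ofAdd fun i => if f i (g : G) = 1 then 0 else 1
  map_one' := by
    rw [← ofAdd_zero]
    congr 1
    funext i
    simp
  map_mul' a b := by
    rw [← ofAdd_add]
    congr 1
    funext i
    have h1 := ht i i.2
    rw [map_mul] at h1
    have h2 := ht1 i i.2
    have h3 : (1 : ZMod 2) + 1 = 0 := rfl
    rw [Subgroup.coe_mul, map_mul, Pi.add_apply]
    rcases a.2 i i.2 with ha | ha <;> rcases b.2 i i.2 with hb | hb <;> rw [ha, hb] <;>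
      simp [h1, h2, h3]

/-- The elements `t i` show that the box subgroup surjects onto `(ℤ/2) ^ S`. -/
lemma needsGens_box (S : Finset ι) (t : ι → G) (ht : ∀ i ∈ S, f i (t i * t i) = 1)
    (ht1 : ∀ i ∈ S, f i (t i) ≠ 1) (ht0 : ∀ i ∈ S, ∀ j ∈ S, j ≠ i → f j (t i) = 1) :
    NeedsGens (boxSubgroup f S t ht) S.card := by
  classical
  rw [← Fintype.card_coe]
  refine needsGens_of_hom (boxHom f S t ht ht1) fun i => ?_
  refine ⟨⟨t i, fun j hj => ?_⟩, ?_⟩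
  · by_cases h : j = i
    · right
      rw [h]
    · left
      exact ht0 i i.2 j hj h
  · funext j
    change (if f j (t i) = 1 then (0 : ZMod 2) else 1) = _
    by_cases h : j = i
    · rw [h, if_neg (ht1 i i.2), Pi.single_eq_same]
    · rw [if_pos (ht0 i i.2 j j.2 fun h' => h (Subtype.ext h')), Pi.single_eq_of_ne h]

/-- Dropping redundant factors, a finite family of homomorphisms in which nontrivial images of
normal subgroups contain involutions gives a subgroup of small index needing many generators. -/
theorem exists_box [DecidableEq ι] (S : Finset ι) (b : ℕ)
    (hb : ∀ i ∈ S, (f i).ker.index ≤ b) (hb0 : ∀ i, (f i).ker.index ≠ 0)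
    (hinv : ∀ i, ∀ N : Subgroup G, N.Normal → ∀ x ∈ N, f i x ≠ 1 →
      ∃ t ∈ N, f i t ≠ 1 ∧ f i (t * t) = 1) :
    ∃ (m : ℕ) (H : Subgroup G), (⨅ i ∈ S, (f i).ker).index ≤ b ^ m ∧ H.index ≠ 0 ∧
      H.index ≤ b ^ m ∧ NeedsGens H m := by
  classical
  have hne : (S.powerset.filter fun T => (⨅ i ∈ T, (f i).ker) = ⨅ i ∈ S, (f i).ker).Nonempty :=
    ⟨S, by simp⟩
  -- `S'` is a minimal subfamily with the same common kernel, so no factor of it is redundant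
  obtain ⟨S', hS', hmin⟩ := Finset.exists_min_image _ Finset.card hne
  rw [Finset.mem_filter, Finset.mem_powerset] at hS'
  obtain ⟨hsub, heq⟩ := hS'
  have ht : ∀ i, ∃ t, i ∈ S' → t ∈ (⨅ j ∈ S'.erase i, (f j).ker) ∧ f i t ≠ 1 ∧ f i (t * t) = 1 := by
    intro i
    by_cases hi : i ∈ S'
    · obtain ⟨x, hx, hx1⟩ : ∃ x ∈ (⨅ j ∈ S'.erase i, (f j).ker), f i x ≠ 1 := by
        by_contra hcon
        push Not at hcon
        have h1 : (⨅ j ∈ S'.erase i, (f j).ker) = ⨅ j ∈ S, (f j).ker := by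
          rw [← heq]
          ext g
          constructor
          · intro hg
            have hg' := hcon g hg
            rw [mem_kerInf] at hg ⊢
            intro j hj
            by_cases h : j = i
            · rw [h, hg']
            · exact hg j (Finset.mem_erase.2 ⟨h, hj⟩)
          · intro hg
            rw [mem_kerInf] at hg ⊢
            exact fun j hj => hg j (Finset.mem_of_mem_erase hj)
        have h2 := hmin (S'.erase i) (Finset.mem_filter.2
          ⟨Finset.mem_powerset.2 ((Finset.erase_subset _ _).trans hsub), h1⟩)
        have h3 := Finset.card_erase_lt_of_mem hi
        omega
      obtain ⟨t, ht, ht1, ht2⟩ := hinv i _ (kerInf_normal f _) x hx hx1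
      exact ⟨t, fun _ => ⟨ht, ht1, ht2⟩⟩
    · exact ⟨1, fun h => absurd h hi⟩
  choose t ht using ht
  have hidx : (⨅ i ∈ S', (f i).ker).index ≤ b ^ S'.card := by
    rw [iInf_subtype']
    refine (Subgroup.index_iInf_le _).trans ?_
    refine (Finset.prod_le_pow_card Finset.univ _ b fun i _ => hb i.1 (hsub i.2)).trans ?_
    rw [Finset.card_univ]
    exact le_of_eq (congrArg _ (Fintype.card_coe S'))
  have hidx0 : (⨅ i ∈ S', (f i).ker).index ≠ 0 := by
    rw [iInf_subtype']
    exact Subgroup.index_iInf_ne_zero fun i => hb0 i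
  let H := boxSubgroup f S' t fun i hi => (ht i hi).2.2
  have hle : (⨅ i ∈ S', (f i).ker) ≤ H := by
    intro g hg
    rw [mem_kerInf] at hg
    exact fun i hi => Or.inl (hg i hi)
  have hdvd := Subgroup.index_dvd_of_le hle
  refine ⟨S'.card, H, by rw [← heq]; exact hidx, fun h0 => hidx0 ?_,
    (Nat.le_of_dvd (Nat.pos_of_ne_zero hidx0) hdvd).trans hidx, ?_⟩
  · rw [h0] at hdvd
    exact Nat.eq_zero_of_zero_dvd hdvd
  · refine needsGens_box f S' t _ (fun i hi => (ht i hi).2.1) fun i hi j hj hji => ?_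
    exact (mem_kerInf f).1 (ht i hi).1 j (Finset.mem_erase.2 ⟨hji, hj⟩)

end comb

end LinRank

/-! ### Counting primes -/

namespace LinRank
open Module

/-- There are subgroups of finite index needing `m` generators whose index is at most
`2 ^ O(m log m)`, for arbitrarily large `m`. -/
def Good (G : Type*) [Group G] : Prop :=
  ∃ C : ℕ, ∀ r₀ : ℕ, ∃ r, r₀ ≤ r ∧ ∃ (m : ℕ) (H : Subgroup G), H.index ≠ 0 ∧
    H.index ≤ 2 ^ (C * r * m) ∧ 2 ^ r ≤ m ^ 2 ∧ NeedsGens H m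

/-- A Chebyshev-type lower bound for the number of primes up to `2 ^ r`, from
`2 ^ n ≤ (n + 1) * lcm(1, …, n)`. -/
lemma prime_count (r : ℕ) : 2 ^ r ≤ r * ((Nat.primesLE (2 ^ r)).card + 1) + 1 := by
  have h1 := Chebyshev.two_pow_le_mul_lcmUpto (2 ^ r)
  have h2 : Nat.lcmUpto (2 ^ r) ≤ (2 ^ r) ^ (Nat.primesLE (2 ^ r)).card := by
    rw [Nat.lcmUpto_eq_prod_pow_log]
    exact Finset.prod_le_pow_card _ _ _ fun p _ => Nat.pow_log_le_self p (by positivity)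
  have h3 : 2 ^ r + 1 ≤ 2 ^ (r + 1) := by
    rw [pow_succ]
    have := Nat.one_le_two_pow (n := r)
    omega
  have h4 : 2 ^ (2 ^ r) ≤ 2 ^ (r * ((Nat.primesLE (2 ^ r)).card + 1) + 1) := by
    calc 2 ^ (2 ^ r) ≤ (2 ^ r + 1) * Nat.lcmUpto (2 ^ r) := h1
      _ ≤ 2 ^ (r + 1) * (2 ^ r) ^ (Nat.primesLE (2 ^ r)).card := Nat.mul_le_mul h3 h2
      _ = 2 ^ (r * ((Nat.primesLE (2 ^ r)).card + 1) + 1) := by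
        rw [← pow_mul, ← pow_add]
        congr 1
        ring
  exact (Nat.pow_le_pow_iff_right (by norm_num)).1 h4

lemma exists_large (K : ℕ) : ∃ R, 1 ≤ R ∧ ∀ r, R ≤ r → 4 * (K * r ^ 2) ^ 2 ≤ 2 ^ r := by
  have h1 := tendsto_pow_const_div_const_pow_of_one_lt 4 (r := (2 : ℝ)) (by norm_num)
  have h2 : ∀ᶠ n : ℕ in Filter.atTop, (n : ℝ) ^ 4 / 2 ^ n < 1 / (4 * K ^ 2 + 1) :=
    h1.eventually_lt_const (by positivity)
  obtain ⟨R, hR⟩ := Filter.eventually_atTop.1 h2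
  refine ⟨R + 1, by omega, fun r hr => ?_⟩
  have h3 := hR r (by omega)
  rw [div_lt_div_iff₀ (by positivity) (by positivity), one_mul] at h3
  have h4 : (4 * (K * r ^ 2) ^ 2 : ℝ) ≤ 2 ^ r := by
    have h5 : (0 : ℝ) ≤ (r : ℝ) ^ 4 := by positivity
    nlinarith
  exact_mod_cast h4

lemma ker_index_le {G : Type*} [Group G] {d : ℕ} {k : Type*} [Field k] [Finite k]
    (σ : G →* Matrix (Fin d) (Fin d) k) :
    σ.ker.index ≠ 0 ∧ σ.ker.index ≤ Nat.card k ^ (d * d) := by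
  have hfin : Finite (Matrix (Fin d) (Fin d) k) := inferInstanceAs (Finite (Fin d → Fin d → k))
  have hker : σ.ker = σ.toHomUnits.ker := by
    ext g
    rw [MonoidHom.mem_ker, MonoidHom.mem_ker, ← Units.val_eq_one]
    rfl
  rw [hker, Subgroup.index_ker]
  refine ⟨Nat.card_pos.ne', ?_⟩
  have h1 : Nat.card σ.toHomUnits.range ≤ Nat.card (Matrix (Fin d) (Fin d) k) :=
    Nat.card_le_card_of_injective (fun x => ((x : (Matrix (Fin d) (Fin d) k)ˣ) :
      Matrix (Fin d) (Fin d) k)) fun x y hxy => Subtype.ext (Units.ext hxy)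
  refine h1.trans (le_of_eq ?_)
  change Nat.card (Fin d → Fin d → k) = _
  rw [Nat.card_fun, Nat.card_fun, Nat.card_fin, ← pow_mul]

/-- Apply the box construction to the reductions at the primes up to `2 ^ r`. Each factor has order
`2 ^ O(r)`, and since the common kernel has index exponential in the number of primes, at least a
fraction `1 / O(r)` of the primes survives the removal of redundant factors. -/
theorem Datum.good {G : Type*} {K : Type*} [Group G] [Group.FG G] [Field K] [NumberField K] {d : ℕ}
    (D : Datum G d K) : Good G := by
  classical
  have hd := D.two_le
  obtain ⟨M, B, hM, hdvd, hB, red, hcard, hgrow⟩ := D.exists_reductions (2 * d) (by omega)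
  obtain ⟨s, hs⟩ := pow_unbounded_of_one_lt B (one_lt_two (α := ℝ))
  set E := finrank ℚ K * (d * d) with hE
  obtain ⟨R, hR1, hR⟩ := exists_large (s * E + s + M + 2)
  refine ⟨E, fun r₀ => ⟨max r₀ R, le_max_left _ _, ?_⟩⟩
  have hr := hR _ (le_max_right r₀ R)
  have hr1 : 1 ≤ max r₀ R := hR1.trans (le_max_right _ _)
  generalize max r₀ R = r at hr hr1
  set P := (Nat.primesLE (2 ^ r)) with hP
  let S : Finset {p : ℕ // p.Prime ∧ ¬ p ∣ M} := P.subtype _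
  have hSmem : ∀ p ∈ S, (p : ℕ) ≤ 2 ^ r := fun p hp =>
    Nat.le_of_mem_primesLE (Finset.mem_subtype.1 hp)
  have hScard : P.card ≤ S.card + M := by
    have h1 : P ⊆ (P.filter fun p => p.Prime ∧ ¬ p ∣ M) ∪ M.divisors := by
      intro p hp
      rw [Finset.mem_union, Finset.mem_filter, Nat.mem_divisors]
      by_cases h : p ∣ M
      · exact Or.inr ⟨h, hM.ne'⟩
      · exact Or.inl ⟨hp, Nat.prime_of_mem_primesLE hp, h⟩
    have h2 := (Finset.card_le_card h1).trans (Finset.card_union_le _ _)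
    have h3 := Nat.card_divisors_le_self M
    rw [Finset.card_subtype]
    omega
  obtain ⟨m, H, hm, hH0, hH, hgen⟩ := exists_box (fun p => (red p).σ) S (2 ^ (r * E))
    (fun p hp => by
      refine (ker_index_le (red p).σ).2.trans ?_
      calc Nat.card (red p).k ^ (d * d) ≤ ((p : ℕ) ^ finrank ℚ K) ^ (d * d) :=
            Nat.pow_le_pow_left (hcard p) _
        _ ≤ ((2 ^ r) ^ finrank ℚ K) ^ (d * d) :=
            Nat.pow_le_pow_left (Nat.pow_le_pow_left (hSmem p hp) _) _
        _ = 2 ^ (r * E) := by rw [← pow_mul, ← pow_mul, hE])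
    (fun p => (ker_index_le (red p).σ).1)
    (fun p N hN x hx hx1 => by
      have hp := p.2
      refine (red p).exists_involution hp.1 ?_ ?_ ?_ N hx hx1
      · intro h2
        exact hp.2 ((h2 ▸ Dvd.intro _ rfl : (p : ℕ) ∣ 2 * d).trans hdvd)
      · intro h2
        exact hp.2 ((h2.mul_left 2).trans hdvd)
      · intro T hT0 hTd
        exact D.small T hT0 (hTd.trans (Nat.le_self_pow (by omega) d)))
  refine ⟨m, H, hH0, hH.trans (le_of_eq (by rw [← pow_mul]; ring_nf)), ?_, hgen⟩
  -- the common kernel has index at least `2 ^ (S.card / s)` and at most `2 ^ (r * E * m)`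
  have key : S.card ≤ s * (r * E * m + 1) := by
    by_contra hcon
    push Not at hcon
    have h1 := hgrow S (r * E * m + 1) (by
      calc B ^ (r * E * m + 1) ≤ ((2 : ℝ) ^ s) ^ (r * E * m + 1) :=
            pow_le_pow_left₀ (by linarith) hs.le _
        _ = 2 ^ (s * (r * E * m + 1)) := by rw [pow_mul]
        _ < 2 ^ S.card := pow_lt_pow_right₀ (by norm_num) hcon
        _ ≤ ((∏ p ∈ S, (p : ℕ) : ℕ) : ℝ) := by
          have h2 : 2 ^ S.card ≤ ∏ p ∈ S, (p : ℕ) :=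
            Finset.pow_card_le_prod _ _ _ fun p _ => p.2.1.two_le
          exact_mod_cast h2)
    have h2 := h1.trans hm
    rw [← pow_mul, Nat.pow_le_pow_iff_right (by norm_num)] at h2
    omega
  have h1 := prime_count r
  rw [← hP] at h1
  have h2 : 2 ^ r ≤ (s * E + s + M + 2) * r ^ 2 * (m + 1) := by
    calc 2 ^ r ≤ r * (P.card + 1) + 1 := h1
      _ ≤ r * ((s * (r * E * m + 1) + M) + 1) + 1 := by gcongr; omega
      _ ≤ _ := by
        obtain ⟨q, rfl⟩ : ∃ q, r = q + 1 := ⟨r - 1, by omega⟩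
        exact Nat.le.intro (k := q * 3 + q * s + q * s * E * 2 + q * s * m * 2 + q * m * 4 +
          q * m * M * 2 + q * M + q ^ 2 * 2 + q ^ 2 * s + q ^ 2 * s * E + q ^ 2 * s * m +
          q ^ 2 * m * 2 + q ^ 2 * m * M + q ^ 2 * M + s * E + s * m + m * 2 + m * M) (by ring)
  have h3 : 2 ^ r * 2 ^ r * 4 ≤ 2 ^ r * (m + 1) ^ 2 := by
    calc 2 ^ r * 2 ^ r * 4 ≤ ((s * E + s + M + 2) * r ^ 2 * (m + 1)) *
          ((s * E + s + M + 2) * r ^ 2 * (m + 1)) * 4 := by gcongr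
      _ = 4 * ((s * E + s + M + 2) * r ^ 2) ^ 2 * (m + 1) ^ 2 := by ring
      _ ≤ _ := Nat.mul_le_mul_right _ hr
  have h4 : 2 ^ r * 4 ≤ (m + 1) ^ 2 := by
    rw [mul_assoc] at h3
    exact Nat.le_of_mul_le_mul_left h3 (by positivity)
  have h5 : 1 ≤ 2 ^ r := Nat.one_le_two_pow
  have h6 : 1 ≤ m := by
    by_contra h
    have : m = 0 := by omega
    subst this
    omega
  nlinarith

lemma NeedsGens.map {H H' : Type*} [Group H] [Group H'] (e : H ≃* H') {m : ℕ}
    (h : NeedsGens H m) : NeedsGens H' m := by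
  classical
  intro S hS
  have h1 := h (S.image e.symm) (by
    rw [Finset.coe_image]
    have h2 := MonoidHom.map_closure (e.symm : H' →* H) (S : Set H')
    rw [hS, ← MonoidHom.range_eq_map, MonoidHom.range_eq_top.2 e.symm.surjective] at h2
    exact h2.symm)
  exact h1.trans Finset.card_image_le

/-- The property passes from a finite-index subgroup to the whole group. -/
lemma Good.of_subgroup {G : Type*} [Group G] {G' : Subgroup G} (hG' : G'.FiniteIndex)
    (h : Good G') : Good G := by
  obtain ⟨C, hC⟩ := h
  refine ⟨C + G'.index, fun r₀ => ?_⟩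
  obtain ⟨r, hr, m, H, hH0, hH, hm, hgen⟩ := hC (r₀ + 1)
  have hidx : (H.map G'.subtype).index = H.index * G'.index := Subgroup.index_map_subtype H
  have hm0 : 1 ≤ m := by
    by_contra h
    have h0 : m = 0 := by omega
    subst h0
    have := Nat.one_le_two_pow (n := r)
    omega
  refine ⟨r, by omega, m, H.map G'.subtype, ?_, ?_, hm,
    hgen.map (H.equivMapOfInjective _ G'.subtype_injective)⟩
  · rw [hidx]
    exact mul_ne_zero hH0 hG'.index_ne_zero
  · rw [hidx]
    calc H.index * G'.index ≤ 2 ^ (C * r * m) * 2 ^ (G'.index * r * m) := by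
          refine Nat.mul_le_mul hH ?_
          refine (Nat.lt_two_pow_self).le.trans (Nat.pow_le_pow_right (by norm_num) ?_)
          rw [mul_assoc]
          exact Nat.le_mul_of_pos_right _ (Nat.mul_pos (by omega) hm0)
      _ = 2 ^ ((C + G'.index) * r * m) := by
        rw [← pow_add]
        congr 1
        ring

end LinRank

/-! ### From linear groups to the rank bound -/

namespace LinRank
open Module

/-- With `N = log₂ (index)`, the bounds `N ≤ C r m` and `2 ^ r ≤ m ^ 2` give `m ≥ c N / log N`. -/
lemma Good.gap {N m : ℝ} {C r : ℕ} (hN : 2 ≤ N) (hNC : N ≤ C * r * m) (hrm : (2 : ℝ) ^ r ≤ m ^ 2)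
    (hm : 1 ≤ m) (hr : 1 ≤ r) :
    1 / (4 * (C : ℝ) + 1) * (N / Real.logb 2 N) ≤ m := by
  have hlog1 : 1 ≤ Real.logb 2 N := by
    rw [Real.le_logb_iff_rpow_le (by norm_num) (by linarith), Real.rpow_one]
    exact hN
  have hC0 : (0 : ℝ) ≤ C := Nat.cast_nonneg C
  have hr0 : (1 : ℝ) ≤ r := by exact_mod_cast hr
  rw [one_div, inv_mul_le_iff₀ (by positivity), div_le_iff₀ (by linarith)]
  by_cases h : (r : ℝ) / 4 ≤ Real.logb 2 N
  · have h1 : (C : ℝ) * r * m ≤ 4 * C * m * Real.logb 2 N := by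
      have h2 : 0 ≤ C * m := by positivity
      nlinarith
    have h2 : 0 ≤ m * Real.logb 2 N := by positivity
    nlinarith
  · push Not at h
    have h1 : Real.logb 2 (N ^ 4) < r := by
      rw [Real.logb_pow]
      push_cast
      linarith
    rw [Real.logb_lt_iff_lt_rpow (by norm_num) (by positivity), Real.rpow_natCast] at h1
    have h2 : N ≤ m := by
      by_contra hcon
      push Not at hcon
      have h3 : m ^ 4 < N ^ 4 := pow_lt_pow_left₀ hcon (by linarith) (by norm_num)
      have h4 : m ^ 2 ≤ m ^ 4 := pow_le_pow_right₀ hm (by norm_num)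
      linarith
    have h5 : 0 ≤ C * m := by positivity
    nlinarith

/-- The rank bound for a finitely generated group with `Good`. The indices tend to infinity because
a subgroup of index `j` has rank at most `j` times the rank of the group. -/
theorem Good.conclusion {G : Type*} [Group G] [Group.FG G] (h : Good G) :
    ∃ c : ℝ, 0 < c ∧ ∃ Γi : ℕ → Subgroup G, (∀ i, (Γi i).FiniteIndex) ∧
      Filter.Tendsto (fun i => (Γi i).index) Filter.atTop Filter.atTop ∧
      ∀ i, ∀ S : Finset (Γi i), Subgroup.closure (S : Set (Γi i)) = ⊤ →
        c * (Real.logb 2 ((Γi i).index) / Real.logb 2 (Real.logb 2 ((Γi i).index)))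
          ≤ (S.card : ℝ) := by
  obtain ⟨C, hC⟩ := h
  -- a rank exceeding `(4 + i) * rank G` forces index larger than `4 + i`
  let a : ℕ → ℕ := fun i => (4 + i) * Group.rank G
  choose r hr m H hH0 hH hm hgen using fun i => hC (2 * a i + 1)
  have hfi : ∀ i, (H i).FiniteIndex := fun i => ⟨hH0 i⟩
  have ham : ∀ i, a i < m i := by
    intro i
    by_contra hcon
    push Not at hcon
    have h1 : a i < 2 ^ a i := Nat.lt_two_pow_self
    have h2 : (2 ^ a i) ^ 2 ≤ 2 ^ r i := by
      rw [← pow_mul]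
      exact Nat.pow_le_pow_right (by norm_num) (by have := hr i; omega)
    have h3 := hm i
    have h4 : m i ^ 2 ≤ a i ^ 2 := Nat.pow_le_pow_left hcon 2
    have h5 : a i ^ 2 < (2 ^ a i) ^ 2 := Nat.pow_lt_pow_left h1 (by norm_num)
    omega
  have hidx : ∀ i, 4 + i < (H i).index := by
    intro i
    have h1 : Group.rank (H i) ≤ (H i).index * Group.rank G := Subgroup.rank_le_index_mul_rank (H i)
    obtain ⟨S, hS, hS'⟩ := Group.rank_spec (H i)
    have h2 := hgen i S hS'
    have h3 := ham i
    rw [hS] at h2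
    have h4 : (4 + i) * Group.rank G < (H i).index * Group.rank G := by
      change a i < _
      omega
    exact lt_of_mul_lt_mul_right h4 (Nat.zero_le _)
  refine ⟨1 / (4 * (C : ℝ) + 1), by positivity, H, hfi, ?_, fun i S hS => ?_⟩
  · refine Filter.tendsto_atTop_mono (fun i => ?_) Filter.tendsto_id
    have := hidx i
    simp only [id]
    omega
  · have h1 : (m i : ℝ) ≤ S.card := by exact_mod_cast hgen i S hS
    refine le_trans ?_ h1
    have h2 := hidx i
    have hpos : (0 : ℝ) < (H i).index := by exact_mod_cast Nat.pos_of_ne_zero (hH0 i)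
    refine Good.gap (C := C) (r := r i) ?_ ?_ ?_ ?_ (by have := hr i; omega)
    · rw [Real.le_logb_iff_rpow_le (by norm_num) hpos]
      have h3 : (4 : ℝ) ≤ (H i).index := by exact_mod_cast (show 4 ≤ (H i).index by omega)
      norm_num
      linarith
    · rw [Real.logb_le_iff_le_rpow (by norm_num) hpos]
      have h3 : (((H i).index : ℕ) : ℝ) ≤ ((2 ^ (C * r i * m i) : ℕ) : ℝ) := by
        exact_mod_cast hH i
      refine h3.trans (le_of_eq ?_)
      rw [← Nat.cast_mul, ← Nat.cast_mul, Real.rpow_natCast]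
      push_cast
      rfl
    · exact_mod_cast hm i
    · have := ham i
      exact_mod_cast (show 1 ≤ m i by omega)

/-- Linear groups in characteristic zero that are not virtually solvable have the property `Good`. -/
theorem good_of_linear (F : Type*) [Field F] [CharZero F] (n : ℕ)
    (Γ : Subgroup (GL (Fin n) F)) [Group.FG Γ]
    (hnvs : ¬ ∃ H : Subgroup Γ, H.FiniteIndex ∧ IsSolvable H) : Good Γ := by
  let F' := AlgebraicClosure F
  have : CharZero F' := charZero_of_injective_algebraMap (algebraMap F F').injective
  let φ₀ : Γ →* Matrix (Fin n) (Fin n) F := (Units.coeHom _).comp Γ.subtype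
  let φ := mapRep (algebraMap F F') φ₀
  have hinj : ∀ x, repOf φ x = 1 → x = 1 := by
    intro x hx
    have h4 : φ x = 1 := by
      apply (Matrix.toLinAlgEquiv' (R := F') (n := Fin n)).injective
      rw [map_one]
      exact hx
    have h5 : (φ₀ x).map (algebraMap F F') = (1 : Matrix (Fin n) (Fin n) F).map
        (algebraMap F F') := by
      rw [Matrix.map_one _ (map_zero _) (map_one _)]
      exact h4
    have h6 : φ₀ x = 1 := Matrix.map_injective (algebraMap F F').injective h5
    exact Subtype.ext (Units.ext h6)
  rcases irr_or_solvable F' n Γ (Fin n → F') (repOf φ) (Module.finrank_fin_fun F') with h | h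
  · obtain ⟨H, hH, d, hd, σ, hσ⟩ := h
    have : Group.FG H := inferInstance
    obtain ⟨H', hH', d', K, _, _, ⟨D⟩⟩ := exists_datum hd σ hσ
    have : Group.FG H' := inferInstance
    exact (D.good.of_subgroup hH').of_subgroup hH
  · exfalso
    obtain ⟨H, hH, k, hk⟩ := h
    refine hnvs ⟨H, hH, ⟨k, ?_⟩⟩
    rw [eq_bot_iff]
    intro x hx
    exact Subtype.ext (hinj x (hk x hx))

end LinRank

/-- Let `F` be a field of characteristic 0, `n` a positive integer, and
`Γ` a finitely generated infinite subgroup of `GL n F` which is not virtually solvable.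
Then there exist `c > 0` and a sequence of finite-index subgroups `Γᵢ ≤ Γ` with indices
`nᵢ = [Γ : Γᵢ] → ∞` such that `d(Γᵢ) ≥ c · log nᵢ / log log nᵢ` (logs base 2), i.e. every
finite generating set of `Γᵢ` has cardinality at least `c · log nᵢ / log log nᵢ`. -/
theorem stmt0 (F : Type*) [Field F] [CharZero F] (n : ℕ) (hn : 0 < n)
    (Γ : Subgroup (GL (Fin n) F)) (hfg : Group.FG Γ) (hinf : Infinite Γ)
    (hnvs : ¬ ∃ H : Subgroup Γ, H.FiniteIndex ∧ IsSolvable H) :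
    ∃ c : ℝ, 0 < c ∧ ∃ Γi : ℕ → Subgroup Γ,
      (∀ i, (Γi i).FiniteIndex) ∧
      Filter.Tendsto (fun i => (Γi i).index) Filter.atTop Filter.atTop ∧
      ∀ i, ∀ S : Finset (Γi i), Subgroup.closure (S : Set (Γi i)) = ⊤ →
        c * (Real.logb 2 ((Γi i).index) / Real.logb 2 (Real.logb 2 ((Γi i).index)))
          ≤ (S.card : ℝ) := by
  exact (LinRank.good_of_linear F n Γ hnvs).conclusion
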